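/- arXiv:2505.15937 — 8 statements merged into one kernel-verified Lean document; each statement's English description precedes it below -/
import Mathlib

section
/- Let (λ_n)_{n≥0} be a sequence of positive real numbers that is nondecreasing with λ_n → +∞. Then there exists a continuous function f : 𝕋 → ℂ such that Σ_{n∈ℤ} |f̂(n)|² λ_{|n|} = +∞. -/
open MeasureTheory Filter Topology

noncomputable section

/-!
An absolutely convergent Fourier series is continuous, so every absolutely summable `a : ℤ → ℂ` is
the sequence of Fourier coefficients of a continuous function. It remains to defeat an unbounded
weight `w` with a sparse `a`: choose distinct frequencies `φ k` with `2 ^ (k * p) ≤ w (φ k)` and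
put mass `2 ^ (-k)` at `φ k`. The masses are summable, but no term `|a (φ k)| ^ p * w (φ k)` is
below `1`.
-/

theorem exists_strictMono_comp_forall_le_of_not_bddAbove {ι α : Type*} [LinearOrder α] {w : ι → α}
    (hw : ¬ BddAbove (Set.range w)) (b : ℕ → α) :
    ∃ φ : ℕ → ι, StrictMono (w ∘ φ) ∧ ∀ k, b k ≤ w (φ k) := by
  have exceeds : ∀ c, ∃ i, c < w i := by simpa [not_bddAbove_iff] using hw
  choose above lt_above using exceeds
  let φ : ℕ → ι := Nat.rec (above (b 0)) fun k i => above (max (b (k + 1)) (w i))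
  have lt_succ (k : ℕ) : max (b (k + 1)) (w (φ k)) < w (φ (k + 1)) := lt_above _
  refine ⟨φ, strictMono_nat_of_lt_succ fun k => (le_max_right _ _).trans_lt (lt_succ k), ?_⟩
  rintro (_ | k)
  · exact (lt_above (b 0)).le
  · exact (le_max_left _ _).trans (lt_succ k).le

theorem exists_summable_not_summable_abs_pow_mul {ι : Type*} {w : ι → ℝ}
    (hw : ¬ BddAbove (Set.range w)) (p : ℕ) :
    ∃ a : ι → ℝ, Summable a ∧ ¬ Summable fun i => |a i| ^ p * w i := by
  obtain ⟨φ, wφ_strictMono, le_wφ⟩ :=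
    exists_strictMono_comp_forall_le_of_not_bddAbove hw fun k => ((2 : ℝ) ^ k) ^ p
  have φ_injective : Function.Injective φ := wφ_strictMono.injective.of_comp
  let a : ι → ℝ := Function.extend φ (fun k => ((2 : ℝ) ^ k)⁻¹) 0
  have a_φ (k : ℕ) : a (φ k) = ((2 : ℝ) ^ k)⁻¹ := φ_injective.extend_apply _ _ k
  have one_le (k : ℕ) : 1 ≤ |a (φ k)| ^ p * w (φ k) := by
    rw [a_φ, abs_of_nonneg (by positivity), inv_pow, inv_mul_eq_div, one_le_div (by positivity)]
    exact le_wφ k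
  refine ⟨a, ?_, fun hsum => ?_⟩
  · refine (summable_extend_zero φ_injective).mpr ?_
    simpa only [one_div, inv_pow] using summable_geometric_two
  · have tendsto_zero := (hsum.comp_injective φ_injective).tendsto_atTop_zero
    exact (ge_of_tendsto' tendsto_zero one_le).not_gt one_pos

section FourierSeries

variable {T : ℝ} {E : Type*} [NormedAddCommGroup E] [NormedSpace ℂ E]
  [CompleteSpace E]

theorem norm_fourier_apply (n : ℤ) (t : AddCircle T) : ‖fourier n t‖ = 1 :=
  Circle.norm_coe _

theorem continuous_tsum_fourier_smul {a : ℤ → E} (ha : Summable fun n => ‖a n‖) :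
    Continuous fun t : AddCircle T => ∑' n, fourier n t • a n :=
  continuous_tsum (fun n => by fun_prop) ha fun n t => by
    rw [norm_smul, norm_fourier_apply, one_mul]

variable [Fact (0 < T)]

theorem fourierCoeff_fourier_smul (n m : ℤ) (c : E) :
    fourierCoeff (fun t : AddCircle T => fourier n t • c) m = (Pi.single n c : ℤ → E) m := by
  have fourier_coeff := congrFun (fourierCoeff_fourier (T := T) n) m
  simp only [fourierCoeff, ← smul_assoc, integral_smul_const] at fourier_coeff ⊢
  rw [fourier_coeff, Pi.single_apply, Pi.single_apply, ite_smul, one_smul, zero_smul]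

theorem fourierCoeff_tsum_fourier_smul {a : ℤ → E} (ha : Summable fun n => ‖a n‖) :
    fourierCoeff (fun t : AddCircle T => ∑' n, fourier n t • a n) = a := by
  ext m
  let F (n : ℤ) (t : AddCircle T) : E := fourier (-m) t • fourier n t • a n
  have norm_F (n : ℤ) (t : AddCircle T) : ‖F n t‖ = ‖a n‖ := by
    simp only [F, norm_smul, norm_fourier_apply, one_mul]
  have F_integrable (n : ℤ) : Integrable (F n) AddCircle.haarAddCircle :=
    Continuous.integrable_of_hasCompactSupport (by fun_prop) (.of_compactSpace _)
  calc fourierCoeff (fun t : AddCircle T => ∑' n, fourier n t • a n) m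
      = ∫ t, ∑' n, F n t ∂AddCircle.haarAddCircle := by
        simp only [fourierCoeff, F, tsum_const_smul'']
    _ = ∑' n, fourierCoeff (fun t : AddCircle T => fourier n t • a n) m :=
        (integral_tsum_of_summable_integral_norm F_integrable (by simpa [norm_F] using ha)).symm
    _ = a m := by
        simp only [fourierCoeff_fourier_smul, Pi.single_apply, eq_comm (a := m), tsum_ite_eq]

end FourierSeries

theorem statement0_general {T : ℝ} [Fact (0 < T)] {w : ℤ → ℝ} (hw : ¬ BddAbove (Set.range w))
    (p : ℕ) :
    ∃ f : AddCircle T → ℂ, Continuous f ∧ Summable (fourierCoeff f) ∧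
      ¬ Summable fun n => ‖fourierCoeff f n‖ ^ p * w n := by
  obtain ⟨a, a_summable, not_summable⟩ := exists_summable_not_summable_abs_pow_mul hw p
  have norm_summable : Summable fun n => ‖(a n : ℂ)‖ := by simpa using a_summable.abs
  refine ⟨fun t => ∑' n, fourier n t • (a n : ℂ), continuous_tsum_fourier_smul norm_summable, ?_⟩
  rw [fourierCoeff_tsum_fourier_smul norm_summable]
  exact ⟨norm_summable.of_norm, by simpa using not_summable⟩

/-- If `(λ_n)` is a nondecreasing sequence of positive reals tending to `+∞`,
then there exists a continuous function `f` on the circle `𝕋 = ℝ/ℤ` whose Fourier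
coefficients satisfy `Σ_{n ∈ ℤ} |f̂(n)|² λ_{|n|} = +∞`. -/
theorem statement0 (lam : ℕ → ℝ) (hpos : ∀ n, 0 < lam n) (hmono : Monotone lam)
    (htop : Tendsto lam atTop atTop) :
    ∃ f : UnitAddCircle → ℂ, Continuous f ∧
      ¬ Summable (fun n : ℤ => ‖fourierCoeff f n‖ ^ 2 * lam n.natAbs) := by
  have unbounded : ¬ BddAbove (Set.range (lam ∘ Int.natAbs)) := by
    rw [Int.natAbs_surjective.range_comp]
    exact not_bddAbove_of_tendsto_atTop htop
  obtain ⟨f, f_continuous, -, not_summable⟩ := statement0_general (T := 1) unbounded 2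
  exact ⟨f, f_continuous, not_summable⟩
end
end

section
/- Let (w_n)_{n≥0} be a sequence of positive real numbers that is nonincreasing with w_n → 0. Then there exists a sequence of positive real numbers (a_n)_{n∈ℤ} with Σ_{n∈ℤ} a_n² w_{|n|} < ∞ such that there is no finite complex Borel measure μ on 𝕋 with μ̂(n) = a_n for all n ∈ ℤ. -/
/-!
Fourier coefficients of a finite measure are bounded, so it suffices to make `a` unbounded. Since
`w` is positive and comes arbitrarily close to `0`, there are distinct points `φ k` with
`w (φ k) < 4⁻ᵏ`. Adding mass `2⁻ᵏ` at each `φ k` to any positive summable family gives a positive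
summable `c` with `c / w` unbounded, and `a = √(c / w)` satisfies `a ^ 2 * w = c`.
-/

open MeasureTheory Filter Topology

noncomputable section

/-- The `n`-th Fourier coefficient `μ̂(n) = ∫_𝕋 ζ^{-n} dμ(ζ)` of a finite complex Borel
measure `μ` on the circle, computed through the Jordan decompositions of its real and
imaginary parts. -/
def cmFourierCoeff (μ : ComplexMeasure UnitAddCircle) (n : ℤ) : ℂ :=
  (∫ x, fourier (-n) x ∂(ComplexMeasure.re μ).toJordanDecomposition.posPart) -
  (∫ x, fourier (-n) x ∂(ComplexMeasure.re μ).toJordanDecomposition.negPart) +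
  Complex.I * ((∫ x, fourier (-n) x ∂(ComplexMeasure.im μ).toJordanDecomposition.posPart) -
    (∫ x, fourier (-n) x ∂(ComplexMeasure.im μ).toJordanDecomposition.negPart))

lemma norm_integral_fourier_le {T : ℝ} (ν : Measure (AddCircle T)) [IsFiniteMeasure ν] (n : ℤ) :
    ‖∫ x, fourier n x ∂ν‖ ≤ ν.real Set.univ := by
  have hnorm : ∀ x : AddCircle T, ‖fourier n x‖ ≤ 1 := fun x => (Circle.norm_coe _).le
  simpa only [one_mul] using norm_integral_le_of_norm_le_const (μ := ν) (.of_forall hnorm)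

lemma norm_integral_fourier_posPart_sub_negPart_le {T : ℝ}
    (j : JordanDecomposition (AddCircle T)) (n : ℤ) :
    ‖(∫ x, fourier n x ∂j.posPart) - ∫ x, fourier n x ∂j.negPart‖ ≤
      j.posPart.real Set.univ + j.negPart.real Set.univ :=
  norm_sub_le_of_le (norm_integral_fourier_le _ n) (norm_integral_fourier_le _ n)

lemma bddAbove_range_norm_cmFourierCoeff (μ : ComplexMeasure UnitAddCircle) :
    BddAbove (Set.range fun n => ‖cmFourierCoeff μ n‖) := by
  let mass (s : SignedMeasure UnitAddCircle) : ℝ :=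
    s.toJordanDecomposition.posPart.real Set.univ + s.toJordanDecomposition.negPart.real Set.univ
  refine ⟨mass (ComplexMeasure.re μ) + mass (ComplexMeasure.im μ), Set.forall_mem_range.2 fun n =>
    norm_add_le_of_le (norm_integral_fourier_posPart_sub_negPart_le _ (-n)) ?_⟩
  rw [norm_mul, Complex.norm_I, one_mul]
  exact norm_integral_fourier_posPart_sub_negPart_le _ (-n)

section UnboundedSequence

variable {ι : Type*}

lemma exists_injective_forall_lt_of_isGLB_range {α : Type*} [LinearOrder α] [TopologicalSpace α]
    [OrderTopology α] [FirstCountableTopology α] {w : ι → α} {x : α}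
    (hglb : IsGLB (Set.range w) x) (hx : x ∉ Set.range w) {ε : ℕ → α} (hε : ∀ k, x < ε k) :
    ∃ φ : ℕ → ι, φ.Injective ∧ ∀ k, w (φ k) < ε k := by
  have hne : (Set.range w).Nonempty :=
    let ⟨y, hy, _⟩ := (isGLB_lt_iff hglb).1 (hε 0)
    ⟨y, hy⟩
  obtain ⟨u, hu_anti, -, hu_lim, hu_mem⟩ := hglb.exists_seq_strictAnti_tendsto_of_notMem hx hne
  choose i hi using hu_mem
  have hi_inj : i.Injective := .of_comp (f := w) <| by
    simpa only [Function.comp_def, hi] using hu_anti.injective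
  obtain ⟨ψ, hψ_mono, hψ⟩ :=
    extraction_forall_of_eventually fun k => hu_lim.eventually_lt_const (hε k)
  exact ⟨i ∘ ψ, hi_inj.comp hψ_mono.injective, fun k => (hi (ψ k)).trans_lt (hψ k)⟩

variable [Countable ι] {w : ι → ℝ}

lemma exists_pos_summable_not_bddAbove_div (hpos : ∀ i, 0 < w i)
    (hglb : IsGLB (Set.range w) 0) :
    ∃ c : ι → ℝ, (∀ i, 0 < c i) ∧ Summable c ∧ ¬ BddAbove (Set.range fun i => c i / w i) := by
  obtain ⟨φ, hφ_inj, hφ⟩ := exists_injective_forall_lt_of_isGLB_range hglb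
    (fun ⟨i, hi⟩ => (hpos i).ne' hi) (ε := fun k => (1 / 4) ^ k) (fun k => by positivity)
  have := Encodable.ofCountable ι
  obtain ⟨b, hb_pos, _, hb_sum, -⟩ := posSumOfEncodable one_pos ι
  set d : ι → ℝ := Function.extend φ (fun k => (1 / 2) ^ k) 0
  have hd_apply : ∀ k, d (φ k) = (1 / 2) ^ k := hφ_inj.extend_apply _ _
  have hd_sum : Summable d := (summable_extend_zero hφ_inj).2 summable_geometric_two
  have hd_nonneg : 0 ≤ d := Function.extend_nonneg (fun k => by positivity) le_rfl
  refine ⟨b + d, fun i => add_pos_of_pos_of_nonneg (hb_pos i) (hd_nonneg i),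
    hb_sum.summable.add hd_sum, ?_⟩
  rintro ⟨C, hC⟩
  obtain ⟨k, hk⟩ := pow_unbounded_of_one_lt C one_lt_two
  refine (hk.trans_le ?_).not_ge (hC ⟨φ k, rfl⟩)
  rw [le_div_iff₀ (hpos _)]
  calc (2 : ℝ) ^ k * w (φ k) ≤ 2 ^ k * (1 / 4) ^ k := by gcongr; exact (hφ k).le
    _ = d (φ k) := by rw [hd_apply, ← mul_pow]; norm_num
    _ ≤ (b + d) (φ k) := le_add_of_nonneg_left (hb_pos _).le

lemma exists_pos_summable_sq_mul_not_bddAbove (hpos : ∀ i, 0 < w i)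
    (hglb : IsGLB (Set.range w) 0) :
    ∃ a : ι → ℝ, (∀ i, 0 < a i) ∧ Summable (fun i => a i ^ 2 * w i) ∧
      ¬ BddAbove (Set.range a) := by
  obtain ⟨c, hc_pos, hc_sum, hc_unbdd⟩ := exists_pos_summable_not_bddAbove_div hpos hglb
  have hquot_pos : ∀ i, 0 < c i / w i := fun i => div_pos (hc_pos i) (hpos i)
  refine ⟨fun i => √(c i / w i), fun i => Real.sqrt_pos.2 (hquot_pos i), ?_, ?_⟩
  · simpa only [Real.sq_sqrt (hquot_pos _).le, div_mul_cancel₀ _ (hpos _).ne'] using hc_sum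
  · rintro ⟨C, hC⟩
    refine hc_unbdd ⟨C ^ 2, Set.forall_mem_range.2 fun i => ?_⟩
    exact (Real.sqrt_le_left ((Real.sqrt_nonneg _).trans (hC ⟨i, rfl⟩))).1 (hC ⟨i, rfl⟩)

end UnboundedSequence

theorem statement1_general (w : ℤ → ℝ) (hpos : ∀ n, 0 < w n) (hglb : IsGLB (Set.range w) 0) :
    ∃ a : ℤ → ℝ, (∀ n, 0 < a n) ∧ Summable (fun n => a n ^ 2 * w n) ∧
      ¬ ∃ μ : ComplexMeasure UnitAddCircle, ∀ n : ℤ, cmFourierCoeff μ n = (a n : ℂ) := by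
  obtain ⟨a, ha_pos, ha_sum, ha_unbdd⟩ := exists_pos_summable_sq_mul_not_bddAbove hpos hglb
  refine ⟨a, ha_pos, ha_sum, fun ⟨μ, hμ⟩ => ha_unbdd ?_⟩
  simpa only [hμ, Complex.norm_real, Real.norm_of_nonneg (ha_pos _).le] using
    bddAbove_range_norm_cmFourierCoeff μ

/-- If `(w_n)` is a nonincreasing sequence of positive reals tending to `0`,
then there is a sequence of positive reals `(a_n)_{n ∈ ℤ}` with `Σ a_n² w_{|n|} < ∞` which is
not the sequence of Fourier coefficients of any finite complex Borel measure on `𝕋`. -/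
theorem statement1 (w : ℕ → ℝ) (hpos : ∀ n, 0 < w n) (hanti : Antitone w)
    (hzero : Tendsto w atTop (𝓝 0)) :
    ∃ a : ℤ → ℝ, (∀ n, 0 < a n) ∧ Summable (fun n : ℤ => (a n) ^ 2 * w n.natAbs) ∧
      ¬ ∃ μ : ComplexMeasure UnitAddCircle, ∀ n : ℤ, cmFourierCoeff μ n = (a n : ℂ) := by
  have hglb : IsGLB (Set.range fun n : ℤ => w n.natAbs) 0 :=
    ⟨Set.forall_mem_range.2 fun n => (hpos _).le,
      fun _ hb => ge_of_tendsto' hzero fun n => hb ⟨n, rfl⟩⟩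
  exact statement1_general _ (fun n => hpos _) hglb
end
end

section
/- Let (λ_n)_{n≥1} be positive real numbers satisfying (i) Σ_{n≥1} 1/λ_n = +∞ and (ii) the doubling condition: there exists C > 1 such that C⁻¹ λ_n ≤ λ_k ≤ C λ_n whenever n ≥ 1 and n ≤ k ≤ 2n. Then there exists f ∈ L^∞(𝕋, m) with f ≥ 0 m-a.e. and ∫_𝕋 f dm > 0, such that the support of the measure f·m has empty interior in 𝕋, and Σ_{n∈ℤ} |f̂(n)|² λ_{|n|} < ∞. -/
open MeasureTheory Filter Topology

noncomputable section

/-- Normalized Haar (arc-length) probability measure on the circle `𝕋 = ℝ/ℤ`. -/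
def hm : Measure UnitAddCircle := AddCircle.haarAddCircle

/-- The support of the measure `f·m`: the complement of the largest open set on which `f`
vanishes `m`-a.e. -/
def measSupport (f : UnitAddCircle → ℝ) : Set UnitAddCircle :=
  (⋃₀ {U : Set UnitAddCircle | IsOpen U ∧ ∀ᵐ x ∂hm, x ∈ U → f x = 0})ᶜ

/-!
Take a bump `η` on the line such that `ψ = η⁽ᵐ⁾` equals `1` near `0`: having `m` vanishing moments,
`ψ` has a Fourier transform which is small near `0` as well as near infinity, so the dyadic
rescalings `ψ (2ʲ (x - x₀))` are nearly orthogonal in the weighted space `ℓ²(λ)`, where the `j`-th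
one has energy about `λ_{2ʲ} / 2ʲ`. By Cauchy condensation `∑ 2ʲ / λ_{2ʲ} = ∞`, so some convex
combination `φ` of these rescalings has arbitrarily small weighted energy, while still `φ = 1` near
`x₀`; since `ψ` is negative only on an annulus, `φ` is also almost nonnegative. The same holds for
`φ g` with `g` smooth, as multiplication by `g` spreads frequencies only slightly.

Now let `f = ∏ (1 - φ_k)`, where `φ_k` is such a function at the `k`-th point of a dense sequence,
carried by a ball of radius `ε_k` and chosen after `φ_0, …, φ_{k-1}` so that multiplying the partial
product by `1 - φ_k` changes its weighted energy norm by at most `ε_k`. If `∑ ε_k` is small, `f` is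
`1` on a set of positive measure, and it has finite weighted energy by Fatou's lemma.
-/

open scoped ContDiff ENNReal FourierTransform

section MinRatio

/-- `min (s / t) (t / s)`, the proximity of two positive scales: it equals `1` when `s = t` and
decays geometrically in the number of octaves between them. -/
def minRatio (s t : ℝ) : ℝ := min (s / t) (t / s)

lemma minRatio_comm (s t : ℝ) : minRatio s t = minRatio t s := min_comm _ _

variable {s t : ℝ}

lemma minRatio_nonneg (hs : 0 ≤ s) (ht : 0 ≤ t) : 0 ≤ minRatio s t :=
  le_min (by positivity) (by positivity)

lemma minRatio_le_one (hs : 0 < s) (ht : 0 < t) : minRatio s t ≤ 1 := by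
  rcases le_total s t with h | h
  · exact (min_le_left _ _).trans ((div_le_one ht).2 h)
  · exact (min_le_right _ _).trans ((div_le_one hs).2 h)

lemma minRatio_le_two_mul_div_add (hs : 0 < s) (ht : 0 < t) :
    minRatio s t ≤ 2 * s / (s + t) := by
  rcases le_total s t with h | h
  · refine (min_le_left _ _).trans ?_
    rw [div_le_div_iff₀ ht (by positivity)]
    nlinarith
  · refine (min_le_right _ _).trans (((div_le_one hs).2 h).trans ?_)
    rw [one_le_div (by positivity)]
    linarith

lemma sum_minRatio_two_pow_le (ht : 0 < t) (J : Finset ℕ) :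
    ∑ j ∈ J, minRatio (2 ^ j) t ≤ 6 := by
  let G : ℕ → ℝ := fun j => 6 * t / (2 ^ j + t)
  have le_telescope (j : ℕ) : minRatio (2 ^ j) t ≤ G j - G (j + 1) := by
    have ha : (0 : ℝ) < 2 ^ j := by positivity
    simp only [G, pow_succ, minRatio]
    generalize (2 : ℝ) ^ j = a at ha
    have hG : 6 * t / (a + t) - 6 * t / (a * 2 + t) = 6 * t * a / ((a + t) * (a * 2 + t)) := by
      field_simp
      ring
    rw [hG]
    rcases le_total a t with h | h
    · refine (min_le_left _ _).trans ?_
      rw [div_le_div_iff₀ ht (by positivity)]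
      nlinarith [mul_nonneg ha.le (mul_nonneg (sub_nonneg.2 h) ht.le), mul_pos ha ht,
        mul_nonneg ha.le (mul_nonneg (sub_nonneg.2 h) ha.le)]
    · refine (min_le_right _ _).trans ?_
      rw [div_le_div_iff₀ ha (by positivity)]
      nlinarith [mul_nonneg ht.le (mul_nonneg (sub_nonneg.2 h) ht.le), mul_pos ha ht,
        mul_nonneg ht.le (mul_nonneg (sub_nonneg.2 h) ha.le)]
  obtain ⟨L, hL⟩ := J.exists_nat_subset_range
  calc ∑ j ∈ J, minRatio (2 ^ j) t
      ≤ ∑ j ∈ Finset.range L, minRatio (2 ^ j) t :=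
        Finset.sum_le_sum_of_subset_of_nonneg hL fun j _ _ => minRatio_nonneg (by positivity) ht.le
    _ ≤ ∑ j ∈ Finset.range L, (G j - G (j + 1)) := Finset.sum_le_sum fun j _ => le_telescope j
    _ = G 0 - G L := Finset.sum_range_sub' G L
    _ ≤ G 0 := sub_le_self _ (by positivity)
    _ ≤ 6 := by
      rw [div_le_iff₀ (by positivity)]
      linarith [show (0 : ℝ) < 2 ^ 0 by positivity]

lemma sum_comp_natAbs_le {f : ℕ → ℝ} {B : ℝ} (hf : ∀ k, 0 ≤ f k)
    (hB : ∀ M, ∑ k ∈ Finset.range M, f k ≤ B) (S : Finset ℤ) :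
    ∑ n ∈ S, f n.natAbs ≤ 2 * B := by
  have card_fiber (k : ℕ) : (S.filter (·.natAbs = k)).card ≤ 2 := by
    refine (Finset.card_le_card (t := {(k : ℤ), -(k : ℤ)}) fun n hn => ?_).trans Finset.card_le_two
    simpa using Int.natAbs_eq_iff.1 (Finset.mem_filter.1 hn).2
  obtain ⟨M, hM⟩ := (S.image Int.natAbs).exists_nat_subset_range
  calc ∑ n ∈ S, f n.natAbs
      = ∑ k ∈ S.image Int.natAbs, (S.filter (·.natAbs = k)).card • f k := Finset.sum_comp _ _
    _ ≤ ∑ k ∈ S.image Int.natAbs, 2 * f k := Finset.sum_le_sum fun k _ => by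
        rw [nsmul_eq_mul]
        exact mul_le_mul_of_nonneg_right (mod_cast card_fiber k) (hf k)
    _ ≤ ∑ k ∈ Finset.range M, 2 * f k :=
        Finset.sum_le_sum_of_subset_of_nonneg hM fun k _ _ => mul_nonneg zero_le_two (hf k)
    _ = 2 * ∑ k ∈ Finset.range M, f k := (Finset.mul_sum _ _ _).symm
    _ ≤ 2 * B := by linarith [hB M]

lemma sum_minRatio_sq_le (hs : 0 < s) (S : Finset ℤ) :
    ∑ n ∈ S, minRatio s (1 + |(n : ℝ)|) ^ 2 ≤ 8 * s := by
  let G : ℕ → ℝ := fun k => 4 * s ^ 2 / (s + k)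
  have G_sub (k : ℕ) : G k - G (k + 1) = 4 * s ^ 2 / ((s + k) * (s + k + 1)) := by
    simp only [G]
    push_cast
    field_simp
    ring
  have le_telescope (k : ℕ) : minRatio s (1 + k) ^ 2 ≤ G k - G (k + 1) := by
    rw [G_sub]
    calc minRatio s (1 + k) ^ 2
        ≤ (2 * s / (s + (1 + k))) ^ 2 :=
          pow_le_pow_left₀ (minRatio_nonneg hs.le (by positivity))
            (minRatio_le_two_mul_div_add hs (by positivity)) 2
      _ = 4 * s ^ 2 / (s + (1 + k)) ^ 2 := by rw [div_pow]; ring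
      _ ≤ 4 * s ^ 2 / ((s + k) * (s + k + 1)) := by
          gcongr
          nlinarith
  have sum_range_le (M : ℕ) : ∑ k ∈ Finset.range M, (G k - G (k + 1)) ≤ 4 * s := by
    rw [Finset.sum_range_sub']
    calc G 0 - G M ≤ G 0 := sub_le_self _ (by positivity)
      _ = 4 * s := by simp only [G, Nat.cast_zero, add_zero]; field_simp
  calc ∑ n ∈ S, minRatio s (1 + |(n : ℝ)|) ^ 2
      ≤ ∑ n ∈ S, (G n.natAbs - G (n.natAbs + 1)) := Finset.sum_le_sum fun n _ => by
        simpa using le_telescope n.natAbs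
    _ ≤ 2 * (4 * s) :=
        sum_comp_natAbs_le (fun k => by rw [G_sub]; positivity) sum_range_le S
    _ = 8 * s := by ring

end MinRatio

section Doubling

/-- The doubling condition in symmetric form: indices within a factor two of each other carry
values within a factor `C`. -/
def IsDoubling (lam : ℕ → ℝ) (C : ℝ) : Prop :=
  ∀ m n : ℕ, 1 ≤ m → 1 ≤ n → m ≤ 2 * n → n ≤ 2 * m → lam m ≤ C * lam n

variable {lam : ℕ → ℝ} {C : ℝ}

lemma isDoubling_of_le_of_le (hC : 0 < C) (h : ∀ n k : ℕ, 1 ≤ n → n ≤ k → k ≤ 2 * n →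
    C⁻¹ * lam n ≤ lam k ∧ lam k ≤ C * lam n) : IsDoubling lam C := by
  intro m n hm hn hmn hnm
  rcases le_total n m with hle | hle
  · exact (h n m hn hle hmn).2
  · exact (inv_mul_le_iff₀ hC).1 (h m n hm hle hnm).1

namespace IsDoubling

lemma le_pow_mul (h : IsDoubling lam C) (hC : 1 ≤ C) (hpos : ∀ n, 0 < lam n) (k : ℕ) {m n : ℕ}
    (hm : 1 ≤ m) (hn : 1 ≤ n) (hmn : m ≤ 2 ^ (k + 1) * n) (hnm : n ≤ 2 ^ (k + 1) * m) :
    lam m ≤ C ^ (k + 1) * lam n := by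
  induction k generalizing m n with
  | zero => simpa using h m n hm hn (by simpa using hmn) (by simpa using hnm)
  | succ k ih =>
    by_cases near : m ≤ 2 * n ∧ n ≤ 2 * m
    · calc lam m ≤ C * lam n := h m n hm hn near.1 near.2
        _ ≤ C ^ (k + 1 + 1) * lam n := by
          gcongr
          · exact (hpos n).le
          · exact le_self_pow₀ hC (by omega)
    have two_le : 2 ≤ 2 ^ (k + 1) := le_self_pow₀ one_le_two (by omega)
    rcases not_and_or.1 near with far | far
    · calc lam m ≤ C ^ (k + 1) * lam (2 * n) :=
            ih hm (by omega) (by rw [pow_succ] at hmn; linarith) (by nlinarith)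
        _ ≤ C ^ (k + 1) * (C * lam n) := by
            gcongr
            exact h _ _ (by omega) hn le_rfl (by omega)
        _ = C ^ (k + 1 + 1) * lam n := by ring
    · calc lam m ≤ C * lam (2 * m) := h _ _ hm (by omega) (by omega) le_rfl
        _ ≤ C * (C ^ (k + 1) * lam n) := by
            gcongr
            exact ih (by omega) hn (by nlinarith) (by rw [pow_succ] at hnm; linarith)
        _ = C ^ (k + 1 + 1) * lam n := by ring

lemma mul_minRatio_pow_le (h : IsDoubling lam C) (hC : 1 ≤ C) (hpos : ∀ n, 0 < lam n) {p : ℕ}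
    (hp : C ≤ 2 ^ p) {m n : ℕ} (hm : 1 ≤ m) (hn : 1 ≤ n) :
    lam m * minRatio m n ^ p ≤ 2 ^ p * lam n := by
  have hm0 : (0 : ℝ) < m := mod_cast hm
  have hn0 : (0 : ℝ) < n := mod_cast hn
  have ratio_pos : 0 < minRatio m n := lt_min (by positivity) (by positivity)
  obtain ⟨k, hk, hk'⟩ := exists_nat_pow_near
    ((one_le_inv₀ ratio_pos).2 (minRatio_le_one hm0 hn0)) (one_lt_two (α := ℝ))
  have inv_lt : (2 ^ (k + 1))⁻¹ < minRatio m n := inv_lt_of_inv_lt₀ ratio_pos hk'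
  have hnm : n ≤ 2 ^ (k + 1) * m := by
    have := inv_lt.le.trans (min_le_left _ _)
    rw [inv_le_comm₀ (by positivity) (by positivity), inv_div, div_le_iff₀ hm0] at this
    exact_mod_cast this
  have hmn : m ≤ 2 ^ (k + 1) * n := by
    have := inv_lt.le.trans (min_le_right _ _)
    rw [inv_le_comm₀ (by positivity) (by positivity), inv_div, div_le_iff₀ hn0] at this
    exact_mod_cast this
  have hn1 := hpos n
  calc lam m * minRatio m n ^ p
      ≤ (2 ^ p) ^ (k + 1) * lam n * minRatio m n ^ p := by
        gcongr
        refine (h.le_pow_mul hC hpos k hm hn hmn hnm).trans ?_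
        gcongr
    _ = 2 ^ p * lam n * (2 ^ k * minRatio m n) ^ p := by ring
    _ ≤ 2 ^ p * lam n * 1 := by
        gcongr
        refine pow_le_one₀ (by positivity) ?_
        calc 2 ^ k * minRatio m n ≤ (minRatio m n)⁻¹ * minRatio m n := by gcongr
          _ = 1 := inv_mul_cancel₀ ratio_pos.ne'
    _ = 2 ^ p * lam n := mul_one _

lemma exists_mul_minRatio_pow_le (h : IsDoubling lam C) (hC : 1 ≤ C) (hpos : ∀ n, 0 < lam n) :
    ∃ (p : ℕ) (D : ℝ), 0 ≤ D ∧ ∀ (n : ℤ) (j : ℕ),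
      lam n.natAbs * minRatio (2 ^ j) (1 + |(n : ℝ)|) ^ p ≤ D * lam (2 ^ j) := by
  obtain ⟨p, hp⟩ := pow_unbounded_of_one_lt C (one_lt_two (α := ℝ))
  have h0 := hpos 0
  have h1 := hpos 1
  have le_shift (k : ℕ) : lam k ≤ (C + lam 0 / lam 1) * lam (k + 1) := by
    have hk := hpos (k + 1)
    rcases Nat.eq_zero_or_pos k with rfl | hk1
    · rw [zero_add, add_mul, div_mul_cancel₀ _ h1.ne']
      exact le_add_of_nonneg_left (by positivity)
    · refine (h k (k + 1) hk1 (by omega) (by omega) (by omega)).trans ?_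
      gcongr
      exact le_add_of_nonneg_right (by positivity)
  refine ⟨p, (C + lam 0 / lam 1) * 2 ^ p, by positivity, fun n j => ?_⟩
  have growth := h.mul_minRatio_pow_le hC hpos hp.le (m := n.natAbs + 1) (n := 2 ^ j) (by omega)
    Nat.one_le_two_pow
  have ratio_eq : minRatio ((n.natAbs + 1 : ℕ) : ℝ) ((2 ^ j : ℕ) : ℝ)
      = minRatio (2 ^ j) (1 + |(n : ℝ)|) := by
    rw [minRatio_comm, add_comm]
    simp
  rw [ratio_eq] at growth
  have ratio_nonneg : 0 ≤ minRatio (2 ^ j) (1 + |(n : ℝ)|) :=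
    minRatio_nonneg (by positivity) (by positivity)
  calc lam n.natAbs * minRatio (2 ^ j) (1 + |(n : ℝ)|) ^ p
      ≤ (C + lam 0 / lam 1) * lam (n.natAbs + 1) * minRatio (2 ^ j) (1 + |(n : ℝ)|) ^ p := by
        gcongr
        exact le_shift _
    _ = (C + lam 0 / lam 1) * (lam (n.natAbs + 1) * minRatio (2 ^ j) (1 + |(n : ℝ)|) ^ p) := by
        ring
    _ ≤ (C + lam 0 / lam 1) * (2 ^ p * lam (2 ^ j)) := by gcongr
    _ = (C + lam 0 / lam 1) * 2 ^ p * lam (2 ^ j) := by ring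

lemma one_div_le_div (h : IsDoubling lam C) (hpos : ∀ n, 0 < lam n) {m n : ℕ} (hn : 1 ≤ n)
    (hnm : n ≤ m) (hmn : m ≤ 2 * n) : 1 / lam m ≤ C * (1 / lam n) := by
  rw [mul_one_div, div_le_div_iff₀ (hpos m) (hpos n), one_mul]
  exact h n m hn (by omega) (by omega) hmn

end IsDoubling

lemma sum_Ico_one_two_pow_le {a : ℕ → ℝ}
    (h : ∀ k n : ℕ, 2 ^ k ≤ n → n < 2 ^ (k + 1) → a n ≤ C * a (2 ^ k)) (K : ℕ) :
    ∑ n ∈ Finset.Ico 1 (2 ^ K), a n ≤ C * ∑ k ∈ Finset.range K, 2 ^ k * a (2 ^ k) := by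
  induction K with
  | zero => simp
  | succ K ih =>
    rw [← Finset.sum_Ico_consecutive _ (Nat.one_le_two_pow (n := K))
      (Nat.pow_le_pow_right two_pos K.le_succ), Finset.sum_range_succ, mul_add]
    gcongr
    calc ∑ n ∈ Finset.Ico (2 ^ K) (2 ^ (K + 1)), a n
        ≤ (Finset.Ico (2 ^ K) (2 ^ (K + 1))).card • (C * a (2 ^ K)) :=
          Finset.sum_le_card_nsmul _ _ _ fun n hn =>
            h K n (Finset.mem_Ico.1 hn).1 (Finset.mem_Ico.1 hn).2
      _ = C * (2 ^ K * a (2 ^ K)) := by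
          rw [Nat.card_Ico, pow_succ, show 2 ^ K * 2 - 2 ^ K = 2 ^ K by omega, nsmul_eq_mul]
          push_cast
          ring

/-- Cauchy condensation, with comparability on dyadic blocks in place of monotonicity. -/
lemma summable_nat_add_one_of_summable_condensed {a : ℕ → ℝ} (ha : ∀ n, 0 ≤ a n) (hC : 0 ≤ C)
    (h : ∀ k n : ℕ, 2 ^ k ≤ n → n < 2 ^ (k + 1) → a n ≤ C * a (2 ^ k))
    (hs : Summable fun k : ℕ => 2 ^ k * a (2 ^ k)) : Summable fun n => a (n + 1) := by
  refine summable_of_sum_range_le (c := C * ∑' k : ℕ, 2 ^ k * a (2 ^ k)) (fun n => ha _) fun N => ?_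
  calc ∑ n ∈ Finset.range N, a (n + 1)
      = ∑ n ∈ Finset.Ico 1 (N + 1), a n := by
        rw [Finset.range_eq_Ico, Finset.sum_Ico_add' a 0 N 1, zero_add]
    _ ≤ ∑ n ∈ Finset.Ico 1 (2 ^ N), a n :=
        Finset.sum_le_sum_of_subset_of_nonneg
          (Finset.Ico_subset_Ico_right Nat.lt_two_pow_self) fun n _ _ => ha n
    _ ≤ C * ∑ k ∈ Finset.range N, 2 ^ k * a (2 ^ k) := sum_Ico_one_two_pow_le h N
    _ ≤ C * ∑' k : ℕ, 2 ^ k * a (2 ^ k) := by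
        gcongr
        exact hs.sum_le_tsum _ fun k _ => mul_nonneg (by positivity) (ha _)

lemma IsDoubling.not_summable_condensed (h : IsDoubling lam C) (hC : 0 ≤ C)
    (hpos : ∀ n, 0 < lam n) (hdiv : ¬ Summable fun n : ℕ => 1 / lam (n + 1)) :
    ¬ Summable fun j : ℕ => (lam (2 ^ j) / 2 ^ j)⁻¹ := by
  intro hs
  refine hdiv (summable_nat_add_one_of_summable_condensed (a := fun n => 1 / lam n)
    (fun n => (one_div_pos.2 (hpos n)).le) hC (fun k n hkn hnk =>
      h.one_div_le_div hpos Nat.one_le_two_pow hkn (by rw [pow_succ] at hnk; omega)) ?_)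
  simpa only [inv_div, mul_one_div] using hs

end Doubling

section Averaging

lemma not_summable_min_one {u : ℕ → ℝ} (hu : ¬ Summable u) :
    ¬ Summable fun j => min 1 (u j) := by
  intro hs
  refine hu (hs.congr_atTop ?_)
  filter_upwards [hs.tendsto_atTop_zero.eventually (gt_mem_nhds one_pos)] with j hj
  exact min_eq_right ((min_lt_iff.1 hj).resolve_left (lt_irrefl _)).le

/-- The weights are `min 1 (b j)⁻¹`, normalized over a long block of indices. -/
lemma exists_averaging_weights {b : ℕ → ℝ} (hb : ∀ j, 0 < b j)
    (hdiv : ¬ Summable fun j => (b j)⁻¹) (J : ℕ) {δ : ℝ} (hδ : 0 < δ) :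
    ∃ (s : Finset ℕ) (c : ℕ → ℝ), (∀ j ∈ s, J ≤ j) ∧ (∀ j, 0 ≤ c j) ∧ ∑ j ∈ s, c j = 1 ∧
      (∀ j, c j ≤ δ) ∧ ∀ j, c j * b j ≤ δ := by
  let w : ℕ → ℝ := fun j => min 1 (b j)⁻¹
  have w_pos (j : ℕ) : 0 < w j := lt_min one_pos (inv_pos.2 (hb j))
  have w_mul_le (j : ℕ) : w j * b j ≤ 1 :=
    (mul_le_mul_of_nonneg_right (min_le_right _ _) (hb j).le).trans_eq
      (inv_mul_cancel₀ (hb j).ne')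
  have partial_sums := (not_summable_iff_tendsto_nat_atTop_of_nonneg fun j => (w_pos j).le).1
    (not_summable_min_one hdiv)
  obtain ⟨L, hL, hJL⟩ := ((partial_sums.eventually_ge_atTop
    (δ⁻¹ + ∑ j ∈ Finset.range J, w j)).and (eventually_ge_atTop J)).exists
  set W : ℝ := ∑ j ∈ Finset.Ico J L, w j with hW
  have inv_le_W : δ⁻¹ ≤ W := by
    rw [hW, Finset.sum_Ico_eq_sub _ hJL]
    linarith
  have W_pos : 0 < W := (inv_pos.2 hδ).trans_le inv_le_W
  have one_le : 1 ≤ δ * W := (inv_le_iff_one_le_mul₀' hδ).1 inv_le_W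
  refine ⟨Finset.Ico J L, fun j => w j / W, fun j hj => (Finset.mem_Ico.1 hj).1,
    fun j => (div_pos (w_pos j) W_pos).le, ?_, fun j => ?_, fun j => ?_⟩
  · rw [← Finset.sum_div, div_self W_pos.ne']
  · exact (div_le_iff₀ W_pos).2 ((min_le_left _ _).trans one_le)
  · rw [div_mul_eq_mul_div, div_le_iff₀ W_pos]
    exact (w_mul_le j).trans one_le

end Averaging

section Bump

variable {h : ℝ → ℝ}

lemma exists_contDiff_deriv_eq (hh : ContDiff ℝ ∞ h) :
    ∃ H : ℝ → ℝ, ContDiff ℝ ∞ H ∧ deriv H = h := by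
  have hderiv (x : ℝ) : HasDerivAt (fun x => ∫ t in (0 : ℝ)..x, h t) (h x) x :=
    hh.continuous.integral_hasStrictDerivAt 0 x |>.hasDerivAt
  have hderiv_eq : deriv (fun x => ∫ t in (0 : ℝ)..x, h t) = h := funext fun x => (hderiv x).deriv
  refine ⟨_, contDiff_infty_iff_deriv.2 ⟨fun x => (hderiv x).differentiableAt, ?_⟩, hderiv_eq⟩
  rwa [hderiv_eq]

lemma hasCompactSupport_comp_mul_sub {H : ℝ → ℝ} (hH : ContDiff ℝ ∞ H)
    (hsupp : HasCompactSupport (deriv H)) {B : ℝ} (hB : 1 ≤ B) :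
    HasCompactSupport fun x => H (B * x) - H x := by
  obtain ⟨R, hR⟩ := hsupp.isBounded.subset_closedBall 0
  refine HasCompactSupport.intro (isCompact_closedBall (0 : ℝ) R) fun x hx => ?_
  rw [mem_closedBall_zero_iff, Real.norm_eq_abs, not_le] at hx
  have hderiv_zero : ∀ t ∈ Set.uIcc x (B * x), deriv H t = 0 := by
    intro t ht
    refine image_eq_zero_of_notMem_tsupport fun ht' => ?_
    have htR : |t| ≤ R := by simpa using hR ht'
    rcases le_total 0 x with h0 | h0
    · rw [Set.uIcc_of_le (by nlinarith)] at ht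
      rw [abs_of_nonneg h0] at hx
      linarith [ht.1, le_abs_self t]
    · rw [Set.uIcc_of_ge (by nlinarith)] at ht
      rw [abs_of_nonpos h0] at hx
      linarith [ht.2, neg_abs_le t]
  rw [← intervalIntegral.integral_deriv_eq_sub
    (fun t _ => hH.differentiable (by simp) t)
    (hH.continuous_deriv (by simp) |>.intervalIntegrable _ _),
    intervalIntegral.integral_congr hderiv_zero, intervalIntegral.integral_zero]

lemma iteratedDeriv_succ_comp_mul_sub {H : ℝ → ℝ} (hH : ContDiff ℝ ∞ H) (B : ℝ) (A : ℕ) :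
    iteratedDeriv (A + 1) (fun x => H (B * x) - H x) = fun x =>
      B ^ (A + 1) * iteratedDeriv A (deriv H) (B * x) - iteratedDeriv A (deriv H) x := by
  have hH' : ContDiff ℝ (A + 1 : ℕ) H := hH.of_le (mod_cast le_top)
  funext x
  rw [iteratedDeriv_fun_sub (by fun_prop) hH'.contDiffAt, iteratedDeriv_comp_const_mul hH',
    ← iteratedDeriv_succ']

/-- A smooth bump whose `A`-th order primitive is still compactly supported, i.e. a bump
orthogonal to all polynomials of degree less than `A`; this forces a change of sign, so only an
upper bound by `1` is possible. -/
structure IsMomentBump (A : ℕ) (h : ℝ → ℝ) : Prop where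
  contDiff : ContDiff ℝ ∞ h
  hasCompactSupport : HasCompactSupport h
  iteratedDeriv_le_one : ∀ x, iteratedDeriv A h x ≤ 1
  iteratedDeriv_eventuallyEq_one : iteratedDeriv A h =ᶠ[𝓝 0] 1

lemma hasCompactSupport_iteratedDeriv (hh : HasCompactSupport h) (A : ℕ) :
    HasCompactSupport (iteratedDeriv A h) := by
  induction A with
  | zero => rwa [iteratedDeriv_zero]
  | succ A ih => rw [iteratedDeriv_succ]; exact ih.deriv

lemma contDiff_iteratedDeriv (hh : ContDiff ℝ ∞ h) (A : ℕ) : ContDiff ℝ ∞ (iteratedDeriv A h) :=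
  iteratedDeriv_eq_iterate (𝕜 := ℝ) (f := h) ▸ hh.iterate_deriv A

lemma exists_isMomentBump_zero : ∃ h, IsMomentBump 0 h := by
  let b : ContDiffBump (0 : ℝ) := ⟨1, 2, one_pos, one_lt_two⟩
  refine ⟨b, b.contDiff, b.hasCompactSupport, fun x => ?_, ?_⟩
  · rw [iteratedDeriv_zero]
    exact b.le_one
  · rw [iteratedDeriv_zero]
    exact b.eventuallyEq_one

lemma exists_pow_mul_comp_mul_sub_le {ψ : ℝ → ℝ} (hψ : Continuous ψ) (hsupp : HasCompactSupport ψ)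
    (hle : ∀ x, ψ x ≤ 1) (hone : ψ =ᶠ[𝓝 0] 1) {n : ℕ} (hn : n ≠ 0) :
    ∃ B : ℝ, 1 < B ∧ ∀ x, B ^ n * ψ (B * x) - ψ x ≤ B ^ n - 1 := by
  obtain ⟨M, hM⟩ := hsupp.exists_bound_of_continuous hψ
  obtain ⟨R, hR⟩ := hsupp.isBounded.subset_closedBall 0
  obtain ⟨r, hr, hone⟩ := Metric.eventually_nhds_iff.1 hone
  obtain ⟨B, hBR, hBM, hB⟩ : ∃ B : ℝ, R < B * r ∧ M + 1 ≤ B ∧ 1 < B :=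
    ((tendsto_id.atTop_mul_const hr).eventually_gt_atTop R |>.and <|
      (eventually_ge_atTop _).and (eventually_gt_atTop 1)).exists
  refine ⟨B, hB, fun x => ?_⟩
  rcases lt_or_ge (dist x 0) r with hx | hx
  · rw [hone hx, Pi.one_apply]
    exact sub_le_sub_right (mul_le_of_le_one_right (by positivity) (hle _)) 1
  · have hBx : ψ (B * x) = 0 := by
      refine image_eq_zero_of_notMem_tsupport fun h => ?_
      have := hR h
      rw [Metric.mem_closedBall, dist_zero_right, norm_mul, Real.norm_of_nonneg (by linarith),
        ← dist_zero_right] at this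
      nlinarith
    have hBn : B ≤ B ^ n := le_self_pow₀ hB.le hn
    rw [hBx, mul_zero]
    linarith [neg_le_of_abs_le (hM x)]

-- If `ψ` is the `A`-th derivative of the old bump, the new one is proportional to
-- `B ^ (A + 1) * ψ (B x) - ψ x`, where for `B` large the two terms interact only where `ψ x = 1`.
lemma IsMomentBump.exists_succ {A : ℕ} (hh : IsMomentBump A h) : ∃ h', IsMomentBump (A + 1) h' := by
  obtain ⟨H, hH, rfl⟩ := exists_contDiff_deriv_eq hh.contDiff
  obtain ⟨B, hB, hle⟩ := exists_pow_mul_comp_mul_sub_le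
    (contDiff_iteratedDeriv hh.contDiff A).continuous
    (hasCompactSupport_iteratedDeriv hh.hasCompactSupport A) hh.iteratedDeriv_le_one
    hh.iteratedDeriv_eventuallyEq_one A.succ_ne_zero
  have hD : 0 < B ^ (A + 1) - 1 := sub_pos.2 (one_lt_pow₀ hB A.succ_ne_zero)
  have hderiv : iteratedDeriv (A + 1) (fun x => (B ^ (A + 1) - 1)⁻¹ * (H (B * x) - H x)) = fun x =>
      (B ^ (A + 1) - 1)⁻¹ *
        (B ^ (A + 1) * iteratedDeriv A (deriv H) (B * x) - iteratedDeriv A (deriv H) x) := by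
    funext x
    rw [iteratedDeriv_const_mul_field, iteratedDeriv_succ_comp_mul_sub hH]
  refine ⟨fun x => (B ^ (A + 1) - 1)⁻¹ * (H (B * x) - H x), by fun_prop,
    (hasCompactSupport_comp_mul_sub hH hh.hasCompactSupport hB.le).mul_left, fun x => ?_, ?_⟩
  · rw [hderiv, inv_mul_le_iff₀ hD, mul_one]
    exact hle x
  · rw [hderiv]
    have hscale : Tendsto (B * ·) (𝓝 (0 : ℝ)) (𝓝 0) := by
      simpa only [mul_zero] using (continuous_const_mul B).tendsto 0
    filter_upwards [hh.iteratedDeriv_eventuallyEq_one,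
      hscale.eventually hh.iteratedDeriv_eventuallyEq_one] with x hx hBx
    simp only [hx, hBx, Pi.one_apply, mul_one, inv_mul_cancel₀ hD.ne']

lemma exists_isMomentBump (A : ℕ) : ∃ h, IsMomentBump A h := by
  induction A with
  | zero => exact exists_isMomentBump_zero
  | succ A ih => exact ih.elim fun _ hh => hh.exists_succ

lemma exists_neg_mul_minRatio_le {ψ : ℝ → ℝ} (hψ : Continuous ψ) (hsupp : HasCompactSupport ψ)
    (hone : ψ =ᶠ[𝓝 0] 1) :
    ∃ K, 0 ≤ K ∧ ∀ s t, 0 ≤ s → -(K * minRatio s |t|⁻¹) ≤ ψ (s * t) := by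
  obtain ⟨M, hM⟩ := hsupp.exists_bound_of_continuous hψ
  obtain ⟨R, hR, hsuppR⟩ := hsupp.isBounded.subset_closedBall_lt 0 0
  obtain ⟨r, hr, hone⟩ := Metric.eventually_nhds_iff.1 hone
  have hM0 : 0 ≤ M := (norm_nonneg _).trans (hM 0)
  have hρ : 0 < min r R⁻¹ := by positivity
  refine ⟨M / min r R⁻¹, by positivity, fun s t hs => ?_⟩
  have hmin_nonneg := minRatio_nonneg hs (inv_nonneg.2 (abs_nonneg t))
  by_cases hsmall : dist (s * t) 0 < r
  · rw [hone hsmall, Pi.one_apply]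
    exact (neg_nonpos.2 (by positivity)).trans zero_le_one
  by_cases hlarge : s * t ∈ tsupport ψ
  · refine (neg_le_neg ?_).trans (neg_le_of_abs_le (hM _))
    rw [div_mul_eq_mul_div, le_div_iff₀ hρ]
    refine mul_le_mul_of_nonneg_left ?_ hM0
    have hst := hsuppR hlarge
    rw [not_lt] at hsmall
    rw [Metric.mem_closedBall] at hst
    rw [dist_zero_right, norm_mul, Real.norm_of_nonneg hs, Real.norm_eq_abs] at hsmall hst
    rw [minRatio, div_inv_eq_mul, div_eq_mul_inv, ← mul_inv, mul_comm |t|]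
    exact min_le_min hsmall (inv_anti₀ (hr.trans_le hsmall) hst)
  · rw [image_eq_zero_of_notMem_tsupport hlarge]
    exact neg_nonpos.2 (by positivity)

end Bump

section Window

variable {E : Type*} [NormedAddCommGroup E] [NormedSpace ℂ E]

lemma fourierIntegral_real_add {f₁ f₂ : ℝ → E} (hf₁ : Integrable f₁) (hf₂ : Integrable f₂) :
    𝓕 (f₁ + f₂) = 𝓕 f₁ + 𝓕 f₂ :=
  VectorFourier.fourierIntegral_add Real.continuous_fourierChar continuous_inner hf₁ hf₂

lemma fourierIntegral_real_smul (c : ℝ) (f : ℝ → E) : 𝓕 (c • f) = c • 𝓕 f :=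
  VectorFourier.fourierIntegral_const_smul _ _ _ f (c : ℂ)

/-- The function `g` localized to scale `1 / N` about `x₀` by the cutoff `h`. -/
def window (g : ℝ → E) (h : ℝ → ℝ) (x₀ N x : ℝ) : E := h (N * (x - x₀)) • g x

variable {g : ℝ → E} {h : ℝ → ℝ} (x₀ : ℝ) {N : ℝ}

lemma contDiff_window (hg : ContDiff ℝ ∞ g) (hh : ContDiff ℝ ∞ h) :
    ContDiff ℝ ∞ (window g h x₀ N) := by
  unfold window
  fun_prop

lemma hasCompactSupport_comp_mul_sub_const (hh : HasCompactSupport h) (hN : N ≠ 0) :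
    HasCompactSupport fun x => h (N * (x - x₀)) :=
  hh.comp_homeomorph ((Homeomorph.subRight x₀).trans (Homeomorph.mulLeft₀ N hN))

lemma integrable_window (hg : ContDiff ℝ ∞ g) (hh : ContDiff ℝ ∞ h)
    (hsupp : HasCompactSupport h) (hN : N ≠ 0) : Integrable (window g h x₀ N) :=
  (contDiff_window x₀ hg hh).continuous.integrable_of_hasCompactSupport
    (hasCompactSupport_comp_mul_sub_const x₀ hsupp hN).smul_right

lemma deriv_window (hg : ContDiff ℝ ∞ g) (hh : ContDiff ℝ ∞ h) :
    deriv (window g h x₀ N) =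
      N • window g (deriv h) x₀ N + window (deriv g) h x₀ N := by
  funext x
  have hh_deriv : HasDerivAt (fun x => h (N * (x - x₀))) (deriv h (N * (x - x₀)) * (N * 1)) x :=
    (hh.differentiable (by simp) _).hasDerivAt.comp x
      (((hasDerivAt_id x).sub_const x₀).const_mul N)
  have hg_deriv := (hg.differentiable (by simp) x).hasDerivAt
  refine (hh_deriv.smul hg_deriv).deriv.trans ?_
  simp only [window, Pi.add_apply, Pi.smul_apply, smul_smul, mul_one]
  rw [add_comm, mul_comm (deriv h _)]

lemma norm_two_pi_I_smul (ξ : ℝ) (v : E) :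
    ‖(2 * Real.pi * Complex.I * ξ) • v‖ = 2 * Real.pi * |ξ| * ‖v‖ := by
  simp only [norm_smul, norm_mul, Complex.norm_ofNat, Complex.norm_real, Complex.norm_I, mul_one,
    Real.norm_of_nonneg Real.pi_nonneg, Real.norm_eq_abs]

lemma smul_fourier_window (hg : ContDiff ℝ ∞ g) (hh : ContDiff ℝ ∞ h)
    (hsupp : HasCompactSupport h) (hN : N ≠ 0) (ξ : ℝ) :
    (2 * Real.pi * Complex.I * ξ) • 𝓕 (window g h x₀ N) ξ =
      N • 𝓕 (window g (deriv h) x₀ N) ξ + 𝓕 (window (deriv g) h x₀ N) ξ := by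
  have hg' : ContDiff ℝ ∞ (deriv g) := (contDiff_infty_iff_deriv.1 hg).2
  have hh' : ContDiff ℝ ∞ (deriv h) := (contDiff_infty_iff_deriv.1 hh).2
  have h_int₁ := integrable_window x₀ hg hh' hsupp.deriv hN
  have h_int₂ := integrable_window x₀ hg' hh hsupp hN
  have h_int := (h_int₁.smul N).add h_int₂
  rw [← deriv_window x₀ hg hh] at h_int
  rw [← congrFun (Real.fourier_deriv (integrable_window x₀ hg hh hsupp hN)
    ((contDiff_window x₀ hg hh).differentiable (by simp)) h_int) ξ, deriv_window x₀ hg hh,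
    fourierIntegral_real_add (h_int₁.smul N) h_int₂, fourierIntegral_real_smul]
  rfl

lemma exists_norm_fourier_window_le (hg : Continuous g) (hh : Continuous h)
    (hsupp : HasCompactSupport h) :
    ∃ K, 0 ≤ K ∧ ∀ N ξ, 1 ≤ N → ‖𝓕 (window g h x₀ N) ξ‖ ≤ K / N := by
  obtain ⟨R, hR⟩ := hsupp.isBounded.subset_closedBall 0
  obtain ⟨G, hG⟩ := (isCompact_closedBall x₀ R).exists_bound_of_continuousOn hg.continuousOn
  have h_int : Integrable fun y => |G| * ‖h y‖ :=
    (hh.integrable_of_hasCompactSupport hsupp).norm.const_mul |G|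
  refine ⟨∫ y, |G| * ‖h y‖, by positivity, fun N ξ hN => ?_⟩
  have hN0 : 0 < N := by linarith
  have hle (x : ℝ) : ‖window g h x₀ N x‖ ≤ |G| * ‖h (N * (x - x₀))‖ := by
    rw [window, norm_smul, mul_comm]
    by_cases hx : N * (x - x₀) ∈ tsupport h
    · refine mul_le_mul_of_nonneg_right ((hG x ?_).trans (le_abs_self G)) (norm_nonneg _)
      have := hR hx
      rw [mem_closedBall_zero_iff, norm_mul, Real.norm_of_nonneg hN0.le] at this
      rw [mem_closedBall_iff_norm]
      nlinarith [norm_nonneg (x - x₀)]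
    · simp [image_eq_zero_of_notMem_tsupport hx]
  have h_int' : Integrable fun x => |G| * ‖h (N * (x - x₀))‖ :=
    (h_int.comp_mul_left' hN0.ne').comp_sub_right x₀
  calc ‖𝓕 (window g h x₀ N) ξ‖
      ≤ ∫ x, ‖window g h x₀ N x‖ := VectorFourier.norm_fourierIntegral_le_integral_norm _ _ _ _ _
    _ ≤ ∫ x, |G| * ‖h (N * (x - x₀))‖ :=
      integral_mono_of_nonneg (.of_forall fun x => norm_nonneg _) h_int' (.of_forall hle)
    _ = (∫ y, |G| * ‖h y‖) / N := by
      rw [integral_sub_right_eq_self (fun x => |G| * ‖h (N * x)‖) x₀,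
        Measure.integral_comp_mul_left (fun y => |G| * ‖h y‖), abs_of_pos (inv_pos.2 hN0),
        smul_eq_mul, inv_mul_eq_div]

lemma exists_norm_fourier_window_iteratedDeriv_le (hg : ContDiff ℝ ∞ g) (hh : ContDiff ℝ ∞ h)
    (hsupp : HasCompactSupport h) (A : ℕ) :
    ∃ K, 0 ≤ K ∧ ∀ N ξ, 1 ≤ N →
      ‖𝓕 (window g (iteratedDeriv A h) x₀ N) ξ‖ ≤ K / N * ((1 + |ξ|) / N) ^ A := by
  induction A generalizing g with
  | zero =>
    simpa only [iteratedDeriv_zero, pow_zero, mul_one] using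
      exists_norm_fourier_window_le x₀ hg.continuous hh.continuous hsupp
  | succ A ih =>
    obtain ⟨K₁, hK₁, hle₁⟩ := ih hg
    obtain ⟨K₂, hK₂, hle₂⟩ := ih (contDiff_infty_iff_deriv.1 hg).2
    refine ⟨2 * Real.pi * K₁ + K₂, by positivity, fun N ξ hN => ?_⟩
    have hN0 : 0 < N := by linarith
    set q := (1 + |ξ|) / N
    have hidentity := smul_fourier_window x₀ hg (contDiff_iteratedDeriv hh A)
      (hasCompactSupport_iteratedDeriv hsupp A) hN0.ne' ξ
    rw [← iteratedDeriv_succ] at hidentity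
    calc ‖𝓕 (window g (iteratedDeriv (A + 1) h) x₀ N) ξ‖
        = ‖(2 * Real.pi * Complex.I * ξ) • 𝓕 (window g (iteratedDeriv A h) x₀ N) ξ -
            𝓕 (window (deriv g) (iteratedDeriv A h) x₀ N) ξ‖ / N := by
          rw [hidentity, add_sub_cancel_right, norm_smul, Real.norm_of_nonneg hN0.le,
            mul_div_cancel_left₀ _ hN0.ne']
      _ ≤ (2 * Real.pi * (1 + |ξ|) * (K₁ / N * q ^ A) + (1 + |ξ|) * (K₂ / N * q ^ A)) / N := by
          gcongr
          refine (norm_sub_le _ _).trans (add_le_add ?_ ((hle₂ N ξ hN).trans ?_))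
          · rw [norm_two_pi_I_smul]
            gcongr
            · linarith
            · exact hle₁ N ξ hN
          · exact le_mul_of_one_le_left (by positivity) (by linarith [abs_nonneg ξ])
      _ = (2 * Real.pi * K₁ + K₂) / N * q ^ (A + 1) := by
          simp only [q]
          ring

lemma exists_norm_fourier_window_le_pow (hg : ContDiff ℝ ∞ g) (hh : ContDiff ℝ ∞ h)
    (hsupp : HasCompactSupport h) (A : ℕ) :
    ∃ K, 0 ≤ K ∧ ∀ N ξ, 1 ≤ N →
      ‖𝓕 (window g h x₀ N) ξ‖ ≤ K / N * (N / (1 + |ξ|)) ^ A := by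
  induction A generalizing g h with
  | zero =>
    simpa only [pow_zero, mul_one] using
      exists_norm_fourier_window_le x₀ hg.continuous hh.continuous hsupp
  | succ A ih =>
    obtain ⟨K₀, hK₀, hle₀⟩ := ih hg hh hsupp
    obtain ⟨K₁, hK₁, hle₁⟩ := ih hg (contDiff_infty_iff_deriv.1 hh).2 hsupp.deriv
    obtain ⟨K₂, hK₂, hle₂⟩ := ih (contDiff_infty_iff_deriv.1 hg).2 hh hsupp
    refine ⟨K₀ + K₁ + K₂, by positivity, fun N ξ hN => ?_⟩
    have hN0 : 0 < N := by linarith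
    have hξ : 0 < 1 + |ξ| := by positivity
    set q := N / (1 + |ξ|)
    have hbound : (1 + |ξ|) * ‖𝓕 (window g h x₀ N) ξ‖ ≤ (K₀ + K₁ + K₂) * q ^ A := by
      calc (1 + |ξ|) * ‖𝓕 (window g h x₀ N) ξ‖
          ≤ ‖𝓕 (window g h x₀ N) ξ‖ +
              ‖(2 * Real.pi * Complex.I * ξ) • 𝓕 (window g h x₀ N) ξ‖ := by
            rw [norm_two_pi_I_smul, add_mul, one_mul]
            gcongr
            exact le_mul_of_one_le_left (abs_nonneg ξ) (by linarith [Real.two_le_pi])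
        _ ≤ K₀ / N * q ^ A + (N * (K₁ / N * q ^ A) + K₂ / N * q ^ A) := by
            rw [smul_fourier_window x₀ hg hh hsupp hN0.ne']
            refine add_le_add (hle₀ N ξ hN) ((norm_add_le _ _).trans
              (add_le_add ?_ (hle₂ N ξ hN)))
            rw [norm_smul, Real.norm_of_nonneg hN0.le]
            exact mul_le_mul_of_nonneg_left (hle₁ N ξ hN) hN0.le
        _ ≤ K₀ * q ^ A + (K₁ * q ^ A + K₂ * q ^ A) := by
            rw [← mul_assoc, mul_div_cancel₀ _ hN0.ne']
            gcongr <;> exact div_le_self ‹_› hN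
        _ = (K₀ + K₁ + K₂) * q ^ A := by ring
    calc ‖𝓕 (window g h x₀ N) ξ‖ ≤ (K₀ + K₁ + K₂) * q ^ A / (1 + |ξ|) := by
          rwa [le_div_iff₀' hξ]
      _ = (K₀ + K₁ + K₂) / N * q ^ (A + 1) := by
          simp only [q, pow_succ]
          field_simp

lemma exists_norm_fourier_window_le_minRatio (hg : ContDiff ℝ ∞ g) (hh : ContDiff ℝ ∞ h)
    (hsupp : HasCompactSupport h) (A : ℕ) :
    ∃ K, ∀ N ξ, 1 ≤ N →
      ‖𝓕 (window g (iteratedDeriv A h) x₀ N) ξ‖ ≤ K / N * minRatio N (1 + |ξ|) ^ A := by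
  obtain ⟨K₁, hK₁, hle₁⟩ := exists_norm_fourier_window_iteratedDeriv_le x₀ hg hh hsupp A
  obtain ⟨K₂, hK₂, hle₂⟩ := exists_norm_fourier_window_le_pow x₀ hg (contDiff_iteratedDeriv hh A)
    (hasCompactSupport_iteratedDeriv hsupp A) A
  refine ⟨K₁ + K₂, fun N ξ hN => ?_⟩
  rcases min_choice (N / (1 + |ξ|)) ((1 + |ξ|) / N) with hmin | hmin
  · rw [minRatio, hmin]
    refine (hle₂ N ξ hN).trans ?_
    gcongr
    exact le_add_of_nonneg_left hK₁
  · rw [minRatio, hmin]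
    refine (hle₁ N ξ hN).trans ?_
    gcongr
    exact le_add_of_nonneg_right hK₂

end Window

section WeightMeasure

variable {ι : Type*} [MeasurableSpace ι] [DiscreteMeasurableSpace ι] {w : ι → ℝ}
  {E : Type*} [NormedAddCommGroup E] {a : ι → E}

/-- The measure giving mass `w i` to the point `i` (and mass `0` where `w i` is negative), so that
its `L²` norm is the weighted `ℓ²` norm. -/
def weightMeasure (w : ι → ℝ) : Measure ι :=
  Measure.count.withDensity fun i => ENNReal.ofReal (w i)

lemma weightMeasure_singleton (w : ι → ℝ) (i : ι) :
    weightMeasure w {i} = ENNReal.ofReal (w i) := by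
  rw [weightMeasure, withDensity_apply _ (.singleton i), lintegral_singleton,
    Measure.count_singleton, mul_one]

lemma eLpNorm_two_weightMeasure_sq (hw : ∀ i, 0 ≤ w i) (a : ι → E) :
    eLpNorm a 2 (weightMeasure w) ^ 2 = ∑' i, ENNReal.ofReal (w i * ‖a i‖ ^ 2) := by
  have hpow := eLpNorm_nnreal_pow_eq_lintegral (f := a) (μ := weightMeasure w) two_ne_zero
  simp only [NNReal.coe_ofNat, ENNReal.rpow_ofNat, ENNReal.coe_ofNat] at hpow
  rw [hpow, weightMeasure, lintegral_withDensity_eq_lintegral_mul _ .of_discrete .of_discrete,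
    lintegral_count]
  simp only [Pi.mul_apply, ENNReal.ofReal_mul (hw _), ENNReal.ofReal_pow (norm_nonneg _),
    ofReal_norm]

lemma eLpNorm_two_weightMeasure_le (hw : ∀ i, 0 ≤ w i) {ε : ℝ} (hε : 0 ≤ ε)
    (h : ∀ S : Finset ι, ∑ i ∈ S, w i * ‖a i‖ ^ 2 ≤ ε ^ 2) :
    eLpNorm a 2 (weightMeasure w) ≤ ENNReal.ofReal ε := by
  rw [← ENNReal.pow_le_pow_left_iff two_ne_zero, eLpNorm_two_weightMeasure_sq hw,
    ← ENNReal.ofReal_pow hε]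
  refine Summable.tsum_le_of_sum_le ENNReal.summable fun S => ?_
  rw [← ENNReal.ofReal_sum_of_nonneg fun i _ => mul_nonneg (hw i) (sq_nonneg _)]
  exact ENNReal.ofReal_le_ofReal (h S)

lemma summable_of_eLpNorm_two_weightMeasure_ne_top (hw : ∀ i, 0 ≤ w i)
    (h : eLpNorm a 2 (weightMeasure w) ≠ ⊤) : Summable fun i => ‖a i‖ ^ 2 * w i := by
  have hsum : ∑' i, ENNReal.ofReal (w i * ‖a i‖ ^ 2) ≠ ⊤ := by
    rw [← eLpNorm_two_weightMeasure_sq hw]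
    exact ENNReal.pow_ne_top h
  refine (ENNReal.summable_toReal hsum).congr fun i => ?_
  rw [ENNReal.toReal_ofReal (mul_nonneg (hw i) (sq_nonneg _)), mul_comm]

end WeightMeasure

section AlmostOrthogonal

lemma sq_sum_mul_minRatio_pow_le {t : ℝ} (ht : 0 < t) (s : Finset ℕ) (c : ℕ → ℝ) (p : ℕ) :
    (∑ j ∈ s, c j * minRatio (2 ^ j) t ^ (p + 2)) ^ 2 ≤
      6 * ∑ j ∈ s, c j ^ 2 * (minRatio (2 ^ j) t ^ p * minRatio (2 ^ j) t ^ 2) := by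
  have hnonneg (j : ℕ) : 0 ≤ minRatio (2 ^ j) t := minRatio_nonneg (by positivity) ht.le
  have hle_one (j : ℕ) : minRatio (2 ^ j) t ≤ 1 := minRatio_le_one (by positivity) ht
  calc (∑ j ∈ s, c j * minRatio (2 ^ j) t ^ (p + 2)) ^ 2
      ≤ (∑ j ∈ s, minRatio (2 ^ j) t) * ∑ j ∈ s, c j ^ 2 * minRatio (2 ^ j) t ^ (2 * p + 3) := by
        refine Finset.sum_sq_le_sum_mul_sum_of_sq_le_mul s (fun j _ => hnonneg j)
          (fun j _ => mul_nonneg (sq_nonneg _) (pow_nonneg (hnonneg j) _))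
          fun j _ => le_of_eq ?_
        ring
    _ ≤ 6 * ∑ j ∈ s, c j ^ 2 * (minRatio (2 ^ j) t ^ p * minRatio (2 ^ j) t ^ 2) := by
        refine mul_le_mul (sum_minRatio_two_pow_le ht s) (Finset.sum_le_sum fun j _ => ?_)
          (Finset.sum_nonneg fun j _ => mul_nonneg (sq_nonneg _) (pow_nonneg (hnonneg j) _))
          (by norm_num)
        rw [← pow_add]
        exact mul_le_mul_of_nonneg_left
          (pow_le_pow_of_le_one (hnonneg j) (hle_one j) (by lia)) (sq_nonneg _)

lemma sum_mul_sq_sum_minRatio_pow_le {w : ℤ → ℝ} (hw : ∀ n, 0 ≤ w n) {W : ℕ → ℝ} {D : ℝ} {p : ℕ}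
    (hwW : ∀ n j, w n * minRatio (2 ^ j) (1 + |(n : ℝ)|) ^ p ≤ D * W j)
    (s : Finset ℕ) (c : ℕ → ℝ) (S : Finset ℤ) :
    ∑ n ∈ S, w n * (∑ j ∈ s, c j * minRatio (2 ^ j) (1 + |(n : ℝ)|) ^ (p + 2)) ^ 2 ≤
      48 * D * ∑ j ∈ s, c j ^ 2 * 2 ^ j * W j := by
  set r : ℤ → ℕ → ℝ := fun n j => minRatio (2 ^ j) (1 + |(n : ℝ)|)
  have hDW (j : ℕ) : 0 ≤ D * W j := le_trans
    (mul_nonneg (hw 0) (pow_nonneg (minRatio_nonneg (by positivity) (by positivity)) p)) (hwW 0 j)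
  calc ∑ n ∈ S, w n * (∑ j ∈ s, c j * r n j ^ (p + 2)) ^ 2
      ≤ ∑ n ∈ S, w n * (6 * ∑ j ∈ s, c j ^ 2 * (r n j ^ p * r n j ^ 2)) :=
        Finset.sum_le_sum fun n _ => mul_le_mul_of_nonneg_left
          (sq_sum_mul_minRatio_pow_le (by positivity) s c p) (hw n)
    _ = ∑ n ∈ S, ∑ j ∈ s, 6 * c j ^ 2 * (w n * r n j ^ p) * r n j ^ 2 := by
        refine Finset.sum_congr rfl fun n _ => ?_
        rw [Finset.mul_sum, Finset.mul_sum]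
        exact Finset.sum_congr rfl fun j _ => by ring
    _ ≤ ∑ n ∈ S, ∑ j ∈ s, 6 * c j ^ 2 * (D * W j) * r n j ^ 2 := by
        refine Finset.sum_le_sum fun n _ => Finset.sum_le_sum fun j _ => ?_
        exact mul_le_mul_of_nonneg_right
          (mul_le_mul_of_nonneg_left (hwW n j) (by positivity)) (sq_nonneg _)
    _ = ∑ j ∈ s, 6 * c j ^ 2 * (D * W j) * ∑ n ∈ S, r n j ^ 2 := by
        rw [Finset.sum_comm]
        exact Finset.sum_congr rfl fun j _ => (Finset.mul_sum _ _ _).symm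
    _ ≤ ∑ j ∈ s, 6 * c j ^ 2 * (D * W j) * (8 * 2 ^ j) := by
        gcongr with j _
        · exact mul_nonneg (by positivity) (hDW j)
        · exact sum_minRatio_sq_le (by positivity) S
    _ = 48 * D * ∑ j ∈ s, c j ^ 2 * 2 ^ j * W j := by
        rw [Finset.mul_sum]
        exact Finset.sum_congr rfl fun j _ => by ring

end AlmostOrthogonal

section DyadicAverage

/-- The average, with weights `c j`, of the dilates of `ψ` to the dyadic scales `1 / 2 ^ j`
about `x₀`. -/
def dyadicAverage (s : Finset ℕ) (c : ℕ → ℝ) (ψ : ℝ → ℝ) (x₀ x : ℝ) : ℝ :=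
  ∑ j ∈ s, c j * ψ (2 ^ j * (x - x₀))

variable {s : Finset ℕ} {c : ℕ → ℝ} {ψ : ℝ → ℝ} (x₀ : ℝ)

lemma contDiff_dyadicAverage (hψ : ContDiff ℝ ∞ ψ) : ContDiff ℝ ∞ (dyadicAverage s c ψ x₀) := by
  unfold dyadicAverage
  fun_prop

lemma dyadicAverage_le_one (hc : ∀ j, 0 ≤ c j) (hsum : ∑ j ∈ s, c j = 1) (hψ : ∀ x, ψ x ≤ 1)
    (x : ℝ) : dyadicAverage s c ψ x₀ x ≤ 1 :=
  hsum ▸ Finset.sum_le_sum fun j _ => mul_le_of_le_one_right (hc j) (hψ _)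

lemma dyadicAverage_eventuallyEq_one (hsum : ∑ j ∈ s, c j = 1) (hψ : ψ =ᶠ[𝓝 0] 1) :
    dyadicAverage s c ψ x₀ =ᶠ[𝓝 x₀] 1 := by
  have hscale (j : ℕ) : Tendsto (fun x => 2 ^ j * (x - x₀)) (𝓝 x₀) (𝓝 0) := by
    have : Continuous fun x => 2 ^ j * (x - x₀) := by fun_prop
    simpa only [sub_self, mul_zero] using this.tendsto x₀
  filter_upwards [s.eventually_all.2 fun j _ => (hscale j).eventually hψ] with x hx
  rw [dyadicAverage, Pi.one_apply, ← hsum]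
  exact Finset.sum_congr rfl fun j hj => by rw [hx j hj, Pi.one_apply, mul_one]

lemma neg_le_dyadicAverage (hc : ∀ j, 0 ≤ c j) {δ K : ℝ} (hδ : 0 ≤ δ) (hcδ : ∀ j, c j ≤ δ)
    (hK : 0 ≤ K) (hψ : ∀ s t, 0 ≤ s → -(K * minRatio s |t|⁻¹) ≤ ψ (s * t)) (x : ℝ) :
    -(6 * K * δ) ≤ dyadicAverage s c ψ x₀ x := by
  have hsum : ∑ j ∈ s, minRatio (2 ^ j) |x - x₀|⁻¹ ≤ 6 := by
    rcases eq_or_ne x x₀ with rfl | hx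
    · simp [minRatio]
    · exact sum_minRatio_two_pow_le (inv_pos.2 (abs_pos.2 (sub_ne_zero.2 hx))) s
  have hterm (j : ℕ) :
      -(δ * (K * minRatio (2 ^ j) |x - x₀|⁻¹)) ≤ c j * ψ (2 ^ j * (x - x₀)) := by
    have hmin : 0 ≤ K * minRatio (2 ^ j) |x - x₀|⁻¹ :=
      mul_nonneg hK (minRatio_nonneg (by positivity) (by positivity))
    have hψj := mul_le_mul_of_nonneg_left (hψ (2 ^ j) (x - x₀) (by positivity)) (hc j)
    linarith [mul_le_mul_of_nonneg_right (hcδ j) hmin]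
  calc -(6 * K * δ) ≤ -(δ * K * ∑ j ∈ s, minRatio (2 ^ j) |x - x₀|⁻¹) := by
        nlinarith [mul_le_mul_of_nonneg_left hsum (mul_nonneg hδ hK)]
    _ = ∑ j ∈ s, -(δ * (K * minRatio (2 ^ j) |x - x₀|⁻¹)) := by
        rw [Finset.mul_sum, ← Finset.sum_neg_distrib]
        exact Finset.sum_congr rfl fun j _ => by ring
    _ ≤ dyadicAverage s c ψ x₀ x := Finset.sum_le_sum fun j _ => hterm j

lemma abs_sub_le_of_dyadicAverage_ne_zero {J : ℕ} (hs : ∀ j ∈ s, J ≤ j) {R : ℝ}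
    (hψ : tsupport ψ ⊆ Metric.closedBall 0 R) {x : ℝ} (hx : dyadicAverage s c ψ x₀ x ≠ 0) :
    |x - x₀| ≤ R / 2 ^ J := by
  obtain ⟨j, hj, hne⟩ := Finset.exists_ne_zero_of_sum_ne_zero hx
  have hmem := hψ (subset_tsupport ψ (right_ne_zero_of_mul hne))
  rw [mem_closedBall_zero_iff, norm_mul, Real.norm_of_nonneg (by positivity),
    Real.norm_eq_abs] at hmem
  rw [le_div_iff₀' (by positivity)]
  refine le_trans ?_ hmem
  gcongr
  · exact one_le_two
  · exact hs j hj

variable {E : Type*} [NormedAddCommGroup E] [NormedSpace ℂ E] {g : ℝ → E}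

lemma fourier_dyadicAverage_smul (hg : ContDiff ℝ ∞ g) (hψ : ContDiff ℝ ∞ ψ)
    (hsupp : HasCompactSupport ψ) (ξ : ℝ) :
    𝓕 (fun x => dyadicAverage s c ψ x₀ x • g x) ξ =
      ∑ j ∈ s, c j • 𝓕 (window g ψ x₀ (2 ^ j)) ξ := by
  have h_int (j : ℕ) : Integrable (window g ψ x₀ (2 ^ j)) :=
    integrable_window x₀ hg hψ hsupp (by positivity)
  have heq : (fun x => dyadicAverage s c ψ x₀ x • g x) =
      ∑ j ∈ s, c j • window g ψ x₀ (2 ^ j) := by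
    funext x
    simp only [dyadicAverage, Finset.sum_smul, mul_smul, Finset.sum_apply, Pi.smul_apply, window]
  rw [heq]
  clear heq
  induction s using Finset.cons_induction with
  | empty => simp [Real.fourier_eq]
  | cons j s hj ih =>
    rw [Finset.sum_cons, Finset.sum_cons, fourierIntegral_real_add ((h_int j).smul (c j))
      (integrable_finsetSum' s fun i _ => (h_int i).smul (c i)), fourierIntegral_real_smul,
      Pi.add_apply, Pi.smul_apply, ih]

lemma exists_sum_norm_fourier_dyadicAverage_sq_le {lam : ℕ → ℝ} (hlam : ∀ n, 0 ≤ lam n) {D : ℝ}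
    (hD0 : 0 ≤ D) {p : ℕ} (hD : ∀ (n : ℤ) (j : ℕ),
      lam n.natAbs * minRatio (2 ^ j) (1 + |(n : ℝ)|) ^ p ≤ D * lam (2 ^ j))
    (hg : ContDiff ℝ ∞ g) {h : ℝ → ℝ} (hh : ContDiff ℝ ∞ h) (hsupp : HasCompactSupport h) :
    ∃ K, 0 ≤ K ∧ ∀ (s : Finset ℕ) (c : ℕ → ℝ), (∀ j, 0 ≤ c j) → ∀ S : Finset ℤ,
      ∑ n ∈ S, lam n.natAbs *
          ‖𝓕 (fun x => dyadicAverage s c (iteratedDeriv (p + 2) h) x₀ x • g x) (n : ℝ)‖ ^ 2 ≤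
        K * ∑ j ∈ s, c j ^ 2 * (lam (2 ^ j) / 2 ^ j) := by
  obtain ⟨K, hle⟩ := exists_norm_fourier_window_le_minRatio x₀ hg hh hsupp (p + 2)
  refine ⟨48 * D * K ^ 2, by positivity, fun s c hc S => ?_⟩
  have hcoeff (n : ℤ) :
      ‖𝓕 (fun x => dyadicAverage s c (iteratedDeriv (p + 2) h) x₀ x • g x) (n : ℝ)‖ ≤
        ∑ j ∈ s, (c j * (K / 2 ^ j)) * minRatio (2 ^ j) (1 + |(n : ℝ)|) ^ (p + 2) := by
    rw [fourier_dyadicAverage_smul x₀ hg (contDiff_iteratedDeriv hh _)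
      (hasCompactSupport_iteratedDeriv hsupp _)]
    refine norm_sum_le_of_le _ fun j _ => ?_
    rw [norm_smul, Real.norm_of_nonneg (hc j), mul_assoc]
    exact mul_le_mul_of_nonneg_left (hle _ _ (one_le_pow₀ one_le_two)) (hc j)
  calc ∑ n ∈ S, lam n.natAbs *
          ‖𝓕 (fun x => dyadicAverage s c (iteratedDeriv (p + 2) h) x₀ x • g x) (n : ℝ)‖ ^ 2
      ≤ ∑ n ∈ S, lam n.natAbs *
          (∑ j ∈ s, (c j * (K / 2 ^ j)) * minRatio (2 ^ j) (1 + |(n : ℝ)|) ^ (p + 2)) ^ 2 :=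
        Finset.sum_le_sum fun n _ => mul_le_mul_of_nonneg_left
          (pow_le_pow_left₀ (norm_nonneg _) (hcoeff n) 2) (hlam _)
    _ ≤ 48 * D * ∑ j ∈ s, (c j * (K / 2 ^ j)) ^ 2 * 2 ^ j * lam (2 ^ j) :=
        sum_mul_sq_sum_minRatio_pow_le (fun n => hlam n.natAbs) hD s _ S
    _ = 48 * D * K ^ 2 * ∑ j ∈ s, c j ^ 2 * (lam (2 ^ j) / 2 ^ j) := by
        rw [mul_assoc _ (K ^ 2), Finset.mul_sum (a := K ^ 2)]
        refine congrArg _ (Finset.sum_congr rfl fun j _ => ?_)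
        field_simp

lemma sum_sq_mul_le {b : ℕ → ℝ} {δ : ℝ} (hc : ∀ j, 0 ≤ c j) (hsum : ∑ j ∈ s, c j = 1)
    (hb : ∀ j, c j * b j ≤ δ) : ∑ j ∈ s, c j ^ 2 * b j ≤ δ := by
  calc ∑ j ∈ s, c j ^ 2 * b j ≤ ∑ j ∈ s, c j * δ := by
        refine Finset.sum_le_sum fun j _ => ?_
        rw [sq, mul_assoc]
        exact mul_le_mul_of_nonneg_left (hb j) (hc j)
    _ = δ := by rw [← Finset.sum_mul, hsum, one_mul]

/-- A smooth cutoff equal to `1` near `x₀`, carried by `[x₀ - ε, x₀ + ε]`, almost nonnegative, and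
for which the sequence `𝓕 (φ • g) n` has norm at most `ε` in `L²(ν)`. -/
structure IsLocalizedCutoff (ν : Measure ℤ) (g : ℝ → E) (x₀ ε : ℝ) (φ : ℝ → ℝ) : Prop where
  contDiff : ContDiff ℝ ∞ φ
  le_one : ∀ x, φ x ≤ 1
  neg_le : ∀ x, -ε ≤ φ x
  eventuallyEq_one : φ =ᶠ[𝓝 x₀] 1
  abs_sub_le : ∀ x, φ x ≠ 0 → |x - x₀| ≤ ε
  energy_le : eLpNorm (fun n : ℤ => 𝓕 (fun x => φ x • g x) (n : ℝ)) 2 ν ≤ ENNReal.ofReal ε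

/-- Every smooth function can be cut off near every point with arbitrarily small norm in `L²(ν)`
of its Fourier transform at the integers. -/
def HasSmallCutoffs (ν : Measure ℤ) : Prop :=
  ∀ (g : ℝ → ℂ) (x₀ ε : ℝ), ContDiff ℝ ∞ g → 0 < ε → ∃ φ, IsLocalizedCutoff ν g x₀ ε φ

lemma IsDoubling.hasSmallCutoffs {lam : ℕ → ℝ} {C : ℝ} (h : IsDoubling lam C)
    (hC : 1 ≤ C) (hpos : ∀ n, 0 < lam n) (hdiv : ¬ Summable fun n : ℕ => 1 / lam (n + 1)) :
    HasSmallCutoffs (weightMeasure fun n : ℤ => lam n.natAbs) := by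
  intro g x₀ ε hg hε
  obtain ⟨p, D, hD0, hD⟩ := h.exists_mul_minRatio_pow_le hC hpos
  obtain ⟨η, hη⟩ := exists_isMomentBump (p + 2)
  have hψ := contDiff_iteratedDeriv hη.contDiff (p + 2)
  have hψ_supp := hasCompactSupport_iteratedDeriv hη.hasCompactSupport (p + 2)
  obtain ⟨L, hL, hψ_lower⟩ :=
    exists_neg_mul_minRatio_le hψ.continuous hψ_supp hη.iteratedDeriv_eventuallyEq_one
  obtain ⟨K, hK, henergy⟩ := exists_sum_norm_fourier_dyadicAverage_sq_le x₀
    (fun n => (hpos n).le) hD0 hD hg hη.contDiff hη.hasCompactSupport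
  obtain ⟨R, hR⟩ := hψ_supp.isBounded.subset_closedBall 0
  obtain ⟨J, hJ⟩ : ∃ J : ℕ, R / 2 ^ J ≤ ε :=
    ((tendsto_const_nhds.div_atTop
      (tendsto_pow_atTop_atTop_of_one_lt one_lt_two)).eventually_le_const hε).exists
  obtain ⟨δ, hδ, hδ_lower, hδ_energy⟩ : ∃ δ, 0 < δ ∧ 6 * L * δ ≤ ε ∧ K * δ ≤ ε ^ 2 := by
    have hsmall (a : ℝ) {b : ℝ} (hb : 0 < b) : ∀ᶠ δ in 𝓝[>] (0 : ℝ), a * δ ≤ b :=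
      (((continuous_const_mul a).tendsto' 0 0 (mul_zero a)).mono_left
        inf_le_left).eventually_le_const hb
    exact (eventually_mem_nhdsWithin.and
      ((hsmall _ hε).and (hsmall K (by positivity)))).exists
  obtain ⟨s, c, hs, hc, hsum, hcδ, hbδ⟩ :=
    exists_averaging_weights (fun j => div_pos (hpos (2 ^ j)) (by positivity))
      (h.not_summable_condensed (by linarith) hpos hdiv) J hδ
  refine ⟨dyadicAverage s c (iteratedDeriv (p + 2) η) x₀, contDiff_dyadicAverage x₀ hψ,
    dyadicAverage_le_one x₀ hc hsum hη.iteratedDeriv_le_one,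
    fun x => (neg_le_neg hδ_lower).trans (neg_le_dyadicAverage x₀ hc hδ.le hcδ hL hψ_lower x),
    dyadicAverage_eventuallyEq_one x₀ hsum hη.iteratedDeriv_eventuallyEq_one,
    fun x hx => (abs_sub_le_of_dyadicAverage_ne_zero x₀ hs hR hx).trans hJ,
    eLpNorm_two_weightMeasure_le (fun n => (hpos _).le) hε.le fun S => ?_⟩
  exact (henergy s c hc S).trans <|
    (mul_le_mul_of_nonneg_left (sum_sq_mul_le hc hsum hbδ) hK).trans hδ_energy

end DyadicAverage

section Eraser

open AddCircle

variable {ν : Measure ℤ}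

/-- A function `Φ` on the circle for which multiplication of `G` by `1 - Φ` erases `G` near `q`,
leaves it unchanged off the ball of radius `ε`, never increases it by more than the factor
`1 + ε`, and moves its Fourier coefficients by at most `ε` in `L²(ν)`. -/
structure IsEraser (ν : Measure ℤ) (G : UnitAddCircle → ℝ) (q : UnitAddCircle) (ε : ℝ)
    (Φ : UnitAddCircle → ℝ) : Prop where
  measurable : Measurable Φ
  le_one : ∀ y, Φ y ≤ 1
  neg_le : ∀ y, -ε ≤ Φ y
  eventuallyEq_one : Φ =ᶠ[𝓝 q] 1
  eq_zero : ∀ y ∉ Metric.closedBall q ε, Φ y = 0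
  energy_le : eLpNorm (fourierCoeff fun y => ((G y * Φ y : ℝ) : ℂ)) 2 ν ≤ ENNReal.ofReal ε

lemma IsEraser.nonneg {G Φ : UnitAddCircle → ℝ} {q : UnitAddCircle} {ε : ℝ}
    (h : IsEraser ν G q ε Φ) : 0 ≤ ε := by
  by_contra! hε
  have hzero := h.eq_zero q (by simp only [Metric.closedBall_eq_empty.2 hε, Set.notMem_empty,
    not_false_eq_true])
  exact zero_ne_one (hzero.symm.trans h.eventuallyEq_one.eq_of_nhds)

lemma IsEraser.mono {G Φ : UnitAddCircle → ℝ} {q : UnitAddCircle} {ε ε' : ℝ}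
    (h : IsEraser ν G q ε Φ) (hε : ε ≤ ε') : IsEraser ν G q ε' Φ where
  measurable := h.measurable
  le_one := h.le_one
  neg_le y := (neg_le_neg hε).trans (h.neg_le y)
  eventuallyEq_one := h.eventuallyEq_one
  eq_zero y hy := h.eq_zero y fun hy' => hy (Metric.closedBall_subset_closedBall hε hy')
  energy_le := h.energy_le.trans (ENNReal.ofReal_le_ofReal hε)

lemma fourierCoeff_liftIoc_eq_fourier {u : ℝ → ℂ} (hu : ∀ x ∉ Set.Ioc (0 : ℝ) 1, u x = 0)
    (n : ℤ) : fourierCoeff (liftIoc 1 0 u) n = 𝓕 u (n : ℝ) := by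
  rw [fourierCoeff_liftIoc_eq, fourierCoeffOn_eq_integral, Real.fourier_real_eq_integral_exp_smul]
  simp only [fourier_coe_apply, zero_add, sub_zero, div_one, one_smul, Complex.ofReal_one]
  rw [intervalIntegral.integral_eq_integral_of_support_subset]
  · refine integral_congr_ae (.of_forall fun x => ?_)
    push_cast
    ring_nf
  · refine Function.support_subset_iff'.2 fun x hx => ?_
    rw [hu x hx, smul_zero]

lemma measurable_liftIoc {u : ℝ → ℝ} (hu : Measurable u) :
    Measurable (liftIoc (1 : ℝ) 0 u) :=
  (hu.comp measurable_subtype_coe).comp (measurableEquivIoc 1 0).measurable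

lemma liftIoc_eventuallyEq {u v : ℝ → ℝ} {x : ℝ} (hx : x ∈ Set.Ioo (0 : ℝ) 1) (h : u =ᶠ[𝓝 x] v) :
    liftIoc 1 0 u =ᶠ[𝓝 (x : UnitAddCircle)] liftIoc 1 0 v := by
  rw [EventuallyEq, QuotientAddGroup.nhds_eq, eventually_map]
  filter_upwards [h, Ioo_mem_nhds hx.1 hx.2] with t ht hmem
  have hmem' : t ∈ Set.Ioc (0 : ℝ) (0 + 1) := ⟨hmem.1, by linarith [hmem.2]⟩
  exact (liftIoc_coe_apply hmem').trans (ht.trans (liftIoc_coe_apply hmem').symm)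

lemma IsLocalizedCutoff.isEraser_liftIoc {g φ : ℝ → ℝ} {x₀ ε : ℝ}
    (h : IsLocalizedCutoff ν (fun x => (g x : ℂ)) x₀ ε φ) (hε₀ : 0 < ε) (hε : ε < x₀)
    (hε' : ε < 1 - x₀) : IsEraser ν (liftIoc 1 0 g) x₀ ε (liftIoc 1 0 φ) where
  measurable := measurable_liftIoc h.contDiff.continuous.measurable
  le_one _ := h.le_one _
  neg_le _ := h.neg_le _
  eventuallyEq_one := liftIoc_eventuallyEq ⟨by linarith, by linarith⟩ h.eventuallyEq_one
  eq_zero y hy := by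
    by_contra hne
    refine hy ?_
    rw [← coe_equivIoc (p := 1) (a := 0) (y := y), mem_closedBall_iff_norm, ← coe_sub]
    exact QuotientAddGroup.norm_mk_le_norm.trans (h.abs_sub_le _ hne)
  energy_le := by
    have hzero : ∀ x ∉ Set.Ioc (0 : ℝ) 1, φ x • (g x : ℂ) = 0 := by
      intro x hx
      by_contra hne
      have := abs_le.1 (h.abs_sub_le x fun h0 => hne (by rw [h0, zero_smul]))
      exact hx ⟨by linarith [this.1], by linarith [this.2]⟩
    have hlift : (fun y => ((liftIoc 1 0 g y * liftIoc 1 0 φ y : ℝ) : ℂ)) =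
        liftIoc (1 : ℝ) 0 fun x => φ x • (g x : ℂ) := by
      funext y
      rw [mul_comm, Complex.ofReal_mul]
      rfl
    rw [hlift, funext (fourierCoeff_liftIoc_eq_fourier hzero)]
    exact h.energy_le

lemma HasSmallCutoffs.exists_isEraser (hν : HasSmallCutoffs ν) {g : ℝ → ℝ}
    (hg : ContDiff ℝ ∞ g) {x₀ : ℝ} (hx₀ : x₀ ∈ Set.Ioo (0 : ℝ) 1) {ε : ℝ} (hε : 0 < ε) :
    ∃ φ, ContDiff ℝ ∞ φ ∧ IsEraser ν (liftIoc 1 0 g) x₀ ε (liftIoc 1 0 φ) := by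
  obtain ⟨h0, h1⟩ := hx₀
  obtain ⟨ρ, hρ, hρε⟩ := exists_between (lt_min hε (lt_min h0 (sub_pos.2 h1)))
  rw [lt_min_iff, lt_min_iff] at hρε
  obtain ⟨φ, hφ⟩ := hν (fun x => (g x : ℂ)) x₀ ρ (Complex.ofRealCLM.contDiff.comp hg) hρ
  exact ⟨φ, hφ.contDiff, (hφ.isEraser_liftIoc hρ hρε.2.1 hρε.2.2).mono hρε.1.le⟩

/-- A sequence of functions whose `k`-th member erases, near `q k` and at cost `ε k`, the partial
product `∏ i < k, (1 - Φ i)` left by its predecessors. -/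
def IsErasingSeq (ν : Measure ℤ) (q : ℕ → UnitAddCircle) (ε : ℕ → ℝ)
    (Φ : ℕ → UnitAddCircle → ℝ) : Prop :=
  ∀ k, IsEraser ν (fun y => ∏ i ∈ Finset.range k, (1 - Φ i y)) (q k) (ε k) (Φ k)

lemma HasSmallCutoffs.exists_isErasingSeq (hν : HasSmallCutoffs ν) {x : ℕ → ℝ}
    (hx : ∀ k, x k ∈ Set.Ioo (0 : ℝ) 1) {ε : ℕ → ℝ} (hε : ∀ k, 0 < ε k) :
    ∃ Φ, IsErasingSeq ν (fun k => (x k : UnitAddCircle)) ε Φ := by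
  choose! φ hφ_smooth hφ using fun (k : ℕ) (g : ℝ → ℝ) (hg : ContDiff ℝ ∞ g) =>
    hν.exists_isEraser hg (hx k) (hε k)
  let g : ℕ → ℝ → ℝ := Nat.rec 1 fun k gk t => gk t * (1 - φ k gk t)
  have hg (k : ℕ) : ContDiff ℝ ∞ (g k) := by
    induction k with
    | zero => exact contDiff_const
    | succ k ih => exact ih.mul (contDiff_const.sub (hφ_smooth k (g k) ih))
  have hlift (k : ℕ) (y : UnitAddCircle) :
      liftIoc 1 0 (g k) y = ∏ i ∈ Finset.range k, (1 - liftIoc 1 0 (φ i (g i)) y) := by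
    induction k with
    | zero => rfl
    | succ k ih => rw [Finset.prod_range_succ, ← ih]; rfl
  refine ⟨fun k => liftIoc 1 0 (φ k (g k)), fun k => ?_⟩
  rw [← funext (hlift k)]
  exact hφ k (g k) (hg k)

lemma exists_denseRange_coe_unitAddCircle :
    ∃ x : ℕ → ℝ, (∀ k, x k ∈ Set.Ioo (0 : ℝ) 1) ∧
      DenseRange fun k => (x k : UnitAddCircle) := by
  have : Nonempty (Set.Ioo (0 : ℝ) 1) := ⟨⟨1 / 2, by norm_num, by norm_num⟩⟩
  let d := TopologicalSpace.denseSeq (Set.Ioo (0 : ℝ) 1)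
  refine ⟨fun k => d k, fun k => (d k).2, ?_⟩
  have hdense : DenseRange fun t : Set.Ioo (0 : ℝ) 1 => ((t : ℝ) : UnitAddCircle) := by
    have himage := image_closure_subset_closure_image (AddCircle.continuous_mk' (1 : ℝ))
      (s := Set.Ioo 0 1)
    rw [closure_Ioo zero_ne_one] at himage
    have huniv := AddCircle.coe_image_Icc_eq (1 : ℝ) 0
    rw [zero_add] at huniv
    rw [DenseRange, dense_iff_closure_eq, ← Set.univ_subset_iff, ← huniv]
    exact himage.trans (closure_mono (Set.image_eq_range _ _).subset)
  exact hdense.comp (TopologicalSpace.denseRange_denseSeq _)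
    ((AddCircle.continuous_mk' 1).comp continuous_subtype_val)

end Eraser

section ErasingProduct

variable {ν : Measure ℤ} {q : ℕ → UnitAddCircle} {ε : ℕ → ℝ} {Φ : ℕ → UnitAddCircle → ℝ}

instance : IsProbabilityMeasure hm :=
  inferInstanceAs (IsProbabilityMeasure AddCircle.haarAddCircle)

lemma hm_closedBall_le (y : UnitAddCircle) (r : ℝ) :
    hm (Metric.closedBall y r) ≤ ENNReal.ofReal (2 * r) := by
  have hvolume : (volume : Measure UnitAddCircle) = hm := by
    rw [AddCircle.volume_eq_smul_haarAddCircle, ENNReal.ofReal_one, one_smul, hm]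
  rw [← hvolume, AddCircle.volume_closedBall]
  exact ENNReal.ofReal_le_ofReal (min_le_right _ _)

lemma tsum_hm_closedBall_le (hε0 : ∀ k, 0 ≤ ε k) (hε : Summable ε) :
    ∑' k, hm (Metric.closedBall (q k) (ε k)) ≤ ENNReal.ofReal (2 * ∑' k, ε k) := by
  rw [← tsum_mul_left, ENNReal.ofReal_tsum_of_nonneg (fun k => mul_nonneg zero_le_two (hε0 k))
    (hε.mul_left 2)]
  exact ENNReal.tsum_le_tsum fun k => hm_closedBall_le _ _

lemma interior_measSupport_eq_empty {ι : Type*} {f : UnitAddCircle → ℝ} {q : ι → UnitAddCircle}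
    (hq : DenseRange q) (hf : ∀ i, f =ᶠ[𝓝 (q i)] 0) : interior (measSupport f) = ∅ := by
  rw [measSupport, interior_compl, Set.compl_empty_iff, ← dense_iff_closure_eq]
  refine hq.mono ?_
  rintro _ ⟨i, rfl⟩
  obtain ⟨U, hU, hU_open, hqU⟩ := eventually_nhds_iff.1 (hf i)
  exact ⟨U, ⟨hU_open, .of_forall hU⟩, hqU⟩

lemma tendsto_fourierCoeff_of_norm_le {F : ℕ → UnitAddCircle → ℂ} {f : UnitAddCircle → ℂ} {B : ℝ}
    (hF : ∀ k, AEStronglyMeasurable (F k) hm) (hB : ∀ k y, ‖F k y‖ ≤ B)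
    (hlim : ∀ᵐ y ∂hm, Tendsto (fun k => F k y) atTop (𝓝 (f y))) (n : ℤ) :
    Tendsto (fun k => fourierCoeff (F k) n) atTop (𝓝 (fourierCoeff f n)) := by
  refine tendsto_integral_of_dominated_convergence (fun _ => B)
    (fun k => (map_continuous (fourier (-n))).aestronglyMeasurable.smul (hF k))
    (integrable_const B) (fun k => .of_forall fun y => ?_) (hlim.mono fun y hy => hy.const_smul _)
  rw [norm_smul, fourier_apply, Circle.norm_coe, one_mul]
  exact hB k y

namespace IsErasingSeq

lemma prod_nonneg (h : IsErasingSeq ν q ε Φ) (k : ℕ) (y : UnitAddCircle) :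
    0 ≤ ∏ i ∈ Finset.range k, (1 - Φ i y) :=
  Finset.prod_nonneg fun i _ => sub_nonneg.2 ((h i).le_one y)

lemma prod_le_exp_tsum (h : IsErasingSeq ν q ε Φ) (hε : Summable ε) (k : ℕ) (y : UnitAddCircle) :
    ∏ i ∈ Finset.range k, (1 - Φ i y) ≤ Real.exp (∑' i, ε i) :=
  calc ∏ i ∈ Finset.range k, (1 - Φ i y) ≤ ∏ i ∈ Finset.range k, (1 + ε i) :=
        Finset.prod_le_prod (fun i _ => sub_nonneg.2 ((h i).le_one y))
          fun i _ => by linarith [(h i).neg_le y]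
    _ ≤ Real.exp (∑ i ∈ Finset.range k, ε i) :=
        Real.prod_one_add_le_exp_sum _ fun i => (h i).nonneg
    _ ≤ Real.exp (∑' i, ε i) :=
        Real.exp_le_exp.2 (hε.sum_le_tsum _ fun i _ => (h i).nonneg)

lemma measurable_prod (h : IsErasingSeq ν q ε Φ) (k : ℕ) :
    Measurable fun y => ∏ i ∈ Finset.range k, (1 - Φ i y) :=
  Finset.measurable_prod _ fun i _ => measurable_const.sub (h i).measurable

lemma ae_tendsto_prod (h : IsErasingSeq ν q ε Φ) (hε : Summable ε) :
    ∀ᵐ y ∂hm, Tendsto (fun k => ∏ i ∈ Finset.range k, (1 - Φ i y)) atTop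
      (𝓝 (∏' i, (1 - Φ i y))) := by
  have hsum := (tsum_hm_closedBall_le (q := q) (fun k => (h k).nonneg) hε).trans_lt
    ENNReal.ofReal_lt_top
  filter_upwards [ae_eventually_notMem hsum.ne] with y hy
  have hfinite : (Function.mulSupport fun i => 1 - Φ i y).Finite := by
    rw [← Nat.cofinite_eq_atTop] at hy
    refine hy.subset fun i hi hmem => hi ?_
    exact (congrArg (1 - ·) ((h i).eq_zero y hmem)).trans (sub_zero 1)
  exact (multipliable_of_hasFiniteMulSupport hfinite).tendsto_prod_tprod_nat

lemma ae_tprod_mem_Icc (h : IsErasingSeq ν q ε Φ) (hε : Summable ε) :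
    ∀ᵐ y ∂hm, ∏' i, (1 - Φ i y) ∈ Set.Icc 0 (Real.exp (∑' i, ε i)) := by
  filter_upwards [h.ae_tendsto_prod hε] with y hy
  exact isClosed_Icc.mem_of_tendsto hy
    (.of_forall fun k => ⟨h.prod_nonneg k y, h.prod_le_exp_tsum hε k y⟩)

lemma memLp_top_tprod (h : IsErasingSeq ν q ε Φ) (hε : Summable ε) :
    MemLp (fun y => ∏' i, (1 - Φ i y)) ⊤ hm := by
  refine memLp_top_of_bound (aestronglyMeasurable_of_tendsto_ae atTop
    (fun k => (h.measurable_prod k).aestronglyMeasurable) (h.ae_tendsto_prod hε))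
    (Real.exp (∑' i, ε i)) ?_
  filter_upwards [h.ae_tprod_mem_Icc hε] with y hy
  rw [Real.norm_of_nonneg hy.1]
  exact hy.2

lemma tprod_eventuallyEq_zero (h : IsErasingSeq ν q ε Φ) (k : ℕ) :
    (fun y => ∏' i, (1 - Φ i y)) =ᶠ[𝓝 (q k)] 0 := by
  filter_upwards [(h k).eventuallyEq_one] with y hy
  exact tprod_of_exists_eq_zero ⟨k, sub_eq_zero.2 hy.symm⟩

lemma integral_tprod_pos (h : IsErasingSeq ν q ε Φ) (hε : Summable ε) (hε_lt : ∑' i, ε i < 1 / 2) :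
    0 < ∫ y, ∏' i, (1 - Φ i y) ∂hm := by
  rw [integral_pos_iff_support_of_nonneg_ae ((h.ae_tprod_mem_Icc hε).mono fun y hy => hy.1)
    ((h.memLp_top_tprod hε).integrable le_top)]
  have hballs : hm (⋃ k, Metric.closedBall (q k) (ε k)) < 1 :=
    calc hm (⋃ k, Metric.closedBall (q k) (ε k)) ≤ ENNReal.ofReal (2 * ∑' k, ε k) :=
          (measure_iUnion_le _).trans (tsum_hm_closedBall_le (fun k => (h k).nonneg) hε)
      _ < 1 := by rw [ENNReal.ofReal_lt_one]; linarith
  have hcompl : (⋃ k, Metric.closedBall (q k) (ε k))ᶜ ⊆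
      Function.support fun y => ∏' i, (1 - Φ i y) := by
    intro y hy
    rw [Set.mem_compl_iff, Set.mem_iUnion, not_exists] at hy
    simp only [Function.mem_support, (h _).eq_zero y (hy _), sub_zero, tprod_one, ne_eq,
      one_ne_zero, not_false_eq_true]
  refine (pos_iff_ne_zero.2 fun hzero => hballs.ne ?_).trans_le (measure_mono hcompl)
  exact (prob_compl_eq_zero_iff (.iUnion fun k => Metric.isClosed_closedBall.measurableSet)).1 hzero

lemma fourierCoeff_prod_succ (h : IsErasingSeq ν q ε Φ) (hε : Summable ε) (k : ℕ) :
    fourierCoeff (fun y => ((∏ i ∈ Finset.range (k + 1), (1 - Φ i y) : ℝ) : ℂ)) =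
      fourierCoeff (fun y => ((∏ i ∈ Finset.range k, (1 - Φ i y) : ℝ) : ℂ)) -
        fourierCoeff fun y => (((∏ i ∈ Finset.range k, (1 - Φ i y)) * Φ k y : ℝ) : ℂ) := by
  have h_int (k : ℕ) :
      Integrable (fun y => ((∏ i ∈ Finset.range k, (1 - Φ i y) : ℝ) : ℂ)) hm :=
    (Integrable.of_mem_Icc 0 (Real.exp (∑' i, ε i)) (h.measurable_prod k).aemeasurable
      (.of_forall fun y => ⟨h.prod_nonneg k y, h.prod_le_exp_tsum hε k y⟩)).ofReal
  have hsub : (fun y => (((∏ i ∈ Finset.range k, (1 - Φ i y)) * Φ k y : ℝ) : ℂ)) =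
      (fun y => ((∏ i ∈ Finset.range k, (1 - Φ i y) : ℝ) : ℂ)) -
        fun y => ((∏ i ∈ Finset.range (k + 1), (1 - Φ i y) : ℝ) : ℂ) := by
    funext y
    rw [Pi.sub_apply, Finset.prod_range_succ]
    push_cast
    ring
  rw [hsub, eq_sub_iff_add_eq, ← fourierCoeff.add (h_int (k + 1)) ((h_int k).sub (h_int (k + 1))),
    add_sub_cancel]

lemma eLpNorm_fourierCoeff_prod_le (h : IsErasingSeq ν q ε Φ) (hε : Summable ε) (k : ℕ) :
    eLpNorm (fourierCoeff fun y => ((∏ i ∈ Finset.range k, (1 - Φ i y) : ℝ) : ℂ)) 2 ν ≤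
      eLpNorm (Pi.single 0 1 : ℤ → ℂ) 2 ν + ∑ i ∈ Finset.range k, ENNReal.ofReal (ε i) := by
  induction k with
  | zero =>
    have hone : (fun _ : UnitAddCircle => ((1 : ℝ) : ℂ)) = fourier 0 := by
      funext y
      rw [fourier_zero, Complex.ofReal_one]
    simp only [Finset.range_zero, Finset.prod_empty, Finset.sum_empty, add_zero, hone,
      fourierCoeff_fourier, le_refl]
  | succ k ih =>
    rw [h.fourierCoeff_prod_succ hε, Finset.sum_range_succ, ← add_assoc]
    exact (eLpNorm_sub_le .of_discrete .of_discrete one_le_two).trans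
      (add_le_add ih (h k).energy_le)

lemma eLpNorm_fourierCoeff_tprod_le (h : IsErasingSeq ν q ε Φ) (hε : Summable ε) :
    eLpNorm (fourierCoeff fun y => ((∏' i, (1 - Φ i y) : ℝ) : ℂ)) 2 ν ≤
      eLpNorm (Pi.single 0 1 : ℤ → ℂ) 2 ν + ∑' i, ENNReal.ofReal (ε i) := by
  have hlim (n : ℤ) := tendsto_fourierCoeff_of_norm_le
    (F := fun k y => ((∏ i ∈ Finset.range k, (1 - Φ i y) : ℝ) : ℂ)) (B := Real.exp (∑' i, ε i))
    (fun k => (Complex.measurable_ofReal.comp (h.measurable_prod k)).aestronglyMeasurable)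
    (fun k y => by
      rw [Complex.norm_real, Real.norm_of_nonneg (h.prod_nonneg k y)]
      exact h.prod_le_exp_tsum hε k y)
    ((h.ae_tendsto_prod hε).mono fun y hy => (Complex.continuous_ofReal.tendsto _).comp hy) n
  refine (Lp.eLpNorm_lim_le_liminf_eLpNorm (fun _ => .of_discrete) _
    (.of_forall hlim)).trans (liminf_le_of_le (by isBoundedDefault) fun b hb => ?_)
  obtain ⟨k, hk⟩ := hb.exists
  exact hk.trans ((h.eLpNorm_fourierCoeff_prod_le hε k).trans
    (add_le_add_right (ENNReal.sum_le_tsum _) _))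

lemma eLpNorm_fourierCoeff_tprod_ne_top (h : IsErasingSeq ν q ε Φ) (hε : Summable ε)
    (hν : ν {0} ≠ ⊤) :
    eLpNorm (fourierCoeff fun y => ((∏' i, (1 - Φ i y) : ℝ) : ℂ)) 2 ν ≠ ⊤ := by
  have hsingle : MemLp (Pi.single 0 1 : ℤ → ℂ) 2 ν := by
    have hindicator := Set.indicator_singleton (0 : ℤ) (1 : ℤ → ℂ)
    rw [Pi.one_apply] at hindicator
    rw [← hindicator]
    exact memLp_indicator_const 2 (.singleton 0) 1 (.inr hν)
  exact ((h.eLpNorm_fourierCoeff_tprod_le hε).trans_lt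
    (ENNReal.add_lt_top.2 ⟨hsingle.2, hε.tsum_ofReal_lt_top⟩)).ne

end IsErasingSeq

end ErasingProduct

/-- if `Σ 1/λ_n = ∞` and `(λ_n)` is doubling, there is a nonnegative
`f ∈ L^∞(𝕋)` with positive integral whose measure `f·m` has support with empty interior,
and with `Σ_{n ∈ ℤ} |f̂(n)|² λ_{|n|} < ∞`. -/
theorem statement2 (lam : ℕ → ℝ) (hpos : ∀ n, 0 < lam n)
    (hdiv : ¬ Summable (fun n : ℕ => 1 / lam (n + 1)))
    (hdbl : ∃ C : ℝ, 1 < C ∧ ∀ n k : ℕ, 1 ≤ n → n ≤ k → k ≤ 2 * n →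
      C⁻¹ * lam n ≤ lam k ∧ lam k ≤ C * lam n) :
    ∃ f : UnitAddCircle → ℝ,
      MemLp f ⊤ hm ∧
      (∀ᵐ x ∂hm, 0 ≤ f x) ∧
      0 < ∫ x, f x ∂hm ∧
      interior (measSupport f) = ∅ ∧
      Summable (fun n : ℤ =>
        ‖fourierCoeff (fun x => (f x : ℂ)) n‖ ^ 2 * lam n.natAbs) := by
  obtain ⟨C, hC, hlam⟩ := hdbl
  have hdoubling : IsDoubling lam C := isDoubling_of_le_of_le (zero_lt_one.trans hC) hlam
  have hcutoffs := hdoubling.hasSmallCutoffs hC.le hpos hdiv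
  obtain ⟨x, hx, hx_dense⟩ := exists_denseRange_coe_unitAddCircle
  have hε : HasSum (fun k : ℕ => 1 / 8 * (1 / 2 : ℝ) ^ k) (1 / 8 * 2) :=
    hasSum_geometric_two.mul_left _
  obtain ⟨Φ, hΦ⟩ := hcutoffs.exists_isErasingSeq hx (ε := fun k => 1 / 8 * (1 / 2 : ℝ) ^ k)
    fun k => by positivity
  refine ⟨fun y => ∏' k, (1 - Φ k y), hΦ.memLp_top_tprod hε.summable,
    (hΦ.ae_tprod_mem_Icc hε.summable).mono fun y hy => hy.1,
    hΦ.integral_tprod_pos hε.summable (by rw [hε.tsum_eq]; norm_num),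
    interior_measSupport_eq_empty hx_dense hΦ.tprod_eventuallyEq_zero,
    summable_of_eLpNorm_two_weightMeasure_ne_top (fun n => (hpos _).le) ?_⟩
  refine hΦ.eLpNorm_fourierCoeff_tprod_ne_top hε.summable ?_
  rw [weightMeasure_singleton]
  exact ENNReal.ofReal_ne_top
end
end

section
/- There exists a nondecreasing sequence of positive real numbers (λ_n)_{n≥0} with λ_n → +∞ and Σ_{n≥1} 1/λ_n = +∞, such that every f ∈ L²(𝕋, m) that is not m-a.e. zero and satisfies Σ_{n∈ℤ} |f̂(n)|² λ_{|n|} < ∞ has support of the measure f·m equal to all of 𝕋 (equivalently: f is not m-a.e. zero on any nonempty open subset of 𝕋). -/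
/-!
Fix a nonempty open set `U`. The subspace `V` of `L²` functions vanishing on `U` is closed, and it
contains no nonzero trigonometric polynomial, since such a polynomial has finitely many zeros. The
trigonometric polynomials of degree at most `N` form a finite-dimensional space, so there is a
constant `C = C(U, N)` with `‖f‖ ≤ C ‖f - P_N f‖` for all `f ∈ V`, where `P_N f` is the `N`-th
Fourier partial sum. As `λ` is nondecreasing, `λ_{N+1} ‖f - P_N f‖² ≤ ∑ |f̂(n)|² λ_{|n|} =: A`, and
hence `λ_{N+1} ≥ N C²` implies `N ‖f‖² ≤ A`. If this happens for infinitely many `N`, then `f = 0`.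

It is enough to treat the sets `U` of a countable base, and a diagonal argument replaces the
constants `C(U, N)` by one sequence. A slow weight can exceed any prescribed sequence infinitely
often: let `λ` jump at sparse places only and stay constant in between for so long that each block
of constancy contributes at least `1` to `∑ 1 / λ_n`.
-/

open MeasureTheory Filter Topology

noncomputable section

section SlowWeights

open Finset (range)

/-- A nondecreasing sequence of positive weights tending to infinity so slowly that the series of
its inverses diverges. -/
structure IsSlowWeight (lam : ℕ → ℝ) : Prop where
  pos (n : ℕ) : 0 < lam n
  monotone : Monotone lam
  tendsto_atTop : Tendsto lam atTop atTop
  not_summable_one_div : ¬ Summable fun n ↦ 1 / lam (n + 1)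

theorem exists_strictMono_le_sub (g : ℕ → ℝ) :
    ∃ u : ℕ → ℕ, StrictMono u ∧ ∀ k, g (u k) ≤ u (k + 1) - u k := by
  set u : ℕ → ℕ := fun k ↦ (fun n ↦ n + (⌈g n⌉₊ + 1))^[k] 0 with hu
  have hsucc (k : ℕ) : u (k + 1) = u k + (⌈g (u k)⌉₊ + 1) := by
    simp only [hu, Function.iterate_succ_apply']
  refine ⟨u, strictMono_nat_of_lt_succ fun k ↦ by have := hsucc k; lia, fun k ↦ ?_⟩
  have := Nat.le_ceil (g (u k))
  rw [hsucc]
  push_cast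
  linarith

theorem not_summable_one_div_of_le_sub {a : ℕ → ℝ} (ha0 : ∀ n, 0 < a n) (ha : Monotone a)
    {u : ℕ → ℕ} (hu : ∀ k, a (u (k + 1)) ≤ u (k + 1) - u k) : ¬ Summable fun n ↦ 1 / a n := by
  intro hsum
  have hu_mono : StrictMono u := strictMono_nat_of_lt_succ fun k ↦ by
    exact_mod_cast sub_pos.mp ((ha0 _).trans_le (hu k))
  have one_le_block (k : ℕ) : 1 ≤ (u (k + 2) - u (k + 1)) • (1 / a (u (k + 2))) := by
    rw [nsmul_eq_mul, Nat.cast_sub (hu_mono.monotone (by lia)), mul_one_div,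
      one_le_div (ha0 _)]
    exact hu (k + 1)
  have le_tsum (n : ℕ) : (n : ℝ) ≤ ∑' i, 1 / a i :=
    calc (n : ℝ) = ∑ _k ∈ range n, (1 : ℝ) := by simp
      _ ≤ ∑ k ∈ range n, (u (k + 2) - u (k + 1)) • (1 / a (u (k + 2))) :=
        Finset.sum_le_sum fun k _ ↦ one_le_block k
      _ ≤ ∑ i ∈ Finset.Ico (u 1 + 1) (u (n + 1) + 1), 1 / a i :=
        Finset.sum_schlomilch_le' (u := fun k ↦ u (k + 1))
          (fun _ _ _ h ↦ one_div_le_one_div_of_le (ha0 _) (ha h))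
          (fun k ↦ (Nat.zero_le _).trans_lt (hu_mono k.succ_pos))
          (fun _ _ h ↦ hu_mono.monotone (Nat.succ_le_succ h)) n
      _ ≤ ∑' i, 1 / a i := hsum.sum_le_tsum _ fun i _ ↦ (one_div_pos.mpr (ha0 i)).le
  obtain ⟨n, hn⟩ := exists_nat_gt (∑' i, 1 / a i)
  exact (le_tsum n).not_gt hn

/-- The step function on `ℕ` that starts at `1` and, for each `m ∈ S`, jumps by `c m` between `m`
and `m + 1`. With sparse `S` and large jumps it yields slow weights with prescribed large values. -/
def stepWeight (S : Set ℕ) (c : ℕ → ℝ) (n : ℕ) : ℝ :=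
  1 + ∑ m ∈ range n, S.indicator c m

section stepWeight

variable {c : ℕ → ℝ}

theorem monotone_stepWeight (hc : 0 ≤ c) (S : Set ℕ) : Monotone (stepWeight S c) :=
  monotone_nat_of_le_succ fun n ↦ by
    simpa only [stepWeight, Finset.sum_range_succ, add_le_add_iff_left, le_add_iff_nonneg_right]
      using Set.indicator_nonneg (fun m _ ↦ hc m) n

theorem one_le_stepWeight (hc : 0 ≤ c) (S : Set ℕ) (n : ℕ) : 1 ≤ stepWeight S c n := by
  simpa [stepWeight] using monotone_stepWeight hc S n.zero_le

theorem le_stepWeight_succ (hc : 0 ≤ c) {S : Set ℕ} {n : ℕ} (hn : n ∈ S) :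
    c n ≤ stepWeight S c (n + 1) := by
  have h := one_le_stepWeight hc S n
  simp only [stepWeight, Finset.sum_range_succ, Set.indicator_of_mem hn] at h ⊢
  linarith

theorem stepWeight_range_le (hc : 0 ≤ c) {u : ℕ → ℕ} (hu : StrictMono u) (k : ℕ) :
    stepWeight (Set.range u) c (u (k + 1)) ≤ 1 + ∑ m ∈ range (u k + 1), c m := by
  have indicator_eq_zero : ∀ m ∈ range (u (k + 1)), m ∉ range (u k + 1) →
      (Set.range u).indicator c m = 0 := by
    rintro m hm hm'
    refine Set.indicator_of_notMem ?_ c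
    rintro ⟨j, rfl⟩
    simp only [Finset.mem_range, hu.lt_iff_lt, Nat.lt_succ_iff, hu.le_iff_le] at hm hm'
    exact hm' hm
  rw [stepWeight, ← Finset.sum_subset (Finset.range_mono (hu k.lt_succ_self)) indicator_eq_zero]
  gcongr with m
  exact Set.indicator_le_self' (fun _ _ ↦ hc m) m

end stepWeight

theorem exists_isSlowWeight_frequently_le (Φ : ℕ → ℝ) :
    ∃ lam, IsSlowWeight lam ∧ ∃ᶠ N in atTop, Φ N ≤ lam (N + 1) := by
  set c : ℕ → ℝ := fun m ↦ |Φ m| + m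
  have hc : 0 ≤ c := fun m ↦ by positivity
  obtain ⟨u, hu, hgap⟩ := exists_strictMono_le_sub fun n ↦ 1 + ∑ m ∈ range (n + 1), c m
  set lam := stepWeight (Set.range u) c
  have lam_pos (n : ℕ) : 0 < lam n := one_pos.trans_le (one_le_stepWeight hc _ n)
  have lam_mono : Monotone lam := monotone_stepWeight hc _
  have c_le_lam (k : ℕ) : c (u k) ≤ lam (u k + 1) := le_stepWeight_succ hc ⟨k, rfl⟩
  refine ⟨lam, ⟨lam_pos, lam_mono, ?_, ?_⟩, ?_⟩
  · refine lam_mono.tendsto_atTop_atTop fun B ↦ ?_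
    obtain ⟨n, hn⟩ := exists_nat_ge B
    have n_le : (n : ℝ) ≤ u n := mod_cast hu.le_apply
    have un_le : (u n : ℝ) ≤ c (u n) := le_add_of_nonneg_left (abs_nonneg _)
    exact ⟨u n + 1, hn.trans (n_le.trans (un_le.trans (c_le_lam n)))⟩
  · rw [summable_nat_add_iff 1 (f := fun n ↦ 1 / lam n)]
    exact not_summable_one_div_of_le_sub lam_pos lam_mono fun k ↦
      (stepWeight_range_le hc hu k).trans (hgap k)
  · refine frequently_atTop.mpr fun M ↦ ⟨u M, hu.le_apply, ?_⟩
    calc Φ (u M) ≤ |Φ (u M)| := le_abs_self _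
      _ ≤ c (u M) := le_add_of_nonneg_right (Nat.cast_nonneg _)
      _ ≤ lam (u M + 1) := c_le_lam M

theorem exists_forall_eventually_le {κ : Type*} [Countable κ] (Φ : κ → ℕ → ℝ) :
    ∃ Ψ : ℕ → ℝ, ∀ k, ∀ᶠ N in atTop, Φ k N ≤ Ψ N := by
  cases isEmpty_or_nonempty κ
  · exact ⟨0, isEmptyElim⟩
  obtain ⟨e, he⟩ := exists_surjective_nat κ
  refine ⟨fun N ↦ partialSups (fun j ↦ Φ (e j) N) N, he.forall.mpr fun j ↦ ?_⟩
  filter_upwards [eventually_ge_atTop j] with N hN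
  exact le_partialSups_of_le (fun j ↦ Φ (e j) N) hN

end SlowWeights

theorem exists_norm_le_mul_norm_sub {𝕜 E : Type*} [NontriviallyNormedField 𝕜] [CompleteSpace 𝕜]
    [NormedAddCommGroup E] [NormedSpace 𝕜 E] {V W : Submodule 𝕜 E} [FiniteDimensional 𝕜 W]
    (hV : IsClosed (V : Set E)) (hVW : Disjoint V W) :
    ∃ C : ℝ, ∀ v ∈ V, ∀ w ∈ W, ‖v‖ ≤ C * ‖v - w‖ := by
  have hker : (V.mkQ.domRestrict W).ker = ⊥ := by
    rw [LinearMap.ker_eq_bot, LinearMap.injective_domRestrict_iff, V.ker_mkQ]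
    exact hVW.symm
  obtain ⟨K, -, hK⟩ := LinearMap.exists_antilipschitzWith _ hker
  refine ⟨1 + K, fun v hv w hw ↦ ?_⟩
  have norm_w_le : ‖w‖ ≤ K * ‖v - w‖ :=
    calc ‖w‖ ≤ K * ‖V.mkQ w‖ := hK.le_mul_norm (map_zero _) ⟨w, hw⟩
      _ = K * ‖V.mkQ (v - w)‖ := by
        rw [map_sub, Submodule.mkQ_apply V v, (Submodule.Quotient.mk_eq_zero V).mpr hv, zero_sub,
          norm_neg]
      _ ≤ K * ‖v - w‖ := by gcongr; exact Submodule.Quotient.norm_mk_le V _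
  calc ‖v‖ ≤ ‖v - w‖ + ‖w‖ := by simpa using norm_add_le (v - w) w
    _ ≤ ‖v - w‖ + K * ‖v - w‖ := by gcongr
    _ = (1 + K) * ‖v - w‖ := by ring

section HilbertBasis

variable {ι 𝕜 E : Type*} [RCLike 𝕜] [NormedAddCommGroup E] [InnerProductSpace 𝕜 E]
  (b : HilbertBasis ι 𝕜 E)

theorem hasSum_norm_repr_sq (x : E) : HasSum (fun i ↦ ‖b.repr x i‖ ^ 2) (‖x‖ ^ 2) := by
  simpa using lp.hasSum_norm (p := 2) (by norm_num) (b.repr x)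

theorem repr_sub_sum_repr_smul [DecidableEq ι] (x : E) (s : Finset ι) (j : ι) :
    b.repr (x - ∑ i ∈ s, b.repr x i • b i) j = if j ∈ s then 0 else b.repr x j := by
  simp only [map_sub, map_sum, map_smul, b.repr_self, lp.coeFn_sub, lp.coeFn_sum, lp.coeFn_smul,
    lp.coeFn_single, Pi.sub_apply, Pi.smul_apply, Finset.sum_apply, Pi.single_apply, smul_eq_mul,
    mul_ite, mul_one, mul_zero, Finset.sum_ite_eq]
  split_ifs <;> simp

theorem mul_norm_sub_sum_repr_smul_sq_le {x : E} {w : ι → ℝ} (hw : ∀ i, 0 ≤ w i)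
    (hx : Summable fun i ↦ ‖b.repr x i‖ ^ 2 * w i) {s : Finset ι} {L : ℝ}
    (hL : ∀ i ∉ s, L ≤ w i) :
    L * ‖x - ∑ i ∈ s, b.repr x i • b i‖ ^ 2 ≤ ∑' i, ‖b.repr x i‖ ^ 2 * w i := by
  classical
  refine hasSum_le (fun j ↦ ?_) ((hasSum_norm_repr_sq b _).mul_left L) hx.hasSum
  rw [repr_sub_sum_repr_smul, mul_comm]
  split_ifs with hj
  · simpa using mul_nonneg (sq_nonneg _) (hw j)
  · gcongr
    exact hL j hj

theorem exists_isSlowWeight_forall_mem_eq_zero {κ : Type*} [Countable κ] {d : ι → ℕ}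
    (hd : Tendsto d cofinite atTop) {V : κ → Submodule 𝕜 E}
    (hV : ∀ k, IsClosed (V k : Set E))
    (hVb : ∀ k, Disjoint (V k) (Submodule.span 𝕜 (Set.range b))) :
    ∃ lam, IsSlowWeight lam ∧ ∀ x, Summable (fun i ↦ ‖b.repr x i‖ ^ 2 * lam (d i)) →
      ∀ k, x ∈ V k → x = 0 := by
  have finite_le (N : ℕ) : {i | d i ≤ N}.Finite := by
    simpa using hd.eventually (eventually_gt_atTop N)
  set s : ℕ → Finset ι := fun N ↦ (finite_le N).toFinset with hs
  have exists_bound (k : κ) (N : ℕ) : ∃ C : ℝ, ∀ v ∈ V k,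
      ∀ w ∈ Submodule.span 𝕜 (b '' s N), ‖v‖ ≤ C * ‖v - w‖ := by
    have := FiniteDimensional.span_of_finite 𝕜 ((s N).finite_toSet.image b)
    exact exists_norm_le_mul_norm_sub (hV k)
      ((hVb k).mono_right (Submodule.span_mono (Set.image_subset_range _ _)))
  choose C hC using exists_bound
  obtain ⟨Ψ, hΨ⟩ := exists_forall_eventually_le fun k N ↦ N * C k N ^ 2
  obtain ⟨lam, hlam, hlarge⟩ := exists_isSlowWeight_frequently_le Ψ
  refine ⟨lam, hlam, fun x hx k hxk ↦ ?_⟩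
  set A := ∑' i, ‖b.repr x i‖ ^ 2 * lam (d i)
  have mul_norm_sq_le {N : ℕ} (hN : N * C k N ^ 2 ≤ lam (N + 1)) : N * ‖x‖ ^ 2 ≤ A := by
    set P := ∑ i ∈ s N, b.repr x i • b i
    have hP : P ∈ Submodule.span 𝕜 (b '' s N) := Submodule.sum_mem _ fun i hi ↦
      Submodule.smul_mem _ _ (Submodule.subset_span ⟨i, hi, rfl⟩)
    calc N * ‖x‖ ^ 2 ≤ N * (C k N * ‖x - P‖) ^ 2 := by gcongr; exact hC k N x hxk P hP
      _ = N * C k N ^ 2 * ‖x - P‖ ^ 2 := by ring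
      _ ≤ lam (N + 1) * ‖x - P‖ ^ 2 := by gcongr
      _ ≤ A := mul_norm_sub_sum_repr_smul_sq_le b (fun i ↦ (hlam.pos _).le) hx
        fun i hi ↦ hlam.monotone (by simpa [hs] using hi)
  by_contra hx0
  have eventually_lt : ∀ᶠ N : ℕ in atTop, A < N * ‖x‖ ^ 2 :=
    (tendsto_natCast_atTop_atTop.atTop_mul_const (by positivity)).eventually_gt_atTop A
  obtain ⟨N, hΨN, hΦN, hAN⟩ := (hlarge.and_eventually ((hΨ k).and eventually_lt)).exists
  exact (mul_norm_sq_le (hΦN.trans hΨN)).not_gt hAN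

end HilbertBasis

section vanishingOn

variable {X 𝕜 F : Type*} [MeasurableSpace X] [NormedRing 𝕜] [NormedAddCommGroup F]
  [Module 𝕜 F] [IsBoundedSMul 𝕜 F]

variable (𝕜 F) in
/-- The subspace of `Lᵖ` consisting of the functions that vanish almost everywhere on `U`. -/
def vanishingOn (μ : Measure X) (p : ENNReal) [Fact (1 ≤ p)] (U : Set X) :
    Submodule 𝕜 (Lp F p μ) :=
  (LpToLpRestrictCLM X F 𝕜 μ p U).ker

variable {μ : Measure X} {p : ENNReal} [Fact (1 ≤ p)]

theorem mem_vanishingOn {U : Set X} {f : Lp F p μ} :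
    f ∈ vanishingOn 𝕜 F μ p U ↔ f =ᵐ[μ.restrict U] 0 := by
  have coeFn_restrict := LpToLpRestrictCLM_coeFn 𝕜 U f
  change LpToLpRestrictCLM X F 𝕜 μ p U f = 0 ↔ _
  rw [Lp.eq_zero_iff_ae_eq_zero]
  exact ⟨coeFn_restrict.symm.trans, coeFn_restrict.trans⟩

theorem isClosed_vanishingOn (U : Set X) : IsClosed (vanishingOn 𝕜 F μ p U : Set (Lp F p μ)) :=
  ContinuousLinearMap.isClosed_ker _

end vanishingOn

open scoped LaurentPolynomial in
theorem laurentPolynomial_eq_zero_of_infinite_eval₂_eq_zero {R : Type*} [CommRing R] [IsDomain R]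
    {f : R[T;T⁻¹]} {S : Set Rˣ} (hS : S.Infinite)
    (hf : ∀ x ∈ S, LaurentPolynomial.eval₂ (RingHom.id R) x f = 0) : f = 0 := by
  obtain ⟨n, q, hq⟩ := f.exists_T_pow
  have hq0 : q = 0 := by
    refine q.eq_zero_of_infinite_isRoot ((hS.image Units.val_injective.injOn).mono ?_)
    rintro _ ⟨x, hx, rfl⟩
    have := congrArg (LaurentPolynomial.eval₂ (RingHom.id R) x) hq
    rwa [LaurentPolynomial.eval₂_toLaurent, map_mul, hf x hx, zero_mul] at this
  rw [hq0, map_zero, eq_comm] at hq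
  exact (LaurentPolynomial.isUnit_T n).mul_left_eq_zero.mp hq

section Fourier

variable {T : ℝ}

open LaurentPolynomial in
theorem exists_laurentPolynomial_eval₂_eq {p : C(AddCircle T, ℂ)}
    (hp : p ∈ Submodule.span ℂ (Set.range (fourier (T := T)))) :
    ∃ f : ℂ[T;T⁻¹], ∀ x, p x = eval₂ (RingHom.id ℂ) (Circle.toUnits x.toCircle) f := by
  induction hp using Submodule.span_induction with
  | mem p hp =>
    obtain ⟨n, rfl⟩ := hp
    exact ⟨.T n, fun x ↦ by simp [AddCircle.toCircle_zsmul]⟩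
  | zero => exact ⟨0, by simp⟩
  | add p q _ _ hp hq =>
    obtain ⟨f, hf⟩ := hp
    obtain ⟨g, hg⟩ := hq
    exact ⟨f + g, by simp [hf, hg]⟩
  | smul a p _ hp =>
    obtain ⟨f, hf⟩ := hp
    exact ⟨C a * f, by simp [hf]⟩

theorem eq_zero_of_mem_span_fourier_of_infinite_zeros (hT : T ≠ 0) {p : C(AddCircle T, ℂ)}
    (hp : p ∈ Submodule.span ℂ (Set.range (fourier (T := T)))) {S : Set (AddCircle T)}
    (hS : S.Infinite) (hpS : ∀ x ∈ S, p x = 0) : p = 0 := by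
  obtain ⟨f, hf⟩ := exists_laurentPolynomial_eval₂_eq hp
  have toUnits_toCircle_injective :
      Function.Injective fun x : AddCircle T ↦ Circle.toUnits x.toCircle := fun x y hxy ↦
    AddCircle.injective_toCircle hT (Circle.ext (congrArg Units.val hxy))
  have hf0 : f = 0 := by
    refine laurentPolynomial_eq_zero_of_infinite_eval₂_eq_zero
      (hS.image toUnits_toCircle_injective.injOn) ?_
    rintro _ ⟨x, hx, rfl⟩
    rw [← hf, hpS x hx]
  ext x
  rw [hf, hf0, map_zero, ContinuousMap.zero_apply]

variable [hT : Fact (0 < T)]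

theorem infinite_of_isOpen_addCircle {U : Set (AddCircle T)} (hU : IsOpen U) (hne : U.Nonempty) :
    U.Infinite := by
  have := (Set.Ico_infinite (lt_add_of_pos_right 0 hT.out)).nontrivial.coe_sort
  have := (AddCircle.equivIco T 0).nontrivial
  obtain ⟨x, hx⟩ := hne
  exact infinite_of_mem_nhds x (hU.mem_nhds hx)

theorem disjoint_vanishingOn_span_fourierLp (p : ENNReal) [Fact (1 ≤ p)] {U : Set (AddCircle T)}
    (hU : IsOpen U) (hne : U.Nonempty) :
    Disjoint (vanishingOn ℂ ℂ AddCircle.haarAddCircle p U)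
      (Submodule.span ℂ (Set.range (fourierLp (T := T) p))) := by
  rw [Submodule.disjoint_def]
  intro f hfU hf
  have span_eq_map : Submodule.span ℂ (Set.range (fourierLp (T := T) p)) =
      (Submodule.span ℂ (Set.range fourier)).map
        (ContinuousMap.toLp p AddCircle.haarAddCircle ℂ).toLinearMap := by
    rw [Submodule.map_span, ← Set.range_comp]
    rfl
  rw [span_eq_map] at hf
  obtain ⟨q, hq, rfl⟩ := hf
  have toLp_ae_eq : ContinuousMap.toLp p AddCircle.haarAddCircle ℂ q
      =ᵐ[AddCircle.haarAddCircle.restrict U] q :=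
    ae_restrict_of_ae (ContinuousMap.coeFn_toLp _ q)
  have q_ae_eq_zero : q =ᵐ[AddCircle.haarAddCircle.restrict U] 0 :=
    toLp_ae_eq.symm.trans (mem_vanishingOn.mp hfU)
  have q_eqOn_zero : Set.EqOn q 0 U :=
    Measure.eqOn_open_of_ae_eq q_ae_eq_zero hU q.continuous.continuousOn continuousOn_const
  rw [eq_zero_of_mem_span_fourier_of_infinite_zeros hT.out.ne' hq
    (infinite_of_isOpen_addCircle hU hne) q_eqOn_zero, map_zero]

end Fourier

theorem tendsto_natAbs_cofinite_atTop : Tendsto Int.natAbs cofinite atTop := by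
  refine tendsto_atTop.mpr fun n ↦ (Set.finite_Icc (-(n : ℤ)) n).subset fun m hm ↦ ?_
  simp only [Set.mem_compl_iff, Set.mem_ofPred_eq, not_le] at hm
  exact ⟨by lia, by lia⟩

theorem statement4_general {T : ℝ} [Fact (0 < T)] :
    ∃ lam, IsSlowWeight lam ∧
      ∀ f : AddCircle T → ℂ, MemLp f 2 AddCircle.haarAddCircle →
        Summable (fun n ↦ ‖fourierCoeff f n‖ ^ 2 * lam n.natAbs) →
        ∀ U : Set (AddCircle T), IsOpen U → U.Nonempty →
          (∀ᵐ x ∂AddCircle.haarAddCircle, x ∈ U → f x = 0) → f =ᵐ[AddCircle.haarAddCircle] 0 := by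
  set B := TopologicalSpace.countableBasis (AddCircle T)
  have hB := TopologicalSpace.isBasis_countableBasis (AddCircle T)
  obtain ⟨lam, hlam, eq_zero⟩ := exists_isSlowWeight_forall_mem_eq_zero (fourierBasis (T := T))
    tendsto_natAbs_cofinite_atTop
    (V := fun W : B ↦ vanishingOn ℂ ℂ AddCircle.haarAddCircle 2 W)
    (fun V ↦ isClosed_vanishingOn V.1)
    fun V ↦ by
      rw [coe_fourierBasis]
      exact disjoint_vanishingOn_span_fourierLp 2 (hB.isOpen V.2)
        (TopologicalSpace.nonempty_of_mem_countableBasis V.2)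
  refine ⟨lam, hlam, fun f hf hsum U hU hne hfU ↦ ?_⟩
  obtain ⟨x, hx⟩ := hne
  obtain ⟨V, hVB, -, hVU⟩ := hB.exists_subset_of_mem_open hx hU
  have toLp_eq_zero : hf.toLp f = 0 := by
    refine eq_zero _ ?_ ⟨V, hVB⟩ (mem_vanishingOn.mpr ?_)
    · simpa only [fourierBasis_repr, fourierCoeff_congr_ae hf.coeFn_toLp] using hsum
    · rw [EventuallyEq, ae_restrict_iff' (hB.isOpen hVB).measurableSet]
      filter_upwards [hf.coeFn_toLp, hfU] with x toLp_eq f_eq_zero hxV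
      exact toLp_eq.trans (f_eq_zero (hVU hxV))
  exact hf.coeFn_toLp.symm.trans (Lp.eq_zero_iff_ae_eq_zero.mp toLp_eq_zero)

/-- there is a nondecreasing sequence of positive reals `(λ_n)` with
`λ_n → ∞` and `Σ_{n≥1} 1/λ_n = ∞` such that every `f ∈ L²(𝕋)` which is not a.e. zero and
has `Σ_{n ∈ ℤ} |f̂(n)|² λ_{|n|} < ∞` is not a.e. zero on any nonempty open subset of `𝕋`,
i.e. the support of the measure `f·m` is all of `𝕋`. -/
theorem statement4 :
    ∃ lam : ℕ → ℝ, (∀ n, 0 < lam n) ∧ Monotone lam ∧ Tendsto lam atTop atTop ∧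
      ¬ Summable (fun n : ℕ => 1 / lam (n + 1)) ∧
      ∀ f : UnitAddCircle → ℂ, MemLp f 2 hm →
        ¬ (f =ᵐ[hm] 0) →
        Summable (fun n : ℤ => ‖fourierCoeff f n‖ ^ 2 * lam n.natAbs) →
        ∀ U : Set UnitAddCircle, IsOpen U → U.Nonempty →
          ¬ (∀ᵐ x ∂hm, x ∈ U → f x = 0) := by
  obtain ⟨lam, ⟨pos, mono, tendsto, not_summable⟩, h⟩ := statement4_general (T := 1)
  exact ⟨lam, pos, mono, tendsto, not_summable, fun f hf hf0 hs U hU hne hfU ↦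
    hf0 (h f hf hs U hU hne hfU)⟩
end
end

section
/- Let Φ : (0,∞) → (0,∞) be an increasing function. Then there exists a nondecreasing sequence of positive real numbers (λ_n)_{n≥0} with λ_n → +∞ and Σ_{n≥1} Φ(1/λ_n) = +∞, such that every f ∈ L²(𝕋, m) that is not m-a.e. zero and satisfies Σ_{n∈ℤ} |f̂(n)|² λ_{|n|} < ∞ has support of the measure f·m equal to all of 𝕋 (equivalently: f is not m-a.e. zero on any nonempty open subset of 𝕋). -/
open MeasureTheory Filter Topology

noncomputable section

/-!
A nonzero trigonometric polynomial has only finitely many zeros, so by compactness of the unit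
sphere in the space of trigonometric polynomials with frequencies in a finite set `s`, such a
polynomial `p` is at least `ε ‖p‖` off a set of measure less than `δ`, with `ε` depending only on
`s` and `δ`. If `f` vanishes on a set of measure `2 δ`, then its partial sum over `s` agrees there
with minus the remainder, and Chebyshev's inequality gives
`|f̂(n)|² ≤ K(s, δ) ∑_{m ∉ s} |f̂(m)|²` for `n ∈ s`.

Now let `λ` be constant on long blocks `[N_k, N_{k+1})`: the block is taken so long that it
contributes at least `1` to `∑ Φ(1/λ_n)`, and only then is the next value of `λ` chosen, so large
that it exceeds `k K_k`, where `K_k` is the constant for the frequencies `|n| < N_k` and a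
`δ` tending to zero with `k`. If `f` vanishes on a set of positive measure, this gives
`k |f̂(n)|² ≤ ∑ |f̂(m)|² λ_{|m|}` for all large `k`, so `f = 0`.
-/

section SlowSequence

lemma not_summable_of_one_le_sum_Ico {a : ℕ → ℝ} {N : ℕ → ℕ} (hN : StrictMono N)
    (ha : ∀ k, 1 ≤ ∑ n ∈ Finset.Ico (N k) (N (k + 1)), a n) : ¬ Summable a := by
  intro hs
  have hpartial : Tendsto (fun k ↦ ∑ n ∈ Finset.range (N k), a n) atTop (𝓝 (∑' n, a n)) :=
    hs.hasSum.tendsto_sum_nat.comp hN.tendsto_atTop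
  have hblock : Tendsto (fun k ↦ ∑ n ∈ Finset.Ico (N k) (N (k + 1)), a n) atTop (𝓝 0) := by
    simpa only [Finset.sum_Ico_eq_sub _ (hN.monotone (Nat.le_succ _)), Function.comp_apply,
      sub_self] using (hpartial.comp (tendsto_add_atTop_nat 1)).sub hpartial
  exact absurd (ge_of_tendsto' hblock ha) (by norm_num)

lemma exists_galoisConnection_of_strictMono {N : ℕ → ℕ} (hN : StrictMono N) (hN0 : N 0 = 0) :
    ∃ κ : ℕ → ℕ, GaloisConnection N κ := by
  refine ⟨fun n ↦ Nat.findGreatest (N · ≤ n) n, fun k n ↦ ⟨fun h ↦ ?_, fun h ↦ ?_⟩⟩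
  · exact Nat.le_findGreatest (hN.le_apply.trans h) h
  · exact (hN.monotone h).trans
      (Nat.findGreatest_spec (P := (N · ≤ n)) (Nat.zero_le n) (by simp [hN0]))

lemma exists_block_starts_and_values (M : ℝ → ℕ) (B : ℕ → ℕ → ℝ) :
    ∃ (N : ℕ → ℕ) (L : ℕ → ℝ), N 0 = 0 ∧ (∀ k, N (k + 1) = N k + M (L k)) ∧ 0 < L 0 ∧
      (∀ k, L k + 1 ≤ L (k + 1)) ∧ ∀ k, B k (N k) ≤ L k := by
  let step (k : ℕ) (p : ℕ × ℝ) : ℕ × ℝ :=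
    (p.1 + M p.2, max (p.2 + 1) (B (k + 1) (p.1 + M p.2)))
  let block (k : ℕ) : ℕ × ℝ := Nat.rec (0, max 1 (B 0 0)) step k
  refine ⟨fun k ↦ (block k).1, fun k ↦ (block k).2, rfl, fun _ ↦ rfl,
    lt_max_of_lt_left one_pos, fun _ ↦ le_max_left _ _, fun k ↦ ?_⟩
  cases k <;> exact le_max_right _ _

theorem exists_monotone_tendsto_not_summable {ψ : ℝ → ℝ} (hψ : ∀ x, 0 < x → 0 < ψ x)
    (B : ℕ → ℕ → ℝ) :
    ∃ (lam : ℕ → ℝ) (N : ℕ → ℕ), (∀ n, 0 < lam n) ∧ Monotone lam ∧ Tendsto lam atTop atTop ∧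
      ¬ Summable (fun n ↦ ψ (lam n)) ∧ StrictMono N ∧ ∀ k, B k (N k) ≤ lam (N k) := by
  obtain ⟨N, L, hN0, hN_succ, hL0, hL_succ, hBL⟩ :=
    exists_block_starts_and_values (fun x ↦ ⌈(ψ x)⁻¹⌉₊) B
  have hL_mono : Monotone L := monotone_nat_of_le_succ fun k ↦ by linarith [hL_succ k]
  have hL_pos (k : ℕ) : 0 < L k := hL0.trans_le (hL_mono k.zero_le)
  have hψL (k : ℕ) : 0 < ψ (L k) := hψ _ (hL_pos k)
  have hL_ge (k : ℕ) : (k : ℝ) ≤ L k := by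
    induction k with
    | zero => simpa using hL0.le
    | succ k ih => push_cast; linarith [hL_succ k]
  have hN : StrictMono N := strictMono_nat_of_lt_succ fun k ↦ by
    have := Nat.ceil_pos.2 (inv_pos.2 (hψL k))
    rw [hN_succ]; omega
  obtain ⟨κ, gc⟩ := exists_galoisConnection_of_strictMono hN hN0
  have hκ_tendsto : Tendsto κ atTop atTop :=
    tendsto_atTop_atTop.2 fun k ↦ ⟨N k, fun n ↦ (gc k n).1⟩
  have hκ_block {k n : ℕ} (hn : n ∈ Finset.Ico (N k) (N (k + 1))) : κ n = k := by
    have := gc k n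
    have := gc (k + 1) n
    rw [Finset.mem_Ico] at hn
    omega
  have hκN (k : ℕ) : κ (N k) = k := hκ_block (Finset.left_mem_Ico.2 (hN k.lt_succ_self))
  refine ⟨L ∘ κ, N, fun _ ↦ hL_pos _, hL_mono.comp gc.monotone_u,
    (tendsto_atTop_mono hL_ge tendsto_natCast_atTop_atTop).comp hκ_tendsto,
    not_summable_of_one_le_sum_Ico hN fun k ↦ ?_, hN, fun k ↦ by simpa [hκN] using hBL k⟩
  calc (1 : ℝ) = (ψ (L k))⁻¹ * ψ (L k) := (inv_mul_cancel₀ (hψL k).ne').symm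
    _ ≤ ⌈(ψ (L k))⁻¹⌉₊ * ψ (L k) := by gcongr; exacts [(hψL k).le, Nat.le_ceil _]
    _ = ∑ _ ∈ Finset.Ico (N k) (N (k + 1)), ψ (L k) := by simp [hN_succ]
    _ = ∑ n ∈ Finset.Ico (N k) (N (k + 1)), ψ ((L ∘ κ) n) :=
      Finset.sum_congr rfl fun n hn ↦ by rw [Function.comp_apply, hκ_block hn]

end SlowSequence

section SmallValues

variable {X : Type*} [MeasurableSpace X] {μ : Measure X} [IsFiniteMeasure μ]

lemma exists_measure_lt_lt_of_ae_pos {g : X → ℝ} (hg : AEMeasurable g μ) (hg0 : ∀ᵐ x ∂μ, 0 < g x)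
    {δ : ENNReal} (hδ : 0 < δ) : ∃ ε > 0, μ {x | g x < ε} < δ := by
  have hinter : ⋂ r > (0 : ℝ), {x | g x < r} ⊆ {x | ¬ 0 < g x} := fun x hx ↦
    not_lt.2 (le_of_forall_gt fun r hr ↦ Set.mem_iInter₂.1 hx r hr)
  have hlim := tendsto_measure_biInter_gt (a := (0 : ℝ))
    (fun r _ ↦ nullMeasurableSet_lt hg (aemeasurable_const (b := r)))
    (fun _ _ _ hrs x (hx : g x < _) ↦ hx.trans_le hrs) ⟨1, one_pos, measure_ne_top μ _⟩
  rw [measure_mono_null hinter (ae_iff.1 hg0)] at hlim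
  exact (eventually_mem_nhdsWithin.and (hlim.eventually_lt_const hδ)).exists

variable {E : Type*} [TopologicalSpace X] [CompactSpace X] [OpensMeasurableSpace X]
  [NormedAddCommGroup E]

lemma exists_measure_norm_lt_lt_of_isCompact {S : Set C(X, E)} (hS : IsCompact S)
    (hS0 : ∀ p ∈ S, ∀ᵐ x ∂μ, p x ≠ 0) {δ : ENNReal} (hδ : 0 < δ) :
    ∃ ε > 0, ∀ p ∈ S, μ {x | ‖p x‖ < ε} < δ := by
  refine hS.induction_on ⟨1, one_pos, by simp⟩
    (fun s t hst ⟨ε, hε, h⟩ ↦ ⟨ε, hε, fun p hp ↦ h p (hst hp)⟩) ?_ fun p hp ↦ ?_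
  · rintro s t ⟨ε, hε, hs⟩ ⟨η, hη, ht⟩
    refine ⟨min ε η, lt_min hε hη, fun p hp ↦ ?_⟩
    simp only [lt_min_iff]
    rcases hp with hp | hp
    · exact (measure_mono fun x hx ↦ hx.1).trans_lt (hs p hp)
    · exact (measure_mono fun x hx ↦ hx.2).trans_lt (ht p hp)
  · obtain ⟨ε, hε, hpε⟩ := exists_measure_lt_lt_of_ae_pos
      p.continuous.norm.measurable.aemeasurable ((hS0 p hp).mono fun x hx ↦ norm_pos_iff.2 hx) hδ
    refine ⟨Metric.ball p (ε / 2),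
      mem_nhdsWithin_of_mem_nhds (Metric.ball_mem_nhds p (half_pos hε)),
      ε / 2, half_pos hε, fun q hq ↦ (measure_mono fun x (hx : ‖q x‖ < ε / 2) ↦ ?_).trans_lt hpε⟩
    calc ‖p x‖ ≤ ‖q x‖ + dist (q x) (p x) := by
          rw [dist_comm, dist_eq_norm]; exact norm_le_norm_add_norm_sub' _ _
      _ < ε / 2 + ε / 2 := add_lt_add hx ((q.dist_apply_le_dist x).trans_lt hq)
      _ = ε := add_halves ε

theorem exists_measure_norm_lt_mul_norm_lt {𝕜 : Type*} [RCLike 𝕜] [NormedSpace 𝕜 E]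
    (V : Submodule 𝕜 C(X, E)) [FiniteDimensional 𝕜 V]
    (hV : ∀ p ∈ V, p ≠ 0 → ∀ᵐ x ∂μ, p x ≠ 0) {δ : ENNReal} (hδ : 0 < δ) :
    ∃ ε > 0, ∀ p ∈ V, μ {x | ‖p x‖ < ε * ‖p‖} < δ := by
  have : ProperSpace V := FiniteDimensional.proper_rclike 𝕜 V
  have hsphere : IsCompact ((↑) '' Metric.sphere (0 : V) 1 : Set C(X, E)) :=
    (isCompact_sphere 0 1).image continuous_subtype_val
  obtain ⟨ε, hε, hunit⟩ := exists_measure_norm_lt_lt_of_isCompact (μ := μ) hsphere (by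
    rintro _ ⟨p, hp, rfl⟩
    exact hV p p.2 fun h0 ↦ by simp_all) hδ
  refine ⟨ε, hε, fun p hp ↦ ?_⟩
  rcases eq_or_ne p 0 with rfl | hp0
  · simpa using hδ
  have hq : (‖p‖ : 𝕜)⁻¹ • p ∈ ((↑) '' Metric.sphere (0 : V) 1 : Set C(X, E)) :=
    ⟨⟨_, V.smul_mem _ hp⟩, by simpa using norm_smul_inv_norm (𝕜 := 𝕜) hp0, rfl⟩
  convert hunit _ hq using 4 with x
  rw [ContinuousMap.smul_apply, norm_smul, norm_inv, RCLike.norm_ofReal, abs_norm,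
    inv_mul_lt_iff₀ (norm_pos_iff.2 hp0), mul_comm]

end SmallValues

section TrigonometricPolynomials

open AddCircle

variable {T : ℝ}

lemma exists_polynomial_of_mem_span_fourier {p : C(AddCircle T, ℂ)}
    (hp : p ∈ Submodule.span ℂ (Set.range (fourier (T := T)))) :
    ∃ (m : ℕ) (q : Polynomial ℂ), ∀ x, (toCircle x : ℂ) ^ m * p x = q.eval (toCircle x : ℂ) := by
  induction hp using Submodule.span_induction with
  | mem p hp =>
    obtain ⟨n, rfl⟩ := hp
    refine ⟨(-n).toNat, Polynomial.X ^ n.toNat, fun x ↦ ?_⟩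
    rw [fourier_apply, toCircle_zsmul, Circle.coe_zpow, Polynomial.eval_pow, Polynomial.eval_X,
      ← zpow_natCast, ← zpow_natCast, ← zpow_add₀ (Circle.coe_ne_zero _)]
    congr 1
    omega
  | zero => exact ⟨0, 0, by simp⟩
  | add p₁ p₂ _ _ h₁ h₂ =>
    obtain ⟨m₁, q₁, h₁⟩ := h₁
    obtain ⟨m₂, q₂, h₂⟩ := h₂
    refine ⟨m₁ + m₂, Polynomial.X ^ m₂ * q₁ + Polynomial.X ^ m₁ * q₂, fun x ↦ ?_⟩
    simp only [ContinuousMap.add_apply, Polynomial.eval_add, Polynomial.eval_mul,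
      Polynomial.eval_pow, Polynomial.eval_X, ← h₁, ← h₂]
    ring
  | smul c p _ h =>
    obtain ⟨m, q, h⟩ := h
    refine ⟨m, c • q, fun x ↦ ?_⟩
    rw [ContinuousMap.smul_apply, Polynomial.eval_smul, ← h, mul_smul_comm]

variable [hT : Fact (0 < T)]

lemma finite_zeros_of_mem_span_fourier {p : C(AddCircle T, ℂ)}
    (hp : p ∈ Submodule.span ℂ (Set.range (fourier (T := T)))) (hp0 : p ≠ 0) :
    {x | p x = 0}.Finite := by
  obtain ⟨m, q, hpq⟩ := exists_polynomial_of_mem_span_fourier hp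
  have hq : q ≠ 0 := by
    rintro rfl
    refine hp0 (ContinuousMap.ext fun x ↦ ?_)
    simpa [Circle.coe_ne_zero] using hpq x
  have hinj : Function.Injective fun x : AddCircle T ↦ (toCircle x : ℂ) :=
    Subtype.val_injective.comp (injective_toCircle hT.out.ne')
  refine ((Polynomial.finite_setOfPred_isRoot hq).preimage hinj.injOn).subset fun x hx ↦ ?_
  have hx0 : p x = 0 := hx
  simpa [hx0] using (hpq x).symm

instance nullSingletonClass_haarAddCircle :
    NullSingletonClass (haarAddCircle : Measure (AddCircle T)) :=
  have : Nontrivial (Set.Ico (0 : ℝ) (0 + T)) :=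
    (Set.Ico_infinite (by simpa using hT.out)).nontrivial.coe_sort
  have : Nontrivial (AddCircle T) := (AddCircle.equivIco T 0).nontrivial
  inferInstance

theorem exists_haarAddCircle_norm_lt_mul_norm_lt (s : Finset ℤ) {δ : ENNReal} (hδ : 0 < δ) :
    ∃ ε > 0, ∀ p ∈ Submodule.span ℂ ((fourier (T := T)) '' s),
      haarAddCircle {x | ‖p x‖ < ε * ‖p‖} < δ := by
  have : FiniteDimensional ℂ (Submodule.span ℂ ((fourier (T := T)) '' s)) :=
    FiniteDimensional.span_of_finite ℂ (s.finite_toSet.image _)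
  refine exists_measure_norm_lt_mul_norm_lt _ (fun p hp hp0 ↦ ?_) hδ
  have hzeros := finite_zeros_of_mem_span_fourier
    (Submodule.span_mono (Set.image_subset_range _ _) hp) hp0
  simpa [ae_iff] using hzeros.measure_zero haarAddCircle

end TrigonometricPolynomials

lemma mul_tsum_notMem_le_tsum_mul {ι : Type*} {a w : ι → ℝ} {s : Set ι} {L : ℝ}
    (ha : ∀ i, 0 ≤ a i) (hw : ∀ i, 0 ≤ w i) (hL : ∀ i ∉ s, L ≤ w i)
    (hsum : Summable a) (hsumw : Summable fun i ↦ a i * w i) :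
    L * ∑' i : {i // i ∉ s}, a i ≤ ∑' i, a i * w i := by
  rw [← tsum_mul_left]
  calc ∑' i : {i // i ∉ s}, L * a i ≤ ∑' i : {i // i ∉ s}, a i * w i :=
        Summable.tsum_le_tsum
          (fun i ↦ (mul_comm _ _).trans_le (mul_le_mul_of_nonneg_left (hL i i.2) (ha i)))
          ((hsum.subtype sᶜ).mul_left L) (hsumw.subtype sᶜ)
    _ ≤ ∑' i, a i * w i := hsumw.tsum_subtype_le _ sᶜ fun i ↦ mul_nonneg (ha i) (hw i)

section FourierCoefficients

open AddCircle

variable {T : ℝ} [Fact (0 < T)] {f : AddCircle T → ℂ}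

lemma norm_fourierCoeff_le_norm (p : C(AddCircle T, ℂ)) (n : ℤ) : ‖fourierCoeff p n‖ ≤ ‖p‖ := by
  have hbound (t : AddCircle T) : ‖fourier (-n) t • p t‖ ≤ ‖p‖ := by
    rw [norm_smul, fourier_apply, Circle.norm_coe, one_mul]
    exact p.norm_coe_le_norm t
  simpa only [fourierCoeff, probReal_univ, mul_one] using
    norm_integral_le_of_norm_le_const (μ := haarAddCircle) (.of_forall hbound)

lemma hasSum_sq_norm_fourierCoeff (hf : MemLp f 2 haarAddCircle) :
    HasSum (fun n ↦ ‖fourierCoeff f n‖ ^ 2) (∫ x, ‖f x‖ ^ 2 ∂haarAddCircle) := by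
  have h := hasSum_sq_fourierCoeff (hf.toLp f)
  rwa [fourierCoeff_congr_ae hf.coeFn_toLp,
    integral_congr_ae (hf.coeFn_toLp.mono fun x hx ↦ by rw [hx])] at h

lemma ae_eq_zero_of_fourierCoeff_eq_zero (hf : MemLp f 2 haarAddCircle)
    (h : ∀ n, fourierCoeff f n = 0) : f =ᵐ[haarAddCircle] 0 := by
  have hint : ∫ x, ‖f x‖ ^ 2 ∂haarAddCircle = 0 :=
    (hasSum_sq_norm_fourierCoeff hf).unique (by simp [h, hasSum_zero])
  rw [integral_eq_zero_iff_of_nonneg (fun _ ↦ sq_nonneg _) (hf.integrable_norm_pow two_ne_zero)]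
    at hint
  exact hint.mono fun x hx ↦ by simpa using hx

/-- The partial sum of the Fourier series of `f` over a finite set `s` of frequencies. -/
def fourierPartialSum (f : AddCircle T → ℂ) (s : Finset ℤ) : C(AddCircle T, ℂ) :=
  ∑ n ∈ s, fourierCoeff f n • fourier n

lemma fourierPartialSum_mem_span (f : AddCircle T → ℂ) (s : Finset ℤ) :
    fourierPartialSum f s ∈ Submodule.span ℂ (fourier '' s) :=
  Submodule.sum_smul_mem _ _ fun _ hn ↦ Submodule.subset_span (Set.mem_image_of_mem _ hn)

lemma fourierCoeff_fourierPartialSum (f : AddCircle T → ℂ) (s : Finset ℤ) (n : ℤ) :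
    fourierCoeff (fourierPartialSum f s) n = if n ∈ s then fourierCoeff f n else 0 := by
  have hcoe : ⇑(fourierPartialSum f s) = ∑ m ∈ s, fourierCoeff f m • ⇑(fourier (T := T) m) := by
    simp [fourierPartialSum, ContinuousMap.coe_sum]
  have hint (m : ℤ) : Integrable (fourierCoeff f m • ⇑(fourier (T := T) m)) haarAddCircle :=
    (((fourier m).memLp haarAddCircle ℂ (p := 1)).integrable le_rfl).smul _
  rw [hcoe, fourierCoeff.sum _ _ fun m _ ↦ hint m, Finset.sum_apply]
  simp [fourierCoeff.const_smul, fourierCoeff_fourier, Pi.single_apply]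

lemma fourierCoeff_sub_fourierPartialSum (hf : Integrable f haarAddCircle) (s : Finset ℤ) (n : ℤ) :
    fourierCoeff (f - ⇑(fourierPartialSum f s)) n = if n ∈ s then 0 else fourierCoeff f n := by
  have hp := ((fourierPartialSum f s).memLp haarAddCircle ℂ (p := 1)).integrable le_rfl
  have hadd := congrFun (fourierCoeff.add (hf.sub hp) hp) n
  rw [sub_add_cancel, Pi.add_apply, fourierCoeff_fourierPartialSum] at hadd
  rw [eq_sub_of_add_eq hadd.symm]
  split_ifs <;> simp

lemma integral_sq_norm_sub_fourierPartialSum (hf : MemLp f 2 haarAddCircle) (s : Finset ℤ) :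
    ∫ x, ‖f x - fourierPartialSum f s x‖ ^ 2 ∂haarAddCircle =
      ∑' n : {n // n ∉ s}, ‖fourierCoeff f n‖ ^ 2 := by
  have h := hasSum_sq_norm_fourierCoeff
    (hf.sub ((fourierPartialSum f s).memLp haarAddCircle ℂ (p := 2)))
  simp only [fourierCoeff_sub_fourierPartialSum (hf.integrable one_le_two)] at h
  refine h.tsum_eq.symm.trans ?_
  rw [← tsum_subtype_eq_of_support_subset (s := {n | n ∉ s})]
  · exact tsum_congr fun n ↦ by rw [if_neg n.2]
  · intro n hn hns
    simp [hns] at hn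

theorem exists_sq_norm_fourierCoeff_le_mul_tsum (s : Finset ℤ) {δ : ℝ} (hδ : 0 < δ) :
    ∃ K, ∀ f : AddCircle T → ℂ, MemLp f 2 haarAddCircle →
      δ ≤ haarAddCircle.real {x | f x = 0} → ∀ n ∈ s,
      ‖fourierCoeff f n‖ ^ 2 ≤ K * ∑' m : {m // m ∉ s}, ‖fourierCoeff f m‖ ^ 2 := by
  obtain ⟨ε, hε, hsmall⟩ := exists_haarAddCircle_norm_lt_mul_norm_lt (T := T) s
    (ENNReal.ofReal_pos.2 (half_pos hδ))
  refine ⟨(ε ^ 2 * (δ / 2))⁻¹, fun f hf hfδ n hn ↦ ?_⟩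
  set p := fourierPartialSum f s
  have hcover : {x | f x = 0} ⊆
      {x | ‖p x‖ < ε * ‖p‖} ∪ {x | (ε * ‖p‖) ^ 2 ≤ ‖f x - p x‖ ^ 2} := fun x hx ↦ by
    rcases lt_or_ge ‖p x‖ (ε * ‖p‖) with h | h
    · exact .inl h
    · refine .inr (Set.mem_ofPred.2 ?_)
      rw [Set.mem_ofPred.1 hx, zero_sub, norm_neg]
      gcongr
  have hlarge : δ / 2 ≤ haarAddCircle.real {x | (ε * ‖p‖) ^ 2 ≤ ‖f x - p x‖ ^ 2} := by
    have h₁ := (measureReal_mono hcover).trans (measureReal_union_le (μ := haarAddCircle) _ _)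
    have h₂ := (ENNReal.lt_ofReal_iff_toReal_lt (measure_ne_top _ _)).1
      (hsmall p (fourierPartialSum_mem_span f s))
    rw [measureReal_def haarAddCircle {x | ‖p x‖ < _}] at h₁
    linarith
  have hcoeff : ‖fourierCoeff f n‖ ≤ ‖p‖ := by
    simpa [p, fourierCoeff_fourierPartialSum, hn] using norm_fourierCoeff_le_norm p n
  have hchebyshev := mul_meas_ge_le_integral_of_nonneg
    (.of_forall fun x ↦ sq_nonneg ‖f x - p x‖)
    ((hf.sub (p.memLp haarAddCircle ℂ (p := 2))).integrable_norm_pow two_ne_zero) ((ε * ‖p‖) ^ 2)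
  rw [← integral_sq_norm_sub_fourierPartialSum hf, ← div_eq_inv_mul, le_div_iff₀ (by positivity)]
  calc ‖fourierCoeff f n‖ ^ 2 * (ε ^ 2 * (δ / 2)) ≤ ‖p‖ ^ 2 * (ε ^ 2 * (δ / 2)) := by gcongr
    _ = (ε * ‖p‖) ^ 2 * (δ / 2) := by ring
    _ ≤ (ε * ‖p‖) ^ 2 * haarAddCircle.real {x | (ε * ‖p‖) ^ 2 ≤ ‖f x - p x‖ ^ 2} := by gcongr
    _ ≤ _ := hchebyshev

theorem exists_eventually_sq_norm_fourierCoeff_le_mul_tsum :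
    ∃ K : ℕ → ℕ → ℝ, ∀ f : AddCircle T → ℂ, MemLp f 2 haarAddCircle →
      haarAddCircle {x | f x = 0} ≠ 0 → ∀ᶠ k in atTop, ∀ N : ℕ, ∀ n ∈ Finset.Ioo (-N : ℤ) N,
      ‖fourierCoeff f n‖ ^ 2 ≤
        K k N * ∑' m : {m // m ∉ Finset.Ioo (-N : ℤ) N}, ‖fourierCoeff f m‖ ^ 2 := by
  choose K hK using fun k N : ℕ ↦ exists_sq_norm_fourierCoeff_le_mul_tsum (T := T)
    (Finset.Ioo (-N : ℤ) N) (Nat.one_div_pos_of_nat (n := k))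
  refine ⟨K, fun f hf hf0 ↦ ?_⟩
  have hpos : 0 < haarAddCircle.real {x | f x = 0} := ENNReal.toReal_pos hf0 (measure_ne_top _ _)
  filter_upwards [tendsto_one_div_add_atTop_nhds_zero_nat.eventually_le_const hpos] with k hk N
  exact hK k N f hf hk

theorem fourierCoeff_eq_zero_of_eventually_sq_norm_le_mul_tsum (hf : MemLp f 2 haarAddCircle)
    {lam : ℕ → ℝ} (hpos : ∀ n, 0 < lam n) (hmono : Monotone lam)
    (hsum : Summable fun n : ℤ ↦ ‖fourierCoeff f n‖ ^ 2 * lam n.natAbs)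
    {K : ℕ → ℝ} {N : ℕ → ℕ} (hN : Tendsto N atTop atTop) (hKlam : ∀ k : ℕ, k * K k ≤ lam (N k))
    (hK : ∀ᶠ k in atTop, ∀ n ∈ Finset.Ioo (-N k : ℤ) (N k), ‖fourierCoeff f n‖ ^ 2 ≤
      K k * ∑' m : {m // m ∉ Finset.Ioo (-N k : ℤ) (N k)}, ‖fourierCoeff f m‖ ^ 2) (n : ℤ) :
    fourierCoeff f n = 0 := by
  set S := ∑' n : ℤ, ‖fourierCoeff f n‖ ^ 2 * lam n.natAbs
  have hle : ∀ᶠ k : ℕ in atTop, ‖fourierCoeff f n‖ ^ 2 ≤ S / k := by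
    filter_upwards [hK, hN.eventually_gt_atTop n.natAbs, eventually_gt_atTop 0] with k hKk hnk hk
    have htail := mul_tsum_notMem_le_tsum_mul (s := Finset.Ioo (-N k : ℤ) (N k)) (L := lam (N k))
      (w := fun m : ℤ ↦ lam m.natAbs) (fun m ↦ sq_nonneg ‖fourierCoeff f m‖)
      (fun m ↦ (hpos m.natAbs).le)
      (fun m hm ↦ hmono (by rw [Finset.mem_coe, Finset.mem_Ioo] at hm; omega))
      (hasSum_sq_norm_fourierCoeff hf).summable hsum
    have hlow := hKk n (Finset.mem_Ioo.2 (by omega))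
    set R := ∑' m : {m // m ∉ Finset.Ioo (-N k : ℤ) (N k)}, ‖fourierCoeff f m‖ ^ 2
    have hR : 0 ≤ R := tsum_nonneg fun _ ↦ sq_nonneg _
    rw [le_div_iff₀' (by exact_mod_cast hk)]
    calc (k : ℝ) * ‖fourierCoeff f n‖ ^ 2 ≤ k * (K k * R) := by gcongr
      _ = k * K k * R := by ring
      _ ≤ lam (N k) * R := mul_le_mul_of_nonneg_right (hKlam k) hR
      _ ≤ S := htail
  simpa using ge_of_tendsto (tendsto_const_div_atTop_nhds_zero_nat S) hle

end FourierCoefficients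

theorem statement5_general {T : ℝ} [Fact (0 < T)] (Φ : ℝ → ℝ) (hΦpos : ∀ x, 0 < x → 0 < Φ x) :
    ∃ lam : ℕ → ℝ, (∀ n, 0 < lam n) ∧ Monotone lam ∧ Tendsto lam atTop atTop ∧
      ¬ Summable (fun n : ℕ => Φ (1 / lam (n + 1))) ∧
      ∀ f : AddCircle T → ℂ, MemLp f 2 AddCircle.haarAddCircle →
        ¬ (f =ᵐ[AddCircle.haarAddCircle] 0) →
        Summable (fun n : ℤ => ‖fourierCoeff f n‖ ^ 2 * lam n.natAbs) →
        ∀ᵐ x ∂AddCircle.haarAddCircle, f x ≠ 0 := by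
  obtain ⟨K, hK⟩ := exists_eventually_sq_norm_fourierCoeff_le_mul_tsum (T := T)
  obtain ⟨lam, N, hpos, hmono, htendsto, hdiv, hN, hKlam⟩ :=
    exists_monotone_tendsto_not_summable (fun x hx ↦ hΦpos (1 / x) (one_div_pos.2 hx))
      fun k N ↦ k * K k N
  refine ⟨lam, hpos, hmono, htendsto, fun h ↦ hdiv ((summable_nat_add_iff 1).1 h),
    fun f hf hf0 hsum ↦ ?_⟩
  contrapose! hf0
  refine ae_eq_zero_of_fourierCoeff_eq_zero hf
    (fourierCoeff_eq_zero_of_eventually_sq_norm_le_mul_tsum hf hpos hmono hsum hN.tendsto_atTop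
      hKlam ?_)
  exact (hK f hf (frequently_ae_iff.1 hf0)).mono fun k hk ↦ hk (N k)

/-- for any positive increasing `Φ : (0,∞) → (0,∞)` there is a nondecreasing
sequence of positive reals `(λ_n)` with `λ_n → ∞` and `Σ_{n≥1} Φ(1/λ_n) = ∞`, such that
every `f ∈ L²(𝕋)` which is not a.e. zero and has `Σ_{n ∈ ℤ} |f̂(n)|² λ_{|n|} < ∞` is not
a.e. zero on any nonempty open subset of `𝕋` (the support of `f·m` is all of `𝕋`). -/
theorem statement5 (Φ : ℝ → ℝ) (hΦpos : ∀ x : ℝ, 0 < x → 0 < Φ x)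
    (hΦmono : MonotoneOn Φ (Set.Ioi (0 : ℝ))) :
    ∃ lam : ℕ → ℝ, (∀ n, 0 < lam n) ∧ Monotone lam ∧ Tendsto lam atTop atTop ∧
      ¬ Summable (fun n : ℕ => Φ (1 / lam (n + 1))) ∧
      ∀ f : UnitAddCircle → ℂ, MemLp f 2 hm →
        ¬ (f =ᵐ[hm] 0) →
        Summable (fun n : ℤ => ‖fourierCoeff f n‖ ^ 2 * lam n.natAbs) →
        ∀ U : Set UnitAddCircle, IsOpen U → U.Nonempty →
          ¬ (∀ᵐ x ∂hm, x ∈ U → f x = 0) := by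
  obtain ⟨lam, hpos, hmono, htendsto, hdiv, hne⟩ := statement5_general (T := 1) Φ hΦpos
  exact ⟨lam, hpos, hmono, htendsto, hdiv, fun f hf hf0 hsum U hU hUne hzero ↦
    (hU.measure_pos AddCircle.haarAddCircle hUne).ne' <| measure_eq_zero_iff_ae_notMem.2 <|
      hzero.mp <| (hne f hf hf0 hsum).mono fun x hx h hxU ↦ hx (h hxU)⟩
end
end

section
/- Let (λ_n)_{n≥1} be positive real numbers satisfying the doubling condition: there exists C > 1 such that C⁻¹ λ_n ≤ λ_k ≤ C λ_n whenever n ≥ 1 and n ≤ k ≤ 2n. Then there exists a real number M₀ > 1 such that for every integer M > M₀ and every n ≥ 1 one has Σ_{j=1}^{n} j^{M-1}/λ_j ≤ 10 M₀ · n^{M}/λ_n. -/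
open Filter Topology

/-!
If `λ_k ≤ C λ_n` for `n ≤ k ≤ 2n`, iterating along powers of two shows that `λ` grows at most like
`n ^ p` as soon as `C ≤ 2 ^ p`. Hence `j ^ p / λ_j` is increasing up to the factor `C`, and each of
the `n` terms of the sum, with `p = s - 1`, is at most `C n ^ (s - 1) / λ_n`. For an integer
`M > C` the exponent `p = M - 1` is admissible because `M ≤ 2 ^ (M - 1)`, so `M₀ = C` will do.
-/

/-- The upper half of the doubling condition with constant `C`, for a sequence indexed from `1`
(the value `lam 0` is unconstrained). -/
def UpperDoubling (C : ℝ) (lam : ℕ → ℝ) : Prop :=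
  ∀ n k : ℕ, 1 ≤ n → n ≤ k → k ≤ 2 * n → lam k ≤ C * lam n

namespace UpperDoubling

variable {C p : ℝ} {lam : ℕ → ℝ} {j n : ℕ}

lemma one_le_const (h : UpperDoubling C lam) (hj : 1 ≤ j) (hlam : 0 < lam j) : 1 ≤ C :=
  one_le_of_le_mul_right₀ hlam (h j j hj le_rfl (by lia))

lemma apply_two_pow_mul_le (h : UpperDoubling C lam) (hC : 0 ≤ C) (hj : 1 ≤ j) (m : ℕ) :
    lam (2 ^ m * j) ≤ C ^ m * lam j := by
  induction m with
  | zero => simp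
  | succ m ih =>
    have hm : 1 ≤ 2 ^ m * j := Nat.mul_pos (by positivity) hj
    calc lam (2 ^ (m + 1) * j)
        ≤ C * lam (2 ^ m * j) := h _ _ hm (by rw [pow_succ]; lia) (by rw [pow_succ]; lia)
      _ ≤ C * (C ^ m * lam j) := by gcongr
      _ = C ^ (m + 1) * lam j := by ring

lemma apply_le_mul_div_rpow_mul (h : UpperDoubling C lam) (hlam : 0 < lam j) (hp : C ≤ 2 ^ p)
    (hj : 1 ≤ j) (hjn : j ≤ n) : lam n ≤ C * ((n : ℝ) / j) ^ p * lam j := by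
  have hC : 1 ≤ C := h.one_le_const hj hlam
  have hp_nonneg : 0 ≤ p := not_lt.1 fun hp_neg =>
    (Real.rpow_lt_one_of_one_lt_of_neg one_lt_two hp_neg).not_ge (hC.trans hp)
  obtain ⟨m, hm_le, hm_lt⟩ : ∃ m, 2 ^ m * j ≤ n ∧ n < 2 ^ (m + 1) * j :=
    ⟨Nat.log 2 (n / j),
      (Nat.le_div_iff_mul_le hj).1 (Nat.pow_log_le_self 2 (Nat.div_pos hjn hj).ne'),
      (Nat.div_lt_iff_lt_mul hj).1 (Nat.lt_pow_succ_log_self one_lt_two _)⟩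
  have hpow : C ^ m ≤ ((n : ℝ) / j) ^ p :=
    calc C ^ m ≤ ((2 : ℝ) ^ p) ^ m := by gcongr
      _ = ((2 : ℝ) ^ m) ^ p := Real.rpow_pow_comm zero_le_two p m
      _ ≤ ((n : ℝ) / j) ^ p := by
        gcongr
        rw [le_div_iff₀ (by exact_mod_cast hj)]
        exact_mod_cast hm_le
  calc lam n
      ≤ C * lam (2 ^ m * j) :=
        h _ _ (Nat.mul_pos (by positivity) hj) hm_le (by rw [pow_succ] at hm_lt; lia)
    _ ≤ C * (C ^ m * lam j) := by gcongr; exact h.apply_two_pow_mul_le (by positivity) hj m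
    _ ≤ C * (((n : ℝ) / j) ^ p * lam j) := by gcongr
    _ = C * ((n : ℝ) / j) ^ p * lam j := by ring

lemma rpow_div_le_mul_rpow_div (h : UpperDoubling C lam) (hlamj : 0 < lam j) (hlamn : 0 < lam n)
    (hp : C ≤ 2 ^ p) (hj : 1 ≤ j) (hjn : j ≤ n) :
    (j : ℝ) ^ p / lam j ≤ C * ((n : ℝ) ^ p / lam n) := by
  have hj_pos : (0 : ℝ) < j := by exact_mod_cast hj
  rw [← mul_div_assoc, div_le_div_iff₀ hlamj hlamn]
  calc (j : ℝ) ^ p * lam n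
      ≤ (j : ℝ) ^ p * (C * ((n : ℝ) / j) ^ p * lam j) := by
        gcongr
        exact h.apply_le_mul_div_rpow_mul hlamj hp hj hjn
    _ = C * (n : ℝ) ^ p * lam j := by
        rw [Real.div_rpow n.cast_nonneg hj_pos.le]
        field_simp

end UpperDoubling

theorem statement7_general {lam : ℕ → ℝ} {C s : ℝ} {n : ℕ} (hpos : ∀ n, 1 ≤ n → 0 < lam n)
    (hdbl : UpperDoubling C lam) (hs : C ≤ 2 ^ (s - 1)) (hn : 1 ≤ n) :
    ∑ j ∈ Finset.Icc 1 n, (j : ℝ) ^ (s - 1) / lam j ≤ C * ((n : ℝ) ^ s / lam n) := by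
  have hterm : ∀ j ∈ Finset.Icc 1 n,
      (j : ℝ) ^ (s - 1) / lam j ≤ C * ((n : ℝ) ^ (s - 1) / lam n) := fun j hj => by
    obtain ⟨hj_one, hjn⟩ := Finset.mem_Icc.1 hj
    exact hdbl.rpow_div_le_mul_rpow_div (hpos j hj_one) (hpos n hn) hs hj_one hjn
  calc ∑ j ∈ Finset.Icc 1 n, (j : ℝ) ^ (s - 1) / lam j
      ≤ n * (C * ((n : ℝ) ^ (s - 1) / lam n)) := by
        simpa using Finset.sum_le_card_nsmul _ _ _ hterm
    _ = C * ((n : ℝ) ^ s / lam n) := by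
        rw [Real.rpow_sub_one (by positivity)]
        field_simp

lemma UpperDoubling.sum_pow_sub_one_div_le {lam : ℕ → ℝ} {C : ℝ} {M n : ℕ}
    (h : UpperDoubling C lam) (hpos : ∀ n, 1 ≤ n → 0 < lam n) (hM : C ≤ M) (hn : 1 ≤ n) :
    ∑ j ∈ Finset.Icc 1 n, (j : ℝ) ^ (M - 1) / lam j ≤ C * ((n : ℝ) ^ M / lam n) := by
  have hM_pos : 0 < M := by exact_mod_cast (h.one_le_const hn (hpos n hn)).trans hM
  have hM_le : M ≤ 2 ^ (M - 1) := Nat.le_of_pred_lt Nat.lt_two_pow_self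
  have hC : C ≤ 2 ^ (M - 1) := hM.trans (by exact_mod_cast hM_le)
  have hsum := statement7_general (s := M) hpos h
    (by simpa only [← Nat.cast_pred hM_pos, Real.rpow_natCast] using hC) hn
  simpa only [← Nat.cast_pred hM_pos, Real.rpow_natCast] using hsum

/-- if `(λ_n)_{n ≥ 1}` are positive and doubling, then there is `M₀ > 1` such
that for every integer `M > M₀` and every `n ≥ 1`,
`Σ_{j=1}^{n} j^{M-1}/λ_j ≤ 10 M₀ · n^M / λ_n`. -/
theorem statement7 (lam : ℕ → ℝ) (hpos : ∀ n, 1 ≤ n → 0 < lam n)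
    (hdbl : ∃ C : ℝ, 1 < C ∧ ∀ n k : ℕ, 1 ≤ n → n ≤ k → k ≤ 2 * n →
      C⁻¹ * lam n ≤ lam k ∧ lam k ≤ C * lam n) :
    ∃ M₀ : ℝ, 1 < M₀ ∧ ∀ M : ℕ, M₀ < (M : ℝ) → ∀ n : ℕ, 1 ≤ n →
      ∑ j ∈ Finset.Icc 1 n, (j : ℝ) ^ (M - 1) / lam j ≤
        10 * M₀ * ((n : ℝ) ^ M / lam n) := by
  obtain ⟨C, hC, hbounds⟩ := hdbl
  refine ⟨C, hC, fun M hM n hn => ?_⟩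
  have hdbl : UpperDoubling C lam := fun n k hn hnk hk => (hbounds n k hn hnk hk).2
  have hlam := hpos n hn
  exact (hdbl.sum_pow_sub_one_div_le hpos hM.le hn).trans (by gcongr; linarith)
end

section
/- Let (λ_n)_{n≥1} be positive real numbers satisfying the doubling condition: there exists C > 1 such that C⁻¹ λ_n ≤ λ_k ≤ C λ_n whenever n ≥ 1 and n ≤ k ≤ 2n. Then there exists a real number M₀ > 1 such that for every integer M > M₀ and every n ≥ 1 one has Σ_{j>n} 1/(λ_j · j^{M+1}) ≤ M₀ / (n^{M} λ_n). -/
open Filter Topology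

/-!
Put `a = log₂ C`. The doubling condition says that `n ^ a * λ_n` does not decrease when `n` is
doubled and drops by a factor of at most `C` between `n` and `2 * n`, so `n ^ a * λ_n` is
nondecreasing up to the factor `C`. Hence `1 / (λ_j * j ^ (M + 1))` is at most
`C / (λ_n * n ^ a) * j ^ (a - M - 1)` for `j > n`, and for `M > a` the integral test bounds the
sum over `j > n` by `C / (M - a)` times `1 / (n ^ M * λ_n)`.
-/

theorem tsum_ite_lt_eq_tsum_add {α : Type*} [AddCommMonoid α] [TopologicalSpace α]
    (f : ℕ → α) (n : ℕ) :
    ∑' j, (if n < j then f j else 0) = ∑' k, f (k + n + 1) := by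
  have hinj : Function.Injective fun k : ℕ ↦ k + n + 1 := fun k l h ↦ by simpa using h
  rw [← hinj.tsum_eq fun j hj ↦ ?_]
  · exact tsum_congr fun k ↦ if_pos (by omega)
  · have hnj : n < j := by_contra fun h ↦ hj (if_neg h)
    exact ⟨j - (n + 1), by dsimp only; omega⟩

theorem summable_and_tsum_ite_lt_le_mul {f g : ℕ → ℝ} {K : ℝ} {n : ℕ}
    (hf : ∀ j, n < j → 0 ≤ f j) (hfg : ∀ j, n < j → f j ≤ K * g j) (hg : Summable g) :
    Summable (fun j ↦ if n < j then f j else 0) ∧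
      ∑' j, (if n < j then f j else 0) ≤ K * ∑' j, (if n < j then g j else 0) := by
  have hnonneg (j : ℕ) : 0 ≤ if n < j then f j else 0 := by
    split_ifs with hj
    exacts [hf j hj, le_rfl]
  have hle (j : ℕ) : (if n < j then f j else 0) ≤ K * if n < j then g j else 0 := by
    split_ifs with hj
    exacts [hfg j hj, (mul_zero K).ge]
  have hsum_g : Summable fun j ↦ K * if n < j then g j else 0 := by
    simpa only [Set.indicator_apply, Set.mem_Ioi] using
      (hg.indicator (Set.Ioi n)).mul_left K
  have hsum_f : Summable fun j ↦ if n < j then f j else 0 := hsum_g.of_nonneg_of_le hnonneg hle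
  exact ⟨hsum_f, (hsum_f.tsum_le_tsum hle hsum_g).trans_eq tsum_mul_left⟩

theorem tsum_rpow_tail_le {s : ℝ} (hs : 0 < s) {n : ℕ} (hn : 0 < n) :
    ∑' j : ℕ, (if n < j then (j : ℝ) ^ (-s - 1) else 0) ≤ (n : ℝ) ^ (-s) / s := by
  have hn' : (0 : ℝ) < n := Nat.cast_pos.2 hn
  have anti : AntitoneOn (fun x : ℝ ↦ x ^ (-s - 1)) (Set.Ici n) :=
    (Real.antitoneOn_rpow_Ioi_of_exponent_nonpos (by linarith)).mono
      fun _ hx ↦ hn'.trans_le hx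
  calc ∑' j : ℕ, (if n < j then (j : ℝ) ^ (-s - 1) else 0)
      = ∑' k : ℕ, ((k + n + 1 : ℕ) : ℝ) ^ (-s - 1) := tsum_ite_lt_eq_tsum_add _ n
    _ ≤ ∫ x in Set.Ioi (n : ℝ), x ^ (-s - 1) :=
        anti.tsum_comp_add_le_integral n (integrableOn_Ioi_rpow_of_lt (by linarith) hn')
          fun x hx ↦ Real.rpow_nonneg (hn'.trans hx).le _
    _ = (n : ℝ) ^ (-s) / s := by
        rw [integral_Ioi_rpow_of_lt (by linarith) hn', sub_add_cancel, neg_div_neg_eq]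

/-- The lower half `C⁻¹ * u n ≤ u k` of the doubling condition with constant `C`, written without
the inverse. -/
def LowerDoubling (C : ℝ) (u : ℕ → ℝ) : Prop :=
  ∀ n k : ℕ, 1 ≤ n → n ≤ k → k ≤ 2 * n → u n ≤ C * u k

namespace LowerDoubling

variable {C : ℝ} {u : ℕ → ℝ}

theorem one_le (h : LowerDoubling C u) (hu : 0 < u 1) : 1 ≤ C :=
  (le_mul_iff_one_le_left hu).1 (h 1 1 le_rfl le_rfl (by norm_num))

theorem logb_nonneg (h : LowerDoubling C u) (hu : 0 < u 1) : 0 ≤ Real.logb 2 C :=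
  Real.logb_nonneg one_lt_two (h.one_le hu)

theorem rpow_mul_le_rpow_mul_two_mul (h : LowerDoubling C u) (hu : 0 < u 1) {n : ℕ}
    (hn : 1 ≤ n) :
    (n : ℝ) ^ Real.logb 2 C * u n ≤ ((2 * n : ℕ) : ℝ) ^ Real.logb 2 C * u (2 * n) := by
  have hC : 0 < C := zero_lt_one.trans_le (h.one_le hu)
  calc (n : ℝ) ^ Real.logb 2 C * u n
      ≤ (n : ℝ) ^ Real.logb 2 C * (C * u (2 * n)) := by
        gcongr
        exact h n (2 * n) hn (by omega) le_rfl
    _ = ((2 * n : ℕ) : ℝ) ^ Real.logb 2 C * u (2 * n) := by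
        rw [Nat.cast_mul, Nat.cast_ofNat, Real.mul_rpow zero_le_two n.cast_nonneg,
          Real.rpow_logb two_pos one_lt_two.ne' hC]
        ring

theorem rpow_mul_le (h : LowerDoubling C u) (hu : ∀ n, 1 ≤ n → 0 < u n) {n j : ℕ}
    (hn : 1 ≤ n) (hnj : n ≤ j) :
    (n : ℝ) ^ Real.logb 2 C * u n ≤ C * ((j : ℝ) ^ Real.logb 2 C * u j) := by
  by_cases hj : j ≤ 2 * n
  · have ha : 0 ≤ Real.logb 2 C := h.logb_nonneg (hu 1 le_rfl)
    have hun : 0 ≤ u n := (hu n hn).le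
    calc (n : ℝ) ^ Real.logb 2 C * u n
        ≤ (j : ℝ) ^ Real.logb 2 C * (C * u j) := by
          gcongr
          exact h n j hn hnj hj
      _ = C * ((j : ℝ) ^ Real.logb 2 C * u j) := by ring
  · exact (h.rpow_mul_le_rpow_mul_two_mul (hu 1 le_rfl) hn).trans
      (h.rpow_mul_le hu (by omega) (by omega))
termination_by j - n

theorem one_div_mul_rpow_le (h : LowerDoubling C u) (hu : ∀ n, 1 ≤ n → 0 < u n) (M : ℝ)
    {n j : ℕ} (hn : 1 ≤ n) (hnj : n ≤ j) :
    1 / (u j * (j : ℝ) ^ (M + 1)) ≤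
      C / ((n : ℝ) ^ Real.logb 2 C * u n) * (j : ℝ) ^ (-(M - Real.logb 2 C) - 1) := by
  have : (0 : ℝ) < n := Nat.cast_pos.2 hn
  have hj' : (0 : ℝ) < j := Nat.cast_pos.2 (hn.trans hnj)
  have hun := hu n hn
  have huj := hu j (hn.trans hnj)
  have hexp : (j : ℝ) ^ (-(M - Real.logb 2 C) - 1) =
      (j : ℝ) ^ Real.logb 2 C / (j : ℝ) ^ (M + 1) := by
    rw [← Real.rpow_sub hj']
    ring_nf
  rw [hexp, div_mul_div_comm, div_le_div_iff₀ (by positivity) (by positivity)]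
  calc 1 * ((n : ℝ) ^ Real.logb 2 C * u n * (j : ℝ) ^ (M + 1))
      ≤ C * ((j : ℝ) ^ Real.logb 2 C * u j) * (j : ℝ) ^ (M + 1) := by
        rw [one_mul]
        exact mul_le_mul_of_nonneg_right (h.rpow_mul_le hu hn hnj) (by positivity)
    _ = C * (j : ℝ) ^ Real.logb 2 C * (u j * (j : ℝ) ^ (M + 1)) := by ring

theorem summable_and_tsum_tail_le (h : LowerDoubling C u) (hu : ∀ n, 1 ≤ n → 0 < u n) {M : ℝ}
    (hM : Real.logb 2 C < M) {n : ℕ} (hn : 1 ≤ n) :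
    Summable (fun j : ℕ ↦ if n < j then 1 / (u j * (j : ℝ) ^ (M + 1)) else 0) ∧
      ∑' j : ℕ, (if n < j then 1 / (u j * (j : ℝ) ^ (M + 1)) else 0) ≤
        C / (M - Real.logb 2 C) / ((n : ℝ) ^ M * u n) := by
  have hn' : (0 : ℝ) < n := Nat.cast_pos.2 hn
  have hun := hu n hn
  have hC : 0 < C := zero_lt_one.trans_le (h.one_le (hu 1 le_rfl))
  have hterm_nonneg (j : ℕ) (hj : n < j) : 0 ≤ 1 / (u j * (j : ℝ) ^ (M + 1)) := by
    have huj := hu j (hn.trans hj.le)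
    positivity
  obtain ⟨hsum, hle⟩ := summable_and_tsum_ite_lt_le_mul hterm_nonneg
    (fun j hj ↦ h.one_div_mul_rpow_le hu M hn hj.le)
    (Real.summable_nat_rpow.2 (by linarith))
  refine ⟨hsum, hle.trans ?_⟩
  calc C / ((n : ℝ) ^ Real.logb 2 C * u n) *
        ∑' j : ℕ, (if n < j then (j : ℝ) ^ (-(M - Real.logb 2 C) - 1) else 0)
      ≤ C / ((n : ℝ) ^ Real.logb 2 C * u n) *
        ((n : ℝ) ^ (-(M - Real.logb 2 C)) / (M - Real.logb 2 C)) := by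
        gcongr
        exact tsum_rpow_tail_le (sub_pos.2 hM) hn
    _ = C / (M - Real.logb 2 C) / ((n : ℝ) ^ M * u n) := by
        rw [neg_sub, Real.rpow_sub hn']
        field_simp

end LowerDoubling

theorem statement8_general (lam : ℕ → ℝ) (hpos : ∀ n, 1 ≤ n → 0 < lam n)
    (hdbl : ∃ C : ℝ, LowerDoubling C lam) :
    ∃ M₀ : ℝ, 1 < M₀ ∧ ∀ M : ℝ, M₀ < M → ∀ n : ℕ, 1 ≤ n →
      Summable (fun j : ℕ => if n < j then 1 / (lam j * (j : ℝ) ^ (M + 1)) else 0) ∧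
      (∑' j : ℕ, if n < j then 1 / (lam j * (j : ℝ) ^ (M + 1)) else 0) ≤
        M₀ / ((n : ℝ) ^ M * lam n) := by
  obtain ⟨C, h⟩ := hdbl
  have hC : 1 ≤ C := h.one_le (hpos 1 le_rfl)
  have ha : 0 ≤ Real.logb 2 C := h.logb_nonneg (hpos 1 le_rfl)
  refine ⟨C + Real.logb 2 C + 1, by linarith, fun M hM n hn ↦ ?_⟩
  obtain ⟨hsum, hle⟩ := h.summable_and_tsum_tail_le hpos (M := M) (by linarith) hn
  have hconst : C / (M - Real.logb 2 C) ≤ C + Real.logb 2 C + 1 :=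
    (div_le_self (by linarith) (by linarith)).trans (by linarith)
  have hlam := hpos n hn
  exact ⟨hsum, hle.trans (by gcongr)⟩

/-- if `(λ_n)_{n ≥ 1}` are positive and doubling, then there is `M₀ > 1` such
that for every integer `M > M₀` and every `n ≥ 1`,
`Σ_{j > n} 1/(λ_j · j^{M+1}) ≤ M₀ / (n^M λ_n)` (the series being convergent). -/
theorem statement8 (lam : ℕ → ℝ) (hpos : ∀ n, 1 ≤ n → 0 < lam n)
    (hdbl : ∃ C : ℝ, 1 < C ∧ ∀ n k : ℕ, 1 ≤ n → n ≤ k → k ≤ 2 * n →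
      C⁻¹ * lam n ≤ lam k ∧ lam k ≤ C * lam n) :
    ∃ M₀ : ℝ, 1 < M₀ ∧ ∀ M : ℕ, M₀ < (M : ℝ) → ∀ n : ℕ, 1 ≤ n →
      Summable (fun j : ℕ => if n < j then 1 / (lam j * (j : ℝ) ^ (M + 1)) else 0) ∧
      (∑' j : ℕ, if n < j then 1 / (lam j * (j : ℝ) ^ (M + 1)) else 0) ≤
        M₀ / ((n : ℝ) ^ M * lam n) := by
  obtain ⟨M₀, hM₀, hbound⟩ := statement8_general lam hpos <| hdbl.imp
    fun C ⟨hC, h⟩ n k hn hnk hk ↦ (inv_mul_le_iff₀ (by linarith)).1 (h n k hn hnk hk).1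
  exact ⟨M₀, hM₀, fun M hM n hn ↦ by
    simpa only [← Nat.cast_add_one, Real.rpow_natCast] using hbound M hM n hn⟩
end

section
/- Let (λ_n)_{n≥0} be positive real numbers with λ_n ≥ 1 for all n. Let ((f_k, E_k))_{k≥1} be a sequence of pairs where each f_k ∈ L²(𝕋, m) satisfies 0 ≤ f_k ≤ 2 m-a.e. and ‖f_k‖_{ℓ²(λ)} < ∞, each E_k ⊆ 𝕋 is a nonempty compact set containing the support of the measure f_k·m, and the sequence is Cauchy with respect to the metric d_λ((f,E),(g,K)) = ‖f − g‖_{ℓ²(λ)} + d_𝒞(E,K). Then there exists a pair (f, E) with f ∈ L²(𝕋, m), 0 ≤ f ≤ 2 m-a.e., ‖f‖_{ℓ²(λ)} < ∞, E ⊆ 𝕋 nonempty compact containing the support of f·m, such that d_λ((f_k, E_k), (f, E)) → 0 as k → ∞. -/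
open MeasureTheory Filter Topology

noncomputable section

/-- Fourier coefficients of a real-valued function on the circle. -/
def fc (f : UnitAddCircle → ℝ) (n : ℤ) : ℂ := fourierCoeff (fun x => (f x : ℂ)) n

/-- The Hausdorff-type metric `d_𝒞(E,K) = sup_{ζ∈E} dist(ζ,K) + sup_{ξ∈K} dist(ξ,E)` on
nonempty compact subsets of the circle. -/
def dC (E K : Set UnitAddCircle) : ℝ :=
  (⨆ x : E, Metric.infDist (x : UnitAddCircle) K) +
    ⨆ y : K, Metric.infDist (y : UnitAddCircle) E

/-- The weighted `ℓ²(λ)` distance `‖f − g‖_{ℓ²(λ)}`. -/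
def dlam (lam : ℕ → ℝ) (f g : UnitAddCircle → ℝ) : ℝ :=
  Real.sqrt (∑' n : ℤ, ‖fc f n - fc g n‖ ^ 2 * lam n.natAbs)

/-! Weak compactness of balls in `L²` provides a weak limit `g` of the `f k` along an ultrafilter.
Weak limits inherit pointwise bounds on measurable sets, so `0 ≤ g ≤ 2`, and `g` vanishes on every
open set that is eventually disjoint from the `E k`, in particular near each point outside the
Hausdorff limit of the `E k`. The weighted Fourier coefficients of the `f k` converge in the
complete space `ℓ²`; each coefficient is a weakly continuous functional of `f k`, so their limit
is the sequence of weighted coefficients of `g`. -/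

section WeakConvergence

variable {ι α : Type*} [MeasurableSpace α] {μ : Measure α}

theorem exists_forall_tendsto_inner_of_norm_le {𝕜 H : Type*} [RCLike 𝕜]
    [NormedAddCommGroup H] [InnerProductSpace 𝕜 H] [CompleteSpace H] (U : Ultrafilter ι) {x : ι → H}
    {R : ℝ} (hx : ∀ i, ‖x i‖ ≤ R) :
    ∃ y : H, ∀ z : H, Tendsto (fun i => inner 𝕜 (x i) z) U (𝓝 (inner 𝕜 y z)) := by
  let Φ : ι → WeakDual 𝕜 H := fun i => StrongDual.toWeakDual (InnerProductSpace.toDual 𝕜 H (x i))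
  have hΦ : ∀ i, Φ i ∈ WeakDual.toStrongDual ⁻¹' Metric.closedBall (0 : StrongDual 𝕜 H) R :=
    fun i => by simpa [Φ] using hx i
  obtain ⟨φ, -, hφ⟩ := (WeakDual.isCompact_closedBall (0 : StrongDual 𝕜 H) R).ultrafilter_le_nhds
    (U.map Φ) (tendsto_principal.2 (Eventually.of_forall hΦ))
  refine ⟨(InnerProductSpace.toDual 𝕜 H).symm (WeakDual.toStrongDual φ), fun z => ?_⟩
  rw [InnerProductSpace.toDual_symm_apply]
  exact ((WeakDual.eval_continuous z).tendsto φ).comp hφ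

/-- Weak convergence `f i ⇀ g` in `L²(μ)` along the filter `l`, for real-valued functions rather
than their a.e. classes; membership in `L²` is part of the notion. -/
structure TendstoWeaklyL2 (μ : Measure α) (l : Filter ι) (f : ι → α → ℝ) (g : α → ℝ) : Prop where
  memLp : ∀ i, MemLp (f i) 2 μ
  memLp_lim : MemLp g 2 μ
  tendsto_integral_mul : ∀ h : α → ℝ, MemLp h 2 μ →
    Tendsto (fun i => ∫ x, f i x * h x ∂μ) l (𝓝 (∫ x, g x * h x ∂μ))

theorem inner_toLp_eq_integral_mul {f h : α → ℝ} (hf : MemLp f 2 μ) (hh : MemLp h 2 μ) :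
    inner ℝ hf.toLp hh.toLp = ∫ x, f x * h x ∂μ := by
  rw [L2.inner_def]
  refine integral_congr_ae ?_
  filter_upwards [hf.coeFn_toLp, hh.coeFn_toLp] with x hfx hhx
  rw [hfx, hhx, real_inner_eq_re_inner, RCLike.inner_apply]
  simp [mul_comm]

theorem exists_tendstoWeaklyL2 (U : Ultrafilter ι) {f : ι → α → ℝ} {C : ENNReal}
    (hf : ∀ i, MemLp (f i) 2 μ) (hC : C ≠ ⊤) (hfC : ∀ i, eLpNorm (f i) 2 μ ≤ C) :
    ∃ g, TendstoWeaklyL2 μ U f g := by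
  have hnorm : ∀ i, ‖(hf i).toLp‖ ≤ C.toReal := fun i => by
    rw [Lp.norm_toLp]
    exact ENNReal.toReal_mono hC (hfC i)
  obtain ⟨g, hg⟩ := exists_forall_tendsto_inner_of_norm_le (𝕜 := ℝ) U hnorm
  refine ⟨g, hf, Lp.memLp g, fun h hh => ?_⟩
  simpa only [← inner_toLp_eq_integral_mul, hh, hf, Lp.memLp, Lp.toLp_coeFn] using hg hh.toLp

namespace TendstoWeaklyL2

variable {l : Filter ι} {f : ι → α → ℝ} {g : α → ℝ}

theorem neg (hfg : TendstoWeaklyL2 μ l f g) :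
    TendstoWeaklyL2 μ l (fun i x => -f i x) fun x => -g x where
  memLp i := (hfg.memLp i).neg
  memLp_lim := hfg.memLp_lim.neg
  tendsto_integral_mul h hh := by
    simpa only [neg_mul, integral_neg] using (hfg.tendsto_integral_mul h hh).neg

theorem tendsto_integral_ofReal_mul {𝕜 : Type*} [RCLike 𝕜] (hfg : TendstoWeaklyL2 μ l f g)
    {h : α → 𝕜} (hh : MemLp h 2 μ) :
    Tendsto (fun i => ∫ x, (f i x : 𝕜) * h x ∂μ) l (𝓝 (∫ x, (g x : 𝕜) * h x ∂μ)) := by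
  have hsplit : ∀ {u : α → ℝ}, MemLp u 2 μ → ∫ x, (u x : 𝕜) * h x ∂μ =
      ((∫ x, u x * RCLike.re (h x) ∂μ : ℝ) : 𝕜) +
        ((∫ x, u x * RCLike.im (h x) ∂μ : ℝ) : 𝕜) * RCLike.I := fun {u} hu => by
    have hint : Integrable (fun x => (u x : 𝕜) * h x) μ := hu.ofReal.integrable_mul hh
    rw [← integral_re_add_im hint]
    simp only [RCLike.re_ofReal_mul, RCLike.im_ofReal_mul]
  simp only [hsplit (hfg.memLp _), hsplit hfg.memLp_lim]
  have hre := hfg.tendsto_integral_mul _ hh.re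
  have him := hfg.tendsto_integral_mul _ hh.im
  exact ((RCLike.continuous_ofReal.tendsto _).comp hre).add
    (((RCLike.continuous_ofReal.tendsto _).comp him).mul_const RCLike.I)

variable [IsFiniteMeasure μ]

theorem tendsto_setIntegral (hfg : TendstoWeaklyL2 μ l f g) {s : Set α} (hs : MeasurableSet s) :
    Tendsto (fun i => ∫ x in s, f i x ∂μ) l (𝓝 (∫ x in s, g x ∂μ)) := by
  have hmul : ∀ u : α → ℝ, (fun x => u x * s.indicator 1 x) = s.indicator u := fun u => by
    ext x; by_cases hx : x ∈ s <;> simp [hx]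
  simpa only [hmul, integral_indicator hs] using
    hfg.tendsto_integral_mul (s.indicator 1)
      (memLp_indicator_const 2 hs 1 (Or.inr (measure_ne_top μ s)))

theorem ae_restrict_le [l.NeBot] (hfg : TendstoWeaklyL2 μ l f g) {s : Set α}
    (hs : MeasurableSet s) {u : α → ℝ} (hu : Integrable u μ)
    (hle : ∀ᶠ i in l, f i ≤ᵐ[μ.restrict s] u) : g ≤ᵐ[μ.restrict s] u := by
  have hint : ∀ {v : α → ℝ}, MemLp v 2 μ → Integrable v μ := fun hv => hv.integrable one_le_two
  refine ae_le_of_forall_setIntegral_le (hint hfg.memLp_lim).restrict hu.restrict fun t ht _ => ?_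
  rw [Measure.restrict_restrict ht]
  refine le_of_tendsto (hfg.tendsto_setIntegral (ht.inter hs)) (hle.mono fun i hi => ?_)
  rw [← Measure.restrict_restrict ht]
  exact setIntegral_mono_ae (hint (hfg.memLp i)).restrict.restrict hu.restrict.restrict hi

theorem le_ae_restrict [l.NeBot] (hfg : TendstoWeaklyL2 μ l f g) {s : Set α}
    (hs : MeasurableSet s) {u : α → ℝ} (hu : Integrable u μ)
    (hle : ∀ᶠ i in l, u ≤ᵐ[μ.restrict s] f i) : u ≤ᵐ[μ.restrict s] g := by
  have hneg := hfg.neg.ae_restrict_le hs hu.neg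
    (hle.mono fun i hi => hi.mono fun x hx => neg_le_neg hx)
  exact hneg.mono fun x hx => neg_le_neg_iff.1 hx

end TendstoWeaklyL2

theorem exists_tendstoWeaklyL2_of_ae_mem_Icc [IsFiniteMeasure μ] (U : Ultrafilter ι)
    {f : ι → α → ℝ} {a b : ℝ} (hf : ∀ i, AEStronglyMeasurable (f i) μ)
    (hab : ∀ i, ∀ᵐ x ∂μ, a ≤ f i x ∧ f i x ≤ b) :
    ∃ g, TendstoWeaklyL2 μ U f g ∧ ∀ᵐ x ∂μ, a ≤ g x ∧ g x ≤ b := by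
  have hbound : ∀ i, ∀ᵐ x ∂μ, ‖f i x‖ ≤ max |a| |b| := fun i =>
    (hab i).mono fun x hx => abs_le_max_abs_abs hx.1 hx.2
  have hfinite : μ Set.univ ^ (2 : ENNReal).toReal⁻¹ * ENNReal.ofReal (max |a| |b|) ≠ ⊤ :=
    ENNReal.mul_ne_top (ENNReal.rpow_ne_top_of_nonneg (by simp) (measure_ne_top μ _))
      ENNReal.ofReal_ne_top
  obtain ⟨g, hfg⟩ := exists_tendstoWeaklyL2 U (fun i => MemLp.of_bound (hf i) _ (hbound i))
    hfinite fun i => eLpNorm_le_of_ae_bound (hbound i)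
  have hle := hfg.ae_restrict_le MeasurableSet.univ (integrable_const b)
    (Eventually.of_forall fun i => ae_restrict_of_ae ((hab i).mono fun _ => And.right))
  have hge := hfg.le_ae_restrict MeasurableSet.univ (integrable_const a)
    (Eventually.of_forall fun i => ae_restrict_of_ae ((hab i).mono fun _ => And.left))
  rw [Measure.restrict_univ] at hle hge
  exact ⟨g, hfg, hge.and hle⟩

end WeakConvergence

instance inst_s13 : IsProbabilityMeasure hm :=
  inferInstanceAs (IsProbabilityMeasure AddCircle.haarAddCircle)

section FourierCoefficients

theorem exists_tendsto_lp_of_tendsto_apply {ι : Type*} {E : ι → Type*}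
    [∀ i, NormedAddCommGroup (E i)] [∀ i, CompleteSpace (E i)] {p : ENNReal} [Fact (1 ≤ p)]
    {F : ℕ → lp E p} (hF : CauchySeq F) {l : Filter ℕ} [l.NeBot] (hl : l ≤ atTop)
    {a : ∀ i, E i} (ha : ∀ i, Tendsto (fun k => F k i) l (𝓝 (a i))) :
    ∃ A : lp E p, ⇑A = a ∧ Tendsto F atTop (𝓝 A) := by
  obtain ⟨A, hA⟩ := cauchySeq_tendsto_of_complete hF
  have hcoe := (lp.uniformContinuous_coe.continuous.tendsto A).comp (hA.mono_left hl)
  exact ⟨A, tendsto_nhds_unique hcoe (tendsto_pi_nhds.2 ha), hA⟩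

theorem TendstoWeaklyL2.tendsto_fc {ι : Type*} {l : Filter ι} {f : ι → UnitAddCircle → ℝ}
    {g : UnitAddCircle → ℝ} (hfg : TendstoWeaklyL2 hm l f g) (n : ℤ) :
    Tendsto (fun i => fc (f i) n) l (𝓝 (fc g n)) := by
  have hfourier : MemLp (fourier (T := 1) (-n)) 2 hm :=
    MemLp.of_bound (by fun_prop) 1 (Eventually.of_forall fun x => by
      rw [fourier_apply, Circle.norm_coe])
  have hfc : ∀ u : UnitAddCircle → ℝ, fc u n = ∫ x, (u x : ℂ) * fourier (-n) x ∂hm := fun u =>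
    integral_congr_ae (Eventually.of_forall fun x => mul_comm _ _)
  simp only [hfc]
  exact hfg.tendsto_integral_ofReal_mul hfourier

/-- The Fourier coefficients of `f` multiplied by `√λ_{|n|}`, so that `‖f‖_{ℓ²(λ)}` is the
unweighted `ℓ²` norm of this sequence. -/
def weightedCoeff (lam : ℕ → ℝ) (f : UnitAddCircle → ℝ) (n : ℤ) : ℂ :=
  (√(lam n.natAbs) : ℂ) * fc f n

theorem norm_sqrt_mul_sq {w : ℝ} (hw : 0 ≤ w) (z : ℂ) : ‖(√w : ℂ) * z‖ ^ 2 = ‖z‖ ^ 2 * w := by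
  rw [norm_mul, mul_pow, Complex.norm_real, Real.norm_eq_abs, sq_abs, Real.sq_sqrt hw, mul_comm]

variable {lam : ℕ → ℝ}

theorem memℓp_weightedCoeff_iff (hlam : ∀ n, 0 ≤ lam n) {f : UnitAddCircle → ℝ} :
    Memℓp (weightedCoeff lam f) 2 ↔ Summable fun n : ℤ => ‖fc f n‖ ^ 2 * lam n.natAbs := by
  simp only [memℓp_gen_iff (p := 2) (by simp), ENNReal.toReal_ofNat, Real.rpow_ofNat,
    weightedCoeff, norm_sqrt_mul_sq (hlam _)]

theorem dlam_eq_norm_sub (hlam : ∀ n, 0 ≤ lam n) {f g : UnitAddCircle → ℝ}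
    {x y : lp (fun _ : ℤ => ℂ) 2} (hx : ⇑x = weightedCoeff lam f) (hy : ⇑y = weightedCoeff lam g) :
    dlam lam f g = ‖x - y‖ := by
  have hnorm := lp.norm_rpow_eq_tsum (by simp) (x - y)
  simp only [ENNReal.toReal_ofNat, Real.rpow_ofNat, lp.coeFn_sub, Pi.sub_apply, hx, hy,
    weightedCoeff, ← mul_sub, norm_sqrt_mul_sq (hlam _)] at hnorm
  rw [dlam, ← hnorm, Real.sqrt_sq (norm_nonneg _)]

theorem summable_and_tendsto_dlam_of_cauchy (hlam : ∀ n, 0 ≤ lam n) {f : ℕ → UnitAddCircle → ℝ}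
    {g : UnitAddCircle → ℝ}
    (hsum : ∀ k, Summable fun n : ℤ => ‖fc (f k) n‖ ^ 2 * lam n.natAbs)
    (hcauchy : ∀ δ : ℝ, 0 < δ → ∃ K : ℕ, ∀ j k : ℕ, K ≤ j → K ≤ k → dlam lam (f j) (f k) < δ)
    {l : Filter ℕ} [l.NeBot] (hl : l ≤ atTop)
    (hfc : ∀ n, Tendsto (fun k => fc (f k) n) l (𝓝 (fc g n))) :
    (Summable fun n : ℤ => ‖fc g n‖ ^ 2 * lam n.natAbs) ∧
      Tendsto (fun k => dlam lam (f k) g) atTop (𝓝 0) := by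
  let F : ℕ → lp (fun _ : ℤ => ℂ) 2 := fun k =>
    ⟨weightedCoeff lam (f k), (memℓp_weightedCoeff_iff hlam).2 (hsum k)⟩
  have hF : CauchySeq F := Metric.cauchySeq_iff.2 fun δ hδ => by
    obtain ⟨K, hK⟩ := hcauchy δ hδ
    refine ⟨K, fun j hj k hk => ?_⟩
    rw [dist_eq_norm, ← dlam_eq_norm_sub hlam rfl rfl]
    exact hK j k hj hk
  obtain ⟨A, hA, hFA⟩ := exists_tendsto_lp_of_tendsto_apply hF hl (a := weightedCoeff lam g)
    fun n => (hfc n).const_mul _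
  refine ⟨(memℓp_weightedCoeff_iff hlam).1 (hA ▸ lp.memℓp A), ?_⟩
  simp only [fun k => dlam_eq_norm_sub hlam (f := f k) (x := F k) rfl hA]
  exact tendsto_iff_norm_sub_tendsto_zero.1 hFA

end FourierCoefficients

section HausdorffDistance

open Metric TopologicalSpace

theorem infDist_le_iSup_infDist {α : Type*} [PseudoMetricSpace α] {s t : Set α}
    (h : hausdorffEDist s t ≠ ⊤) {x : α} (hx : x ∈ s) :
    infDist x t ≤ ⨆ y : s, infDist (y : α) t :=
  le_ciSup (f := fun y : s => infDist (y : α) t)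
    ⟨hausdorffDist s t, Set.forall_mem_range.2 fun y => infDist_le_hausdorffDist_of_mem y.2 h⟩
    ⟨x, hx⟩

theorem iSup_infDist_le_hausdorffDist {α : Type*} [PseudoMetricSpace α] {s t : Set α}
    (h : hausdorffEDist s t ≠ ⊤) : ⨆ y : s, infDist (y : α) t ≤ hausdorffDist s t :=
  Real.iSup_le (fun y => infDist_le_hausdorffDist_of_mem y.2 h) hausdorffDist_nonneg

theorem dC_nonneg (E K : Set UnitAddCircle) : 0 ≤ dC E K :=
  add_nonneg (Real.iSup_nonneg fun _ => infDist_nonneg) (Real.iSup_nonneg fun _ => infDist_nonneg)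

theorem hausdorffEDist_nonemptyCompacts_ne_top {α : Type*} [PseudoMetricSpace α]
    (E K : NonemptyCompacts α) : hausdorffEDist (E : Set α) K ≠ ⊤ :=
  hausdorffEDist_ne_top_of_nonempty_of_bounded E.nonempty K.nonempty E.isCompact.isBounded
    K.isCompact.isBounded

variable (E K : NonemptyCompacts UnitAddCircle)

theorem dist_le_dC : dist E K ≤ dC E K := by
  rw [NonemptyCompacts.dist_eq]
  refine hausdorffDist_le_of_infDist (dC_nonneg _ _) (fun x hx => ?_) fun y hy => ?_
  · exact (infDist_le_iSup_infDist (hausdorffEDist_nonemptyCompacts_ne_top E K) hx).trans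
      (le_add_of_nonneg_right (Real.iSup_nonneg fun _ => infDist_nonneg))
  · exact (infDist_le_iSup_infDist (hausdorffEDist_nonemptyCompacts_ne_top K E) hy).trans
      (le_add_of_nonneg_left (Real.iSup_nonneg fun _ => infDist_nonneg))

theorem dC_le_two_mul_dist : dC E K ≤ 2 * dist E K := by
  rw [NonemptyCompacts.dist_eq, two_mul]
  refine add_le_add
    (iSup_infDist_le_hausdorffDist (hausdorffEDist_nonemptyCompacts_ne_top E K)) ?_
  rw [hausdorffDist_comm]
  exact iSup_infDist_le_hausdorffDist (hausdorffEDist_nonemptyCompacts_ne_top K E)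

theorem exists_tendsto_of_cauchy_dC {N : ℕ → NonemptyCompacts UnitAddCircle}
    (hcauchy : ∀ δ : ℝ, 0 < δ → ∃ K : ℕ, ∀ j k : ℕ, K ≤ j → K ≤ k → dC (N j) (N k) < δ) :
    ∃ G : NonemptyCompacts UnitAddCircle,
      Tendsto N atTop (𝓝 G) ∧ Tendsto (fun k => dC (N k) G) atTop (𝓝 0) := by
  have hN : CauchySeq N := Metric.cauchySeq_iff.2 fun δ hδ =>
    (hcauchy δ hδ).imp fun K hK j hj k hk => (dist_le_dC _ _).trans_lt (hK j k hj hk)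
  obtain ⟨G, hG⟩ := cauchySeq_tendsto_of_complete hN
  refine ⟨G, hG, squeeze_zero (fun _ => dC_nonneg _ _) (fun k => dC_le_two_mul_dist (N k) G) ?_⟩
  simpa only [mul_zero] using (tendsto_iff_dist_tendsto_zero.1 hG).const_mul 2

end HausdorffDistance

section Support

open TopologicalSpace

theorem ae_eq_zero_of_notMem_measSupport (f : UnitAddCircle → ℝ) :
    ∀ᵐ x ∂hm, x ∉ measSupport f → f x = 0 := by
  obtain ⟨T, hT_countable, hT_null, hT_union⟩ := isOpen_sUnion_countable
    {U : Set UnitAddCircle | IsOpen U ∧ ∀ᵐ x ∂hm, x ∈ U → f x = 0} fun _ hU => hU.1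
  have hT : ∀ᵐ x ∂hm, ∀ U ∈ T, x ∈ U → f x = 0 :=
    (ae_ball_iff hT_countable).2 fun U hU => (hT_null hU).2
  filter_upwards [hT] with x hx hx_supp
  rw [measSupport, Set.notMem_compl_iff, ← hT_union] at hx_supp
  obtain ⟨U, hU, hxU⟩ := hx_supp
  exact hx U hU hxU

variable {ι : Type*} {l : Filter ι} [l.NeBot] {f : ι → UnitAddCircle → ℝ} {g : UnitAddCircle → ℝ}

theorem TendstoWeaklyL2.disjoint_measSupport (hfg : TendstoWeaklyL2 hm l f g)
    {U : Set UnitAddCircle} (hU : IsOpen U) (hfU : ∀ᶠ i in l, Disjoint U (measSupport (f i))) :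
    Disjoint U (measSupport g) := by
  have hzero : ∀ᶠ i in l, f i =ᵐ[hm.restrict U] 0 := hfU.mono fun i hi => by
    refine (ae_restrict_iff' hU.measurableSet).2 ?_
    filter_upwards [ae_eq_zero_of_notMem_measSupport (f i)] with x hx hxU
    exact hx (hi.notMem_of_mem_left hxU)
  have hle := hfg.ae_restrict_le hU.measurableSet (integrable_zero _ _ _)
    (hzero.mono fun _ hi => hi.le)
  have hge := hfg.le_ae_restrict hU.measurableSet (integrable_zero _ _ _)
    (hzero.mono fun _ hi => hi.symm.le)
  have hgU : ∀ᵐ x ∂hm, x ∈ U → g x = 0 :=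
    (ae_restrict_iff' hU.measurableSet).1 (hle.antisymm hge)
  exact Set.disjoint_compl_right_iff_subset.2 (Set.subset_sUnion_of_mem ⟨hU, hgU⟩)

theorem TendstoWeaklyL2.measSupport_subset (hfg : TendstoWeaklyL2 hm l f g)
    {N : ι → NonemptyCompacts UnitAddCircle}
    {G : NonemptyCompacts UnitAddCircle} (hN : Tendsto N l (𝓝 G))
    (hsupp : ∀ i, measSupport (f i) ⊆ N i) : measSupport g ⊆ G := by
  intro x hx
  by_contra hxG
  obtain ⟨U, V, hU, hV, hxU, hGV, hUV⟩ :=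
    SeparatedNhds.of_isCompact_isCompact isCompact_singleton G.isCompact
      (Set.disjoint_singleton_left.2 hxG)
  have hNV : ∀ᶠ i in l, (N i : Set UnitAddCircle) ⊆ V := hN.eventually
    ((NonemptyCompacts.isOpen_subsets_of_isOpen hV).mem_nhds hGV)
  have hdisj := hfg.disjoint_measSupport hU
    (hNV.mono fun i hi => hUV.mono_right ((hsupp i).trans hi))
  exact hdisj.notMem_of_mem_left (Set.singleton_subset_iff.1 hxU) hx

end Support

theorem statement13_general (lam : ℕ → ℝ) (hlam : ∀ n, 0 ≤ lam n) (a b : ℝ)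
    (f : ℕ → UnitAddCircle → ℝ) (E : ℕ → Set UnitAddCircle)
    (hmem : ∀ k, MemLp (f k) 2 hm)
    (hbd : ∀ k, ∀ᵐ x ∂hm, a ≤ f k x ∧ f k x ≤ b)
    (hsum : ∀ k, Summable (fun n : ℤ => ‖fc (f k) n‖ ^ 2 * lam n.natAbs))
    (hcpt : ∀ k, IsCompact (E k)) (hne : ∀ k, (E k).Nonempty)
    (hsupp : ∀ k, measSupport (f k) ⊆ E k)
    (hcauchy : ∀ δ : ℝ, 0 < δ → ∃ K : ℕ, ∀ j k : ℕ, K ≤ j → K ≤ k →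
      dlam lam (f j) (f k) + dC (E j) (E k) < δ) :
    ∃ g : UnitAddCircle → ℝ, ∃ G : Set UnitAddCircle,
      MemLp g 2 hm ∧ (∀ᵐ x ∂hm, a ≤ g x ∧ g x ≤ b) ∧
      Summable (fun n : ℤ => ‖fc g n‖ ^ 2 * lam n.natAbs) ∧
      IsCompact G ∧ G.Nonempty ∧ measSupport g ⊆ G ∧
      Tendsto (fun k => dlam lam (f k) g + dC (E k) G) atTop (𝓝 0) := by
  have hU : (hyperfilter ℕ : Filter ℕ) ≤ atTop := Nat.hyperfilter_le_atTop
  obtain ⟨g, hfg, hg⟩ := exists_tendstoWeaklyL2_of_ae_mem_Icc (hyperfilter ℕ)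
    (fun k => (hmem k).aestronglyMeasurable) hbd
  obtain ⟨hgsum, hdlam⟩ := summable_and_tendsto_dlam_of_cauchy hlam hsum
    (fun δ hδ => (hcauchy δ hδ).imp fun K hK j k hj hk =>
      (le_add_of_nonneg_right (dC_nonneg _ _)).trans_lt (hK j k hj hk)) hU hfg.tendsto_fc
  let N : ℕ → TopologicalSpace.NonemptyCompacts UnitAddCircle := fun k => ⟨⟨E k, hcpt k⟩, hne k⟩
  obtain ⟨G, hNG, hdC⟩ := exists_tendsto_of_cauchy_dC (N := N) fun δ hδ =>
    (hcauchy δ hδ).imp fun K hK j k hj hk =>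
      (le_add_of_nonneg_left (Real.sqrt_nonneg _)).trans_lt (hK j k hj hk)
  refine ⟨g, G, hfg.memLp_lim, hg, hgsum, G.isCompact, G.nonempty,
    hfg.measSupport_subset (hNG.mono_left hU) hsupp, ?_⟩
  exact (add_zero (0 : ℝ)) ▸ hdlam.add hdC

/-- completeness of the space of pairs `(f, E)` with `0 ≤ f ≤ 2` a.e.,
`‖f‖_{ℓ²(λ)} < ∞`, and `E` a nonempty compact set containing the support of `f·m`, for the
metric `d_λ((f,E),(g,K)) = ‖f−g‖_{ℓ²(λ)} + d_𝒞(E,K)`: every Cauchy sequence converges. -/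
theorem statement13 (lam : ℕ → ℝ) (hlam : ∀ n, 1 ≤ lam n)
    (f : ℕ → UnitAddCircle → ℝ) (E : ℕ → Set UnitAddCircle)
    (hmem : ∀ k, MemLp (f k) 2 hm)
    (hbd : ∀ k, ∀ᵐ x ∂hm, 0 ≤ f k x ∧ f k x ≤ 2)
    (hsum : ∀ k, Summable (fun n : ℤ => ‖fc (f k) n‖ ^ 2 * lam n.natAbs))
    (hcpt : ∀ k, IsCompact (E k)) (hne : ∀ k, (E k).Nonempty)
    (hsupp : ∀ k, measSupport (f k) ⊆ E k)
    (hcauchy : ∀ δ : ℝ, 0 < δ → ∃ K : ℕ, ∀ j k : ℕ, K ≤ j → K ≤ k →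
      dlam lam (f j) (f k) + dC (E j) (E k) < δ) :
    ∃ g : UnitAddCircle → ℝ, ∃ G : Set UnitAddCircle,
      MemLp g 2 hm ∧ (∀ᵐ x ∂hm, 0 ≤ g x ∧ g x ≤ 2) ∧
      Summable (fun n : ℤ => ‖fc g n‖ ^ 2 * lam n.natAbs) ∧
      IsCompact G ∧ G.Nonempty ∧ measSupport g ⊆ G ∧
      Tendsto (fun k => dlam lam (f k) g + dC (E k) G) atTop (𝓝 0) := by
  exact statement13_general lam (fun n => zero_le_one.trans (hlam n)) 0 2 f E hmem hbd hsum hcpt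
    hne hsupp hcauchy
end
end
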